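/- arXiv:1905.06459 — 2 statements merged into one kernel-verified Lean document; each statement's English description precedes it below -/
import Mathlib

section
/- Every covering 3-hypergraph of order at least 7 is eulerian. -/
/-- A closed walk of length `k` in a hypergraph on vertex type `V` whose edges are
finite sets of vertices: an alternating sequence of vertices and edges such that
consecutive vertices are distinct and both lie in the interposed edge, and the
first vertex equals the last. -/
def IsClosedWalk {V : Type} (k : ℕ) (v : Fin (k + 1) → V) (e : Fin k → Finset V) : Prop :=
  v 0 = v (Fin.last k) ∧
    ∀ i : Fin k, v i.castSucc ≠ v i.succ ∧ v i.castSucc ∈ e i ∧ v i.succ ∈ e i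

/-- The multiset of edges traversed by a walk (with multiplicity). -/
def walkEdges {V : Type} {k : ℕ} (e : Fin k → Finset V) : Multiset (Finset V) :=
  Multiset.ofList (List.ofFn e)

/-- A hypergraph, given by its edge multiset `E` over vertex type `V`, is eulerian if it
admits a closed walk whose multiset of traversed edges is exactly `E`, i.e. a closed
strict trail traversing every edge exactly once (a trivial walk works iff `E = 0`,
matching the convention that a trivial walk is an Euler tour of an edgeless
hypergraph). -/
def IsEulerian {V : Type} (E : Multiset (Finset V)) : Prop :=
  ∃ (k : ℕ) (v : Fin (k + 1) → V) (e : Fin k → Finset V),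
    IsClosedWalk k v e ∧ walkEdges e = E

/-- An `l`-covering `k`-hypergraph on vertex type `V`: a nonempty `k`-uniform edge
multiset such that every `l`-element subset of the vertex set is contained in at
least one edge. -/
def IsCoveringHypergraph {V : Type} [DecidableEq V] (E : Multiset (Finset V))
    (l k : ℕ) : Prop :=
  E ≠ 0 ∧ (∀ f ∈ E, f.card = k) ∧
    ∀ s : Finset V, s.card = l → ∃ f ∈ E, s ⊆ f


namespace Cov3
set_option linter.unusedSectionVars false
set_option linter.unusedVariables false
variable {V I : Type} [DecidableEq V] [DecidableEq I]

/-- contribution of edge `i` with token `t` -/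
def dd (e : I → Finset V) (φ : V → ZMod 2) (i : I) (t : V) : ZMod 2 := ∑ v ∈ e i, φ v + φ t

def NC (e : I → Finset V) (tok : I → V) (S : V → Prop) (i : I) : Prop :=
  ∀ a ∈ e i, ∀ b ∈ e i, a ≠ tok i → b ≠ tok i → (S a ↔ S b)

def Pre (e : I → Finset V) (T : Finset I) (tok : I → V) (u q : V) : Prop :=
  (∀ i ∈ T, tok i ∈ e i) ∧ ∀ φ : V → ZMod 2, ∑ i ∈ T, dd e φ i (tok i) = φ u + φ q

def Even0 (e : I → Finset V) (T : Finset I) (tok : I → V) : Prop :=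
  (∀ i ∈ T, tok i ∈ e i) ∧ ∀ φ : V → ZMod 2, ∑ i ∈ T, dd e φ i (tok i) = 0

def Conn (e : I → Finset V) (T : Finset I) (tok : I → V) : Prop :=
  ∀ S : V → Prop, (∀ i ∈ T, NC e tok S i) → (∃ i ∈ T, ∃ a ∈ e i, a ≠ tok i ∧ S a) →
    ∀ i ∈ T, ∀ a ∈ e i, a ≠ tok i → S a

def Good (e : I → Finset V) (T : Finset I) (tok : I → V) : Prop :=
  Even0 e T tok ∧ Conn e T tok

def MaxG (e : I → Finset V) (T : Finset I) (tok : I → V) : Prop :=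
  Good e T tok ∧ ∀ T' tok', Good e T' tok' → T'.card ≤ T.card

lemma zz (a : ZMod 2) : a + a = 0 := CharTwo.add_self_eq_zero a

lemma card3 {e : I → Finset V} (h3 : ∀ i, (e i).card = 3) {i : I} {a b c : V} (ha : a ∈ e i)
    (hb : b ∈ e i) (hc : c ∈ e i) (hab : a ≠ b) (hac : a ≠ c) (hbc : b ≠ c) : e i = {a, b, c} := by
  symm
  apply Finset.eq_of_subset_of_card_le
  · intro x; simp; rintro (rfl | rfl | rfl) <;> assumption
  · rw [h3 i, Finset.card_eq_three.2 ⟨a, b, c, hab, hac, hbc, rfl⟩]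

lemma pre_insert {e : I → Finset V} (h3 : ∀ i, (e i).card = 3) {T : Finset I} {tok : I → V}
    {u : V} {s : ZMod 2}
    {j : I} (hj : j ∉ T) {w t : V} (hu : u ∈ e j) (hw : w ∈ e j) (ht : t ∈ e j)
    (huw : u ≠ w) (hut : u ≠ t) (hwt : w ≠ t) (φ : V → ZMod 2)
    (h : ∑ i ∈ T, dd e φ i (tok i) = s) :
    ∑ i ∈ insert j T, dd e φ i (Function.update tok j t i) = φ u + φ w + s := by
  rw [Finset.sum_insert hj, Function.update_self]
  have : ∑ i ∈ T, dd e φ i (Function.update tok j t i) = ∑ i ∈ T, dd e φ i (tok i) := by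
    apply Finset.sum_congr rfl
    intro i hi
    rw [Function.update_of_ne]
    rintro rfl; exact hj hi
  rw [this, h]
  have h4 := card3 h3 hu hw ht huw hut hwt
  simp only [dd, h4]
  rw [Finset.sum_insert (by simp [huw, hut]), Finset.sum_insert (by simp [hwt]), Finset.sum_singleton]
  linear_combination zz (φ t)

lemma pre_valid {e : I → Finset V} {T : Finset I} {tok : I → V}
    {j : I} {t : V} (ht : t ∈ e j) (h : ∀ i ∈ T, tok i ∈ e i) :
    ∀ i ∈ insert j T, Function.update tok j t i ∈ e i := by
  intro i hi
  by_cases hij : i = j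
  · subst hij; simpa using ht
  · rw [Function.update_of_ne hij]; exact h i (by simpa [hij] using hi)

lemma pre_start {e : I → Finset V} (h3 : ∀ i, (e i).card = 3) {T : Finset I} {tok : I → V}
    (h : Even0 e T tok) {f : I} (hf : f ∉ T) {p q r : V} (hp : p ∈ e f) (hq : q ∈ e f) (hr : r ∈ e f)
    (hpq : p ≠ q) (hpr : p ≠ r) (hqr : q ≠ r) :
    Pre e (insert f T) (Function.update tok f r) p q := by
  refine ⟨pre_valid hr h.1, fun φ => ?_⟩
  rw [pre_insert h3 hf hp hq hr hpq hpr hqr φ (h.2 φ), add_zero]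

lemma pre_R {e : I → Finset V} (h3 : ∀ i, (e i).card = 3) {T : Finset I} {tok : I → V}
    {u q : V} (h : Pre e T tok u q) {j : I} (hj : j ∉ T) {w t : V} (hu : u ∈ e j) (hw : w ∈ e j)
    (ht : t ∈ e j) (huw : u ≠ w) (hut : u ≠ t) (hwt : w ≠ t) :
    Pre e (insert j T) (Function.update tok j t) w q := by
  refine ⟨pre_valid ht h.1, fun φ => ?_⟩
  rw [pre_insert h3 hj hu hw ht huw hut hwt φ (h.2 φ)]
  linear_combination zz (φ u)

lemma pre_flip {e : I → Finset V} {T : Finset I} {tok : I → V}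
    {u q : V} (h : Pre e T tok u q) {j : I} (hj : j ∈ T) {w t' : V} (ht' : t' ∈ e j)
    (ht : (tok j = u ∧ t' = w) ∨ (tok j = w ∧ t' = u)) :
    Pre e T (Function.update tok j t') w q := by
  refine ⟨?_, fun φ => ?_⟩
  · have := pre_valid (j := j) ht' h.1
    rwa [Finset.insert_eq_of_mem hj] at this
  · have h1 := h.2 φ
    rw [← Finset.add_sum_erase _ _ hj] at h1 ⊢
    have : ∑ i ∈ T.erase j, dd e φ i (Function.update tok j t' i)
        = ∑ i ∈ T.erase j, dd e φ i (tok i) := by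
      apply Finset.sum_congr rfl
      intro i hi
      rw [Function.update_of_ne]
      rintro rfl; simp at hi
    rw [this, Function.update_self]
    simp only [dd] at h1 ⊢
    rcases ht with ⟨h2, rfl⟩ | ⟨h2, rfl⟩
    · rw [h2] at h1
      linear_combination h1 - zz (φ u)+ zz (φ u)  
    · rw [h2] at h1
      linear_combination h1 - zz (φ w)+ zz (φ t') 

lemma pre_done {e : I → Finset V} {T : Finset I} {tok : I → V}
    {q : V} (h : Pre e T tok q q) : Even0 e T tok :=
  ⟨h.1, fun φ => by rw [h.2 φ, zz]⟩

lemma nc_compl {e : I → Finset V} {tok : I → V} {S : V → Prop} {i : I} (h : NC e tok S i) :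
    NC e tok (fun v => ¬ S v) i := fun a ha b hb h1 h2 => not_congr (h a ha b hb h1 h2)

/-- key lemma -/
lemma key {e : I → Finset V} (h3 : ∀ i, (e i).card = 3) {T T' : Finset I} {tok tok' : I → V}
    (hM : MaxG e T tok) (hsub : T ⊆ T') (hlt : T.card < T'.card) (hE : Even0 e T' tok')
    (D : V → Prop) (hD1 : ∀ i ∈ T', i ∉ T → ∀ a ∈ e i, a ≠ tok' i → D a)
    (hD2 : ∀ i ∈ T, tok' i ≠ tok i → D (tok i) ∧ D (tok' i))
    {p : V} (hp : D p) (htouch : T = ∅ ∨ ∃ i ∈ T, ∃ a ∈ e i, a ≠ tok i ∧ D a) :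
    ∃ S : V → Prop, S p ∧ (∀ i ∈ T', NC e tok' S i) ∧ ∃ v, D v ∧ ¬ S v := by
  have hnc : ¬ Conn e T' tok' := fun hc => by
    have := hM.2 T' tok' ⟨hE, hc⟩; omega
  have hnc' : ∃ S : V → Prop, S p ∧ (∀ i ∈ T', NC e tok' S i) ∧
      ∃ i ∈ T', ∃ a ∈ e i, a ≠ tok' i ∧ ¬ S a := by
    unfold Conn at hnc
    push Not at hnc
    obtain ⟨S, hS, ⟨i, hi, a, ha, hat, hSa⟩, i', hi', a', ha', hat', hSa'⟩ := hnc
    by_cases hSp : S p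
    · exact ⟨S, hSp, hS, i', hi', a', ha', hat', hSa'⟩
    · exact ⟨fun v => ¬ S v, hSp, fun i hi => nc_compl (hS i hi), i, hi, a, ha, hat, by simpa using hSa⟩
  obtain ⟨S, hSp, hS, i, hi, a, ha, hat, hSa⟩ := hnc'
  refine ⟨S, hSp, hS, ?_⟩
  by_contra hcon
  push Not at hcon
  have hNC : ∀ i ∈ T, NC e tok S i := by
    intro i hi a ha b hb hat hbt
    have h1 := hS i (hsub hi)
    by_cases ht : tok' i = tok i
    · exact h1 a ha b hb (by rwa [ht]) (by rwa [ht])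
    · obtain ⟨d1, d2⟩ := hD2 i hi ht
      have k1 : ∀ x ∈ e i, x ≠ tok i → S x := by
        intro x hx hxt
        by_cases hx' : x = tok' i
        · rw [hx']; exact hcon _ d2
        · exact (h1 x hx (tok i) (hM.1.1.1 i hi) hx' (Ne.symm ht)).2 (hcon _ d1)
      simp [k1 a ha hat, k1 b hb hbt]
  apply hSa
  by_cases hiT : i ∈ T
  · rcases htouch with h0 | ⟨i0, hi0, a0, ha0, hat0, hDa0⟩
    · simp [h0] at hiT
    · by_cases hai : a = tok i
      · by_cases ht : tok' i = tok i
        · exact absurd hai (by rw [← ht]; exact hat)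
        · rw [hai]; exact hcon _ (hD2 i hiT ht).1
      · exact hM.1.2 S hNC ⟨i0, hi0, a0, ha0, hat0, hcon _ hDa0⟩ i hiT a ha hai
  · exact hcon _ (hD1 i hi hiT a ha hat)

end Cov3

namespace Cov3
set_option linter.unusedSectionVars false
set_option linter.unusedVariables false

structure Ctx (V I : Type) [DecidableEq V] [DecidableEq I] where
  e : I → Finset V
  T : Finset I
  tok : I → V
  h3 : ∀ i, (e i).card = 3
  hM : MaxG e T tok
  cov : ∀ x y, x ≠ y → ∃ i, x ∈ e i ∧ y ∈ e i

namespace Ctx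
variable {V I : Type} [DecidableEq V] [DecidableEq I] (C : Ctx V I)

def Ed (i : I) (a b c : V) : Prop :=
  i ∈ C.T ∧ C.tok i = c ∧ a ∈ C.e i ∧ b ∈ C.e i ∧ c ∈ C.e i ∧ a ≠ b ∧ a ≠ c ∧ b ≠ c

def Fl (i : I) (u v : V) : Prop := ∃ t, C.Ed i u t v ∨ C.Ed i v t u

def St (S : V → Prop) (i : I) (u w : V) : Prop :=
  ∀ t, (C.Ed i u t w → (S w ↔ S t)) ∧ (C.Ed i w t u → (S u ↔ S t))

variable {C}

lemma Ed.symm {i : I} {a b c : V} (h : C.Ed i a b c) : C.Ed i b a c := by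
  unfold Ed at *; grind

lemma Ed.ne {i : I} {a b c : V} (h : C.Ed i a b c) : a ≠ b ∧ a ≠ c ∧ b ≠ c := by
  unfold Ed at *; grind

lemma four {i : I} {a b c d : V} (ha : a ∈ C.e i)
    (hb : b ∈ C.e i) (hc : c ∈ C.e i) (hd : d ∈ C.e i) (hab : a ≠ b) (hac : a ≠ c) (hbc : b ≠ c) :
    d = a ∨ d = b ∨ d = c := by
  rw [card3 C.h3 ha hb hc hab hac hbc] at hd; simpa using hd

lemma third {i : I} {a b : V} (ha : a ∈ C.e i) (hb : b ∈ C.e i) (hab : a ≠ b) :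
    ∃ c ∈ C.e i, a ≠ c ∧ b ≠ c := by
  by_contra hcon
  push Not at hcon
  have : C.e i ⊆ {a, b} := by
    intro x hx; simp; by_contra h; push Not at h; exact h.2 (hcon x hx (Ne.symm h.1)).symm
  have := Finset.card_le_card this
  rw [C.h3 i] at this
  have := Finset.card_le_two (a := a) (b := b)
  omega

lemma Ed.det {i : I} {a b c a' b' c' : V} (h : C.Ed i a b c) (h' : C.Ed i a' b' c') :
    c = c' ∧ ((a = a' ∧ b = b') ∨ (a = b' ∧ b = a')) := by
  unfold Ed at h h'
  obtain ⟨_, h1, h2, h3, h4, h5, h6, h7⟩ := h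
  obtain ⟨_, k1, k2, k3, k4, k5, k6, k7⟩ := h'
  have := four h2 h3 h4 k2 h5 h6 h7
  have := four h2 h3 h4 k3 h5 h6 h7
  grind

lemma ed_of {i : I} {u v : V} (hi : i ∈ C.T) (hu : u ∈ C.e i) (hv : v ∈ C.e i) (h : u ≠ v) :
    (∃ t, C.Ed i u v t) ∨ C.Fl i u v := by
  have ht := C.hM.1.1.1 i hi
  obtain ⟨w, hw, h1, h2⟩ := third hu hv h
  have := four hu hv hw ht h h1 h2
  unfold Fl Ed
  rcases this with h0 | h0 | h0
  · right; refine ⟨w, Or.inr ?_⟩; grind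
  · right; refine ⟨w, Or.inl ?_⟩; grind
  · left; refine ⟨w, ?_⟩; grind

lemma nc_iff {tok' : I → V} (S : V → Prop) {i : I} {a b c : V} (ha : a ∈ C.e i)
    (hb : b ∈ C.e i) (hc : c ∈ C.e i) (hab : a ≠ b) (hac : a ≠ c) (hbc : b ≠ c) (ht : tok' i = c) :
    NC C.e tok' S i ↔ (S a ↔ S b) := by
  constructor
  · intro h; exact h a ha b hb (by rwa [ht]) (by rwa [ht])
  · intro h x hx y hy hx1 hy1
    have h1 := four ha hb hc hx hab hac hbc
    have h2 := four ha hb hc hy hab hac hbc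
    grind

lemma Fl.symm {i : I} {u v : V} (h : C.Fl i u v) : C.Fl i v u := by
  unfold Fl at *; grind

lemma Fl.sp {i : I} {u v : V} (h : C.Fl i u v) : i ∈ C.T ∧ u ≠ v ∧ u ∈ C.e i ∧ v ∈ C.e i ∧
    ∃ t', t' ∈ C.e i ∧ ((C.tok i = u ∧ t' = v) ∨ (C.tok i = v ∧ t' = u)) := by
  unfold Fl Ed at h
  obtain ⟨t, h | h⟩ := h
  · exact ⟨by grind, by grind, by grind, by grind, u, by grind⟩
  · exact ⟨by grind, by grind, by grind, by grind, v, by grind⟩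

lemma Fl.touch {i : I} {u v : V} (h : C.Fl i u v) :
    ∃ i ∈ C.T, ∃ a ∈ C.e i, a ≠ C.tok i ∧ (a = u ∨ a = v) := by
  unfold Fl Ed at h
  obtain ⟨t, h | h⟩ := h
  · exact ⟨i, by grind, u, by grind⟩
  · exact ⟨i, by grind, v, by grind⟩

lemma st_of {S : V → Prop} {tok' : I → V} {i : I} {u v t' : V}
    (h : (C.tok i = u ∧ t' = v) ∨ (C.tok i = v ∧ t' = u)) (ht : tok' i = t')
    (hN : NC C.e tok' S i) : C.St S i u v := by
  unfold St Ed
  intro t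
  refine ⟨fun h1 => ?_, fun h1 => ?_⟩
  · exact hN v (by grind) t (by grind) (by grind) (by grind)
  · exact hN u (by grind) t (by grind) (by grind) (by grind)

lemma F1 {f : I} (hf : f ∉ C.T) {p q : V} (hp : p ∈ C.e f) (hq : q ∈ C.e f) {g : I} :
    ¬ C.Fl g p q := by
  intro h
  obtain ⟨hg, hpq, hgp, hgq, t', ht', ht⟩ := h.sp
  obtain ⟨r, hr, hpr, hqr⟩ := third hp hq hpq
  have h1 := pre_start C.h3 C.hM.1.1 hf hp hq hr hpq hpr hqr
  have hgf : g ≠ f := by rintro rfl; exact hf hg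
  have h2 := pre_done (pre_flip h1 (Finset.mem_insert_of_mem hg) ht' (by
    rw [Function.update_of_ne hgf]; exact ht))
  obtain ⟨S, hSp, hN, v, hD, hv⟩ := key C.h3 C.hM (Finset.subset_insert _ _) (by
    rw [Finset.card_insert_of_notMem hf]; omega) h2 (fun v => v = p ∨ v = q) (by
      have := @four _ _ _ _ C f p q r
      grind [Function.update]) (by grind [Function.update]) (Or.inl rfl) (Or.inr h.touch)
  have : S q := by
    refine (hN f (by simp) p hp q hq ?_ ?_).1 hSp
    · grind [Function.update]
    · grind [Function.update]
  grind

lemma L2 {f : I} (hf : f ∉ C.T) {p q : V} (hp : p ∈ C.e f) (hq : q ∈ C.e f) (hpq : p ≠ q)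
    {x : V} {g g' : I} (h : C.Fl g p x) (h' : C.Fl g' x q) (hgg : g ≠ g') :
    ∃ S : V → Prop, S p ∧ S q ∧ ¬ S x ∧
      (∀ i a b c, C.Ed i a b c → i = g ∨ i = g' ∨ (S a ↔ S b)) ∧ C.St S g p x ∧ C.St S g' x q := by
  obtain ⟨hg, hpx, hgp, hgx, t, ht', ht⟩ := h.sp
  obtain ⟨hg', hxq, hgx', hgq, s, hs', hs⟩ := h'.sp
  obtain ⟨r, hr, hpr, hqr⟩ := third hp hq hpq
  have h1 := pre_start C.h3 C.hM.1.1 hf hp hq hr hpq hpr hqr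
  have hgf : g ≠ f := by rintro rfl; exact hf hg
  have hgf' : g' ≠ f := by rintro rfl; exact hf hg'
  have h2 := (pre_flip h1 (Finset.mem_insert_of_mem hg) ht' (by
    rw [Function.update_of_ne hgf]; exact ht))
  have h3 := pre_done (pre_flip h2 (Finset.mem_insert_of_mem hg') hs' (by
    rw [Function.update_of_ne hgg.symm, Function.update_of_ne hgf']; exact hs))
  obtain ⟨S, hSp, hN, v, hD, hv⟩ := key C.h3 C.hM (Finset.subset_insert _ _) (by
    rw [Finset.card_insert_of_notMem hf]; omega) h3 (fun v => v = p ∨ v = x ∨ v = q) (by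
      have := @four _ _ _ _ C f p q r
      grind [Function.update]) (by grind [Function.update]) (Or.inl rfl) (Or.inr (by
      obtain ⟨i, hi, a, ha, hat, hh⟩ := h.touch
      exact ⟨i, hi, a, ha, hat, by tauto⟩))
  have hq : S q := by
    refine (hN f (by simp) p hp q hq ?_ ?_).1 hSp
    · grind [Function.update]
    · grind [Function.update]
  refine ⟨S, hSp, hq, by grind, ?_, ?_, ?_⟩
  · intro i a b c hi
    unfold Ed at hi
    have := hN i (by grind) a (by grind) b (by grind)
    grind [Function.update]
  · exact st_of ht (by grind [Function.update]) (hN g (by grind))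
  · exact st_of hs (by grind [Function.update]) (hN g' (by grind))

lemma L3 {f : I} (hf : f ∉ C.T) {p q : V} (hp : p ∈ C.e f) (hq : q ∈ C.e f) (hpq : p ≠ q)
    {x y : V} {g1 g2 g3 : I} (k1 : C.Fl g1 p x) (k2 : C.Fl g2 x y) (k3 : C.Fl g3 y q)
    (h12 : g1 ≠ g2) (h13 : g1 ≠ g3) (h23 : g2 ≠ g3) :
    ∃ S : V → Prop, S p ∧ S q ∧ ¬ (S x ∧ S y) ∧
      (∀ i a b c, C.Ed i a b c → i = g1 ∨ i = g2 ∨ i = g3 ∨ (S a ↔ S b)) ∧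
      C.St S g1 p x ∧ C.St S g2 x y ∧ C.St S g3 y q := by
  obtain ⟨hg1, hpx, hgp1, hgx1, t1, ht1', ht1⟩ := k1.sp
  obtain ⟨hg2, hpx2, hgp2, hgx2, t2, ht2', ht2⟩ := k2.sp
  obtain ⟨hg3, hpx3, hgp3, hgx3, t3, ht3', ht3⟩ := k3.sp
  obtain ⟨r, hr, hpr, hqr⟩ := third hp hq hpq
  have h1 := pre_start C.h3 C.hM.1.1 hf hp hq hr hpq hpr hqr
  have hf1 : g1 ≠ f := by rintro rfl; exact hf hg1
  have hf2 : g2 ≠ f := by rintro rfl; exact hf hg2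
  have hf3 : g3 ≠ f := by rintro rfl; exact hf hg3
  have h2 := (pre_flip h1 (Finset.mem_insert_of_mem hg1) ht1' (by
    rw [Function.update_of_ne hf1]; exact ht1))
  have h3 := (pre_flip h2 (Finset.mem_insert_of_mem hg2) ht2' (by
    rw [Function.update_of_ne h12.symm, Function.update_of_ne hf2]; exact ht2))
  have h4 := pre_done (pre_flip h3 (Finset.mem_insert_of_mem hg3) ht3' (by
    rw [Function.update_of_ne h23.symm, Function.update_of_ne h13.symm, Function.update_of_ne hf3]
    exact ht3))
  obtain ⟨S, hSp, hN, v, hD, hv⟩ := key C.h3 C.hM (Finset.subset_insert _ _) (by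
    rw [Finset.card_insert_of_notMem hf]; omega) h4 (fun v => v = p ∨ v = x ∨ v = y ∨ v = q) (by
      have := @four _ _ _ _ C f p q r
      grind [Function.update]) (by grind [Function.update]) (Or.inl rfl) (Or.inr (by
      obtain ⟨i, hi, a, ha, hat, hh⟩ := k1.touch
      exact ⟨i, hi, a, ha, hat, by tauto⟩))
  have hq : S q := by
    refine (hN f (by simp) p hp q hq ?_ ?_).1 hSp
    · grind [Function.update]
    · grind [Function.update]
  refine ⟨S, hSp, hq, by grind, ?_, ?_, ?_, ?_⟩
  · intro i a b c hi
    unfold Ed at hi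
    have := hN i (by grind) a (by grind) b (by grind)
    grind [Function.update]
  · exact st_of ht1 (by grind [Function.update]) (hN g1 (by grind))
  · exact st_of ht2 (by grind [Function.update]) (hN g2 (by grind))
  · exact st_of ht3 (by grind [Function.update]) (hN g3 (by grind))

lemma L3R {f : I} (hf : f ∉ C.T) {p q : V} (hp : p ∈ C.e f) (hq : q ∈ C.e f) (hpq : p ≠ q)
    {x y : V} {g1 j g3 : I} (k1 : C.Fl g1 p x) (hj : j ∉ C.T) (hjf : j ≠ f) (hjx : x ∈ C.e j)
    (hjy : y ∈ C.e j) (hxy : x ≠ y) (k3 : C.Fl g3 y q) (h13 : g1 ≠ g3) :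
    ∃ S : V → Prop, S p ∧ S q ∧ ¬ S x ∧ ¬ S y ∧
      (∀ i a b c, C.Ed i a b c → i = g1 ∨ i = g3 ∨ (S a ↔ S b)) ∧
      C.St S g1 p x ∧ C.St S g3 y q := by
  obtain ⟨hg1, hpx, hgp1, hgx1, t1, ht1', ht1⟩ := k1.sp
  obtain ⟨hg3, hpx3, hgp3, hgx3, t3, ht3', ht3⟩ := k3.sp
  obtain ⟨r, hr, hpr, hqr⟩ := third hp hq hpq
  obtain ⟨z, hz, hxz, hyz⟩ := third hjx hjy hxy
  have h1 := pre_start C.h3 C.hM.1.1 hf hp hq hr hpq hpr hqr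
  have hf1 : g1 ≠ f := by rintro rfl; exact hf hg1
  have hf3 : g3 ≠ f := by rintro rfl; exact hf hg3
  have hj1 : g1 ≠ j := by rintro rfl; exact hj hg1
  have hj3 : g3 ≠ j := by rintro rfl; exact hj hg3
  have h2 := (pre_flip h1 (Finset.mem_insert_of_mem hg1) ht1' (by
    rw [Function.update_of_ne hf1]; exact ht1))
  have hjn : j ∉ insert f C.T := by simp [hj, hjf]
  have h3 := pre_R C.h3 h2 hjn hjx hjy hz hxy hxz hyz
  have h4 := pre_done (pre_flip h3 (Finset.mem_insert_of_mem (Finset.mem_insert_of_mem hg3)) ht3' (by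
    rw [Function.update_of_ne hj3, Function.update_of_ne h13.symm, Function.update_of_ne hf3]
    exact ht3))
  obtain ⟨S, hSp, hN, v, hD, hv⟩ := key C.h3 C.hM
    ((Finset.subset_insert _ _).trans (Finset.subset_insert _ _)) (by
    rw [Finset.card_insert_of_notMem hjn, Finset.card_insert_of_notMem hf]; omega) h4
    (fun v => v = p ∨ v = x ∨ v = y ∨ v = q) (by
      have := @four _ _ _ _ C f p q r
      have := @four _ _ _ _ C j x y z
      grind [Function.update]) (by grind [Function.update]) (Or.inl rfl) (Or.inr (by
      obtain ⟨i, hi, a, ha, hat, hh⟩ := k1.touch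
      exact ⟨i, hi, a, ha, hat, by tauto⟩))
  have hq : S q := by
    refine (hN f (by simp) p hp q hq ?_ ?_).1 hSp
    · grind [Function.update]
    · grind [Function.update]
  have hxy' : S x ↔ S y := by
    refine (hN j (by simp) x hjx y hjy ?_ ?_)
    · grind [Function.update]
    · grind [Function.update]
  refine ⟨S, hSp, hq, by grind, by grind, ?_, ?_, ?_⟩
  · intro i a b c hi
    unfold Ed at hi
    have := hN i (by grind) a (by grind) b (by grind)
    grind [Function.update]
  · exact st_of ht1 (by grind [Function.update]) (hN g1 (by grind))
  · exact st_of ht3 (by grind [Function.update]) (hN g3 (by grind))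

end Ctx
end Cov3

namespace Cov3
set_option linter.unusedSectionVars false
set_option linter.unusedVariables false
namespace Ctx
variable {V I : Type} [DecidableEq V] [DecidableEq I] {C : Ctx V I}

open Classical in
noncomputable def ind (S : V → Prop) (v : V) : ZMod 2 := if S v then 1 else 0

lemma ind_add {S : V → Prop} {a b : V} : ind S a + ind S b = 0 ↔ (S a ↔ S b) := by
  unfold ind
  by_cases ha : S a <;> by_cases hb : S b <;> simp [ha, hb] <;> decide

lemma ed_ex {i : I} (hi : i ∈ C.T) : ∃ a b, C.Ed i a b (C.tok i) := by
  have ht := C.hM.1.1.1 i hi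
  have : ∃ x ∈ C.e i, x ≠ C.tok i := by
    by_contra hcon
    push Not at hcon
    have : C.e i ⊆ {C.tok i} := by intro x hx; simp [hcon x hx]
    have := Finset.card_le_card this
    rw [C.h3 i] at this; simp at this
  obtain ⟨x, hx, hxt⟩ := this
  obtain ⟨y, hy, h1, h2⟩ := third hx ht hxt
  exact ⟨x, y, by unfold Ed; grind⟩

lemma cr_ed (S : V → Prop) {i : I} {a b c : V} (h : C.Ed i a b c) :
    dd C.e (ind S) i (C.tok i) = ind S a + ind S b := by
  obtain ⟨_, h1, h2, h3, h4, h5, h6, h7⟩ := h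
  simp only [dd, card3 C.h3 h2 h3 h4 h5 h6 h7, h1]
  rw [Finset.sum_insert (by simp [h5, h6]), Finset.sum_insert (by simp [h7]), Finset.sum_singleton]
  linear_combination zz (ind S c)

lemma par3 (S : V → Prop) {g1 g2 g3 : I} {a1 b1 c1 a2 b2 c2 a3 b3 c3 : V}
    (h1 : C.Ed g1 a1 b1 c1) (h2 : C.Ed g2 a2 b2 c2) (h3 : C.Ed g3 a3 b3 c3)
    (h12 : g1 ≠ g2) (h13 : g1 ≠ g3) (h23 : g2 ≠ g3)
    (h : ∀ i a b c, C.Ed i a b c → i = g1 ∨ i = g2 ∨ i = g3 ∨ (S a ↔ S b)) :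
    ((S a1 ↔ S b1) ↔ ((S a2 ↔ S b2) ↔ (S a3 ↔ S b3))) := by
  have hs := C.hM.1.1.2 (ind S)
  have hsub : ({g1, g2, g3} : Finset I) ⊆ C.T := by
    intro x; simp; rintro (rfl | rfl | rfl); exacts [h1.1, h2.1, h3.1]
  rw [← Finset.sum_subset hsub, Finset.sum_insert (by simp [h12, h13]),
    Finset.sum_insert (by simp [h23]), Finset.sum_singleton, cr_ed S h1, cr_ed S h2, cr_ed S h3] at hs
  · rw [← ind_add, ← ind_add (a := a2), ← ind_add (a := a3)]
    generalize ind S a1 + ind S b1 = x at *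
    generalize ind S a2 + ind S b2 = y at *
    generalize ind S a3 + ind S b3 = z at *
    revert x y z; decide
  · intro i hi hi'
    simp at hi'
    obtain ⟨a, b, hab⟩ := ed_ex hi
    rw [cr_ed S hab, ind_add]
    have := h i a b _ hab; tauto

lemma par2 (S : V → Prop) {g1 g2 : I} {a1 b1 c1 a2 b2 c2 : V}
    (h1 : C.Ed g1 a1 b1 c1) (h2 : C.Ed g2 a2 b2 c2) (h12 : g1 ≠ g2)
    (h : ∀ i a b c, C.Ed i a b c → i = g1 ∨ i = g2 ∨ (S a ↔ S b)) :
    ((S a1 ↔ S b1) ↔ (S a2 ↔ S b2)) := by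
  have hs := C.hM.1.1.2 (ind S)
  have hsub : ({g1, g2} : Finset I) ⊆ C.T := by
    intro x; simp; rintro (rfl | rfl); exacts [h1.1, h2.1]
  rw [← Finset.sum_subset hsub, Finset.sum_insert (by simp [h12]),
    Finset.sum_singleton, cr_ed S h1, cr_ed S h2] at hs
  · rw [← ind_add, ← ind_add (a := a2)]
    generalize ind S a1 + ind S b1 = x at *
    generalize ind S a2 + ind S b2 = y at *
    revert x y; decide
  · intro i hi hi'
    simp at hi'
    obtain ⟨a, b, hab⟩ := ed_ex hi
    rw [cr_ed S hab, ind_add]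
    have := h i a b _ hab; tauto

lemma par1 (S : V → Prop) {g1 : I} {a1 b1 c1 : V}
    (h1 : C.Ed g1 a1 b1 c1)
    (h : ∀ i a b c, C.Ed i a b c → i = g1 ∨ (S a ↔ S b)) :
    (S a1 ↔ S b1) := by
  have hs := C.hM.1.1.2 (ind S)
  rw [Finset.sum_eq_single_of_mem g1 h1.1, cr_ed S h1, ind_add] at hs
  · exact hs
  · intro i hi hi'
    obtain ⟨a, b, hab⟩ := ed_ex hi
    rw [cr_ed S hab, ind_add]
    have := h i a b _ hab; tauto

lemma conn (S : V → Prop) (h : ∀ i a b c, C.Ed i a b c → (S a ↔ S b)) {i i' : I} {a b c a' b' c' : V}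
    (h1 : C.Ed i a b c) (h2 : C.Ed i' a' b' c') (hS : S a) : S a' := by
  refine C.hM.1.2 S ?_ ⟨i, h1.1, a, h1.2.2.1, ?_, hS⟩ i' h2.1 a' h2.2.2.1 ?_
  · intro i hi
    obtain ⟨a, b, hab⟩ := ed_ex hi
    obtain ⟨_, h1, h2, h3, h4, h5, h6, h7⟩ := id hab
    exact (nc_iff S h2 h3 h4 h5 h6 h7 h1).2 (h _ _ _ _ hab)
  · rw [h1.2.1]; exact h1.ne.2.1
  · rw [h2.2.1]; exact h2.ne.2.1

/-- Three Lemma -/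
lemma three (S12 S13 S23 : V → Prop) {g1 g2 g3 : I} {a1 b1 c1 a2 b2 c2 a3 b3 c3 : V}
    (h1 : C.Ed g1 a1 b1 c1) (h2 : C.Ed g2 a2 b2 c2) (h3 : C.Ed g3 a3 b3 c3)
    (h12 : g1 ≠ g2) (h13 : g1 ≠ g3) (h23 : g2 ≠ g3)
    (k12 : ∀ i a b c, C.Ed i a b c → i = g1 ∨ i = g2 ∨ (S12 a ↔ S12 b))
    (k13 : ∀ i a b c, C.Ed i a b c → i = g1 ∨ i = g3 ∨ (S13 a ↔ S13 b))
    (k23 : ∀ i a b c, C.Ed i a b c → i = g2 ∨ i = g3 ∨ (S23 a ↔ S23 b))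
    (m1 : S12 a1 ∧ ¬ S12 b1 ∧ S13 a1 ∧ ¬ S13 b1) (m2 : S12 a2 ∧ ¬ S12 b2 ∧ S23 a2 ∧ ¬ S23 b2)
    (m3 : S13 a3 ∧ ¬ S13 b3 ∧ S23 a3 ∧ ¬ S23 b3) : False := by
  have e1 := par3 (fun v => S12 v ∧ S13 v) h1 h2 h3 h12 h13 h23 (by grind)
  have e2 := par3 (fun v => S12 v ∧ S23 v) h1 h2 h3 h12 h13 h23 (by grind)
  have e3 := par3 (fun v => S13 v ∧ S23 v) h1 h2 h3 h12 h13 h23 (by grind)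
  have := k12 _ _ _ _ h3
  have := k13 _ _ _ _ h2
  have := k23 _ _ _ _ h1
  grind

variable (C) in
def Wk (u v : V) : Prop := ∃ g, C.Fl g u v

lemma Wk.symm {u v : V} (h : C.Wk u v) : C.Wk v u := by
  obtain ⟨g, h⟩ := h; exact ⟨g, h.symm⟩

/-- normal form of a cut edge -/
lemma Fl.inout {S S' : V → Prop} {g : I} {p x : V} (h : C.Fl g p x) (hs : C.St S g p x) (hs' : C.St S' g p x)
    (h1 : S p) (h2 : ¬ S x) (h1' : S' p) (h2' : ¬ S' x) :
    ∃ a b c, C.Ed g a b c ∧ S a ∧ ¬ S b ∧ S' a ∧ ¬ S' b := by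
  obtain ⟨t, h | h⟩ := h
  · exact ⟨p, t, x, h, h1, by have := (hs t).1 h; tauto, h1', by have := (hs' t).1 h; tauto⟩
  · exact ⟨t, x, p, h.symm, by have := (hs t).2 h; tauto, h2, by have := (hs' t).2 h; tauto, h2'⟩

lemma St.symm {S : V → Prop} {i : I} {u w : V} (h : C.St S i u w) : C.St S i w u :=
  fun t => ⟨(h t).2, (h t).1⟩

/-- three cuts around x through flips -/
lemma three_fl (S12 S13 S23 : V → Prop) {g1 g2 g3 : I} {p q r x y z : V}
    (h1 : C.Fl g1 p x) (h2 : C.Fl g2 q y) (h3 : C.Fl g3 r z)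
    (h12 : g1 ≠ g2) (h13 : g1 ≠ g3) (h23 : g2 ≠ g3)
    (k12 : ∀ i a b c, C.Ed i a b c → i = g1 ∨ i = g2 ∨ (S12 a ↔ S12 b))
    (k13 : ∀ i a b c, C.Ed i a b c → i = g1 ∨ i = g3 ∨ (S13 a ↔ S13 b))
    (k23 : ∀ i a b c, C.Ed i a b c → i = g2 ∨ i = g3 ∨ (S23 a ↔ S23 b))
    (s1 : C.St S12 g1 p x) (s1' : C.St S13 g1 p x) (s2 : C.St S12 g2 q y) (s2' : C.St S23 g2 q y)
    (s3 : C.St S13 g3 r z) (s3' : C.St S23 g3 r z)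
    (m1 : S12 p ∧ ¬ S12 x ∧ S13 p ∧ ¬ S13 x) (m2 : S12 q ∧ ¬ S12 y ∧ S23 q ∧ ¬ S23 y)
    (m3 : S13 r ∧ ¬ S13 z ∧ S23 r ∧ ¬ S23 z) : False := by
  obtain ⟨a1, b1, c1, e1, n1⟩ := h1.inout s1 s1' m1.1 m1.2.1 m1.2.2.1 m1.2.2.2
  obtain ⟨a2, b2, c2, e2, n2⟩ := h2.inout s2 s2' m2.1 m2.2.1 m2.2.2.1 m2.2.2.2
  obtain ⟨a3, b3, c3, e3, n3⟩ := h3.inout s3 s3' m3.1 m3.2.1 m3.2.2.1 m3.2.2.2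
  exact three S12 S13 S23 e1 e2 e3 h12 h13 h23 k12 k13 k23 n1 n2 n3

variable (C) in
/-- f is a missing edge with vertices p q r -/
def Fr (f : I) (p q r : V) : Prop :=
  f ∉ C.T ∧ p ∈ C.e f ∧ q ∈ C.e f ∧ r ∈ C.e f ∧ p ≠ q ∧ p ≠ r ∧ q ≠ r

lemma Fr.rot {f : I} {p q r : V} (h : C.Fr f p q r) : C.Fr f q r p := by unfold Fr at *; grind
lemma Fr.sw {f : I} {p q r : V} (h : C.Fr f p q r) : C.Fr f q p r := by unfold Fr at *; grind
lemma Fr.sw2 {f : I} {p q r : V} (h : C.Fr f p q r) : C.Fr f p r q := by unfold Fr at *; grind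

lemma Fl.cont {i : I} {u v : V} (h : C.Fl i u v) : u ∈ C.e i ∧ v ∈ C.e i ∧ i ∈ C.T ∧ u ≠ v ∧
   (C.tok i = u ∨ C.tok i = v) := by
  have := h.sp; grind

lemma F3aux {f : I} {p q r x : V} (h : C.Fr f p q r) {g gr : I} (hp : C.Fl g p x)
    (hq : C.Fl g q x) (hr : C.Fl gr r x) : False := by
  obtain ⟨hf, hp1, hq1, hr1, hpq, hpr, hqr⟩ := id h
  have c1 := hp.cont
  have c2 := hq.cont
  have c3 := hr.cont
  have hgr : g ≠ gr := by
    rintro rfl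
    have := F1 (g := g) hf hp1 hq1
    have hh := @four _ _ _ _ C g p q x r
    grind
  have hE : C.Ed g p q x := by unfold Ed; grind
  obtain ⟨S1, a1, a2, a3, a4, a5, a6⟩ := L2 hf hp1 hr1 hpr hp hr.symm hgr
  obtain ⟨S2, b1, b2, b3, b4, b5, b6⟩ := L2 hf hq1 hr1 hqr hq hr.symm hgr
  have k1 := (a5 q).1 hE
  have k2 := (b5 p).1 hE.symm
  obtain ⟨a, b, c, e, n⟩ := hr.inout a6.symm b6.symm a2 a3 b2 b3
  have := par1 (fun v => S1 v ∧ S2 v) e (by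
    intro i a b c hi
    by_cases hig : i = g
    · subst hig
      have := hi.det hE
      grind
    · have := a4 i a b c hi
      have := b4 i a b c hi
      grind)
  grind

lemma F3 {f : I} {p q r x : V} (h : C.Fr f p q r) (hp : C.Wk p x)
    (hq : C.Wk q x) (hr : C.Wk r x) : False := by
  obtain ⟨gp, hp⟩ := hp
  obtain ⟨gq, hq⟩ := hq
  obtain ⟨gr, hr⟩ := hr
  by_cases h12 : gp = gq
  · subst h12; exact F3aux h hp hq hr
  by_cases h23 : gq = gr
  · subst h23; exact F3aux h.rot hq hr hp
  by_cases h13 : gp = gr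
  · subst h13; exact F3aux h.sw2 hp hr hq
  obtain ⟨hf, hp1, hq1, hr1, hpq, hpr, hqr⟩ := id h
  obtain ⟨S1, a1, a2, a3, a4, a5, a6⟩ := L2 hf hp1 hq1 hpq hp hq.symm h12
  obtain ⟨S2, b1, b2, b3, b4, b5, b6⟩ := L2 hf hp1 hr1 hpr hp hr.symm h13
  obtain ⟨S3, c1, c2, c3, c4, c5, c6⟩ := L2 hf hq1 hr1 hqr hq hr.symm h23
  exact three_fl S1 S2 S3 hp hq hr h12 h13 h23 a4 b4 c4 a5 b5 a6.symm c5 b6.symm c6.symm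
    ⟨a1, a3, b1, b3⟩ ⟨a2, a3, c1, c3⟩ ⟨b2, b3, c2, c3⟩

end Ctx
end Cov3

namespace Cov3
set_option linter.unusedSectionVars false
set_option linter.unusedVariables false
namespace Ctx
variable {V I : Type} [DecidableEq V] [DecidableEq I] {C : Ctx V I}

variable (C) in
def Tch (v : V) : Prop := ∃ i ∈ C.T, ∃ a ∈ C.e i, a ≠ C.tok i ∧ a = v

lemma dbl {f f' : I} (hf : f ∉ C.T) (hf' : f' ∉ C.T) (hne : f ≠ f') {x y : V} (hxy : x ≠ y)
    (hx : x ∈ C.e f) (hy : y ∈ C.e f) (hx' : x ∈ C.e f') (hy' : y ∈ C.e f')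
    (htch : C.T = ∅ ∨ C.Tch x) : False := by
  obtain ⟨r, hr, hpr, hqr⟩ := third hx hy hxy
  obtain ⟨r', hr', hpr', hqr'⟩ := third hx' hy' hxy
  have h1 := pre_start C.h3 C.hM.1.1 hf hx hy hr hxy hpr hqr
  have hjn : f' ∉ insert f C.T := by simp [hf', hne.symm]
  have h4 := pre_done (pre_R C.h3 h1 hjn hx' hy' hr' hxy hpr' hqr')
  obtain ⟨S, hSp, hN, v, hD, hv⟩ := key (p := x) C.h3 C.hM
    ((Finset.subset_insert _ _).trans (Finset.subset_insert _ _)) (by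
    rw [Finset.card_insert_of_notMem hjn, Finset.card_insert_of_notMem hf]; omega) h4
    (fun v => v = x ∨ v = y) (by
      have := @four _ _ _ _ C f x y r
      have := @four _ _ _ _ C f' x y r'
      grind [Function.update]) (by grind [Function.update]) (Or.inl rfl) (by
        unfold Tch at htch; grind)
  have := hN f (by grind) x hx y hy (by grind [Function.update]) (by grind [Function.update])
  grind

lemma tri {f f' g : I} (hf : f ∉ C.T) (hf' : f' ∉ C.T) (hg : g ∉ C.T) (hne : f ≠ f')
    (hgf : g ≠ f) (hgf' : g ≠ f') {p q s : V} (hpq : p ≠ q) (hps : p ≠ s) (hqs : q ≠ s)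
    (hp : p ∈ C.e f) (hq : q ∈ C.e f) (hp' : p ∈ C.e f') (hs' : s ∈ C.e f')
    (hqg : q ∈ C.e g) (hsg : s ∈ C.e g)
    (htch : C.T = ∅ ∨ C.Tch p ∨ C.Tch q) : False := by
  obtain ⟨r, hr, hpr, hqr⟩ := third hp hq hpq
  obtain ⟨r', hr', hpr', hqr'⟩ := third hp' hs' hps
  obtain ⟨t, ht, hqt, hst⟩ := third hqg hsg hqs
  have h1 := pre_start C.h3 C.hM.1.1 hf hp hq hr hpq hpr hqr
  have hjn : f' ∉ insert f C.T := by simp [hf', hne.symm]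
  have hjn2 : g ∉ insert f' (insert f C.T) := by simp [hg, hgf', hgf]
  have h2 := pre_R C.h3 h1 hjn hp' hs' hr' hps hpr' hqr'
  have h4 := pre_done (pre_R C.h3 h2 hjn2 hsg hqg ht hqs.symm hst hqt)
  obtain ⟨S, hSp, hN, v, hD, hv⟩ := key (p := p) C.h3 C.hM
    (((Finset.subset_insert _ _).trans (Finset.subset_insert _ _)).trans (Finset.subset_insert _ _)) (by
    rw [Finset.card_insert_of_notMem hjn2, Finset.card_insert_of_notMem hjn,
      Finset.card_insert_of_notMem hf]; omega) h4
    (fun v => v = p ∨ v = q ∨ v = s) (by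
      have := @four _ _ _ _ C f p q r
      have := @four _ _ _ _ C f' p s r'
      have := @four _ _ _ _ C g q s t
      grind [Function.update]) (by grind [Function.update]) (Or.inl rfl) (by
        unfold Tch at htch; grind)
  have := hN f (by grind) p hp q hq (by grind [Function.update]) (by grind [Function.update])
  have := hN f' (by grind) p hp' s hs' (by grind [Function.update]) (by grind [Function.update])
  grind

lemma flc {f f' g : I} (hf : f ∉ C.T) (hf' : f' ∉ C.T) (hne : f ≠ f')
    {p q s : V} (hpq : p ≠ q) (hps : p ≠ s) (hqs : q ≠ s)
    (hp : p ∈ C.e f) (hq : q ∈ C.e f) (hp' : p ∈ C.e f') (hs' : s ∈ C.e f')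
    (h : C.Fl g s q) : False := by
  obtain ⟨r, hr, hpr, hqr⟩ := third hp hq hpq
  obtain ⟨r', hr', hpr', hqr'⟩ := third hp' hs' hps
  obtain ⟨hg, _, hgp, hgq, t', ht', ht⟩ := h.sp
  have h1 := pre_start C.h3 C.hM.1.1 hf hp hq hr hpq hpr hqr
  have hjn : f' ∉ insert f C.T := by simp [hf', hne.symm]
  have h2 := pre_R C.h3 h1 hjn hp' hs' hr' hps hpr' hqr'
  have h4 := pre_done (pre_flip (j := g) h2 (by grind) ht' (by
    rw [Function.update_of_ne (by grind), Function.update_of_ne (by grind)]; exact ht))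
  obtain ⟨S, hSp, hN, v, hD, hv⟩ := key (p := p) C.h3 C.hM
    ((Finset.subset_insert _ _).trans (Finset.subset_insert _ _)) (by
    rw [Finset.card_insert_of_notMem hjn,
      Finset.card_insert_of_notMem hf]; omega) h4
    (fun v => v = p ∨ v = q ∨ v = s) (by
      have := @four _ _ _ _ C f p q r
      have := @four _ _ _ _ C f' p s r'
      grind [Function.update]) (by grind [Function.update]) (Or.inl rfl) (by
        have := h.touch; grind)
  have := hN f (by grind) p hp q hq (by grind [Function.update]) (by grind [Function.update])
  have := hN f' (by grind) p hp' s hs' (by grind [Function.update]) (by grind [Function.update])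
  grind

lemma trc {f f' g : I} (hf : f ∉ C.T) (hf' : f' ∉ C.T) (hne : f ≠ f')
    {p q s t : V} (hpq : p ≠ q) (hps : p ≠ s)
    (hp : p ∈ C.e f) (hq : q ∈ C.e f) (hp' : p ∈ C.e f') (hs' : s ∈ C.e f')
    (h : C.Ed g q s t) : False := by
  obtain ⟨r, hr, hpr, hqr⟩ := third hp hq hpq
  obtain ⟨r', hr', hpr', hqr'⟩ := third hp' hs' hps
  obtain ⟨g0, g1, g2, g3, g4, g5, g6, g7⟩ := id h
  have hP : Pre C.e (C.T.erase g) C.tok q s := by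
    refine ⟨fun i hi => C.hM.1.1.1 i (by grind), fun φ => ?_⟩
    have := C.hM.1.1.2 φ
    rw [← Finset.add_sum_erase _ _ g0] at this
    simp only [dd, card3 C.h3 g2 g3 g4 g5 g6 g7, g1] at this ⊢
    rw [Finset.sum_insert (by simp [g5, g6]), Finset.sum_insert (by simp [g7]), Finset.sum_singleton] at this
    linear_combination this - zz (φ t) - zz (φ q) - zz (φ s)
  have hjn : f ∉ C.T.erase g := by grind
  have hjn2 : f' ∉ insert f (C.T.erase g) := by grind
  have h2 := pre_R C.h3 hP hjn hq hp hr hpq.symm hqr hpr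
  have h4 := pre_done (pre_R C.h3 h2 hjn2 hp' hs' hr' hps hpr' hqr')
  have := C.hM.2 _ _ ⟨h4, ?_⟩
  · rw [Finset.card_insert_of_notMem hjn2, Finset.card_insert_of_notMem hjn,
      Finset.card_erase_of_mem g0] at this
    have : 0 < C.T.card := Finset.card_pos.2 ⟨g, g0⟩
    omega
  · intro S hS
    have k1 := hS f (by grind) p hp q hq (by grind [Function.update]) (by grind [Function.update])
    have k2 := hS f' (by grind) p hp' s hs' (by grind [Function.update]) (by grind [Function.update])
    have k3 : ∀ i a b c, C.Ed i a b c → (S a ↔ S b) := by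
      intro i a b c hi
      by_cases hig : i = g
      · subst hig; have := hi.det h; grind
      · unfold Ed at hi
        exact hS i (by grind) a (by grind) b (by grind) (by grind [Function.update]) (by grind [Function.update])
    have k4 : ∀ i ∈ insert f' (insert f (C.T.erase g)), ∀ a ∈ C.e i,
        a ≠ Function.update (Function.update C.tok f r) f' r' i →
        ∃ b c, (S a ↔ S b) ∧ ∃ j d, C.Ed j b d c := by
      intro i hi a ha hat
      by_cases hif' : i = f'
      · subst hif'
        refine ⟨q, t, ?_, g, s, h⟩
        have := @four _ _ _ _ C i p s r' a
        grind [Function.update]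
      · by_cases hif : i = f
        · subst hif
          refine ⟨q, t, ?_, g, s, h⟩
          have := @four _ _ _ _ C i p q r a
          grind [Function.update]
        · have hiT : i ∈ C.T := by grind
          have : a ≠ C.tok i := by grind [Function.update]
          obtain ⟨b, hb, h1, h2⟩ := third ha (C.hM.1.1.1 i hiT) this
          exact ⟨a, C.tok i, Iff.rfl, i, b, by unfold Ed; have := C.hM.1.1.1 i hiT; grind⟩
    rintro ⟨i, hi, a, ha, hat, hSa⟩ i' hi' a' ha' hat'
    obtain ⟨b, c, hab, j, d, hj⟩ := k4 i hi a ha hat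
    obtain ⟨b', c', hab', j', d', hj'⟩ := k4 i' hi' a' ha' hat'
    exact hab'.2 (conn S k3 hj hj' (hab.1 hSa))

lemma two {i : I} {a : V} (ha : a ∈ C.e i) : ∃ b c, b ∈ C.e i ∧ c ∈ C.e i ∧ a ≠ b ∧ a ≠ c ∧ b ≠ c := by
  have : ∃ x ∈ C.e i, x ≠ a := by
    by_contra hcon
    push Not at hcon
    have : C.e i ⊆ {a} := by intro x hx; simp [hcon x hx]
    have := Finset.card_le_card this
    rw [C.h3 i] at this; simp at this
  obtain ⟨x, hx, hxt⟩ := this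
  obtain ⟨y, hy, h1, h2⟩ := third ha hx hxt.symm
  exact ⟨x, y, hx, hy, hxt.symm, h1, h2⟩

lemma nU {f f' : I} (hf : f ∉ C.T) (hf' : f' ∉ C.T) (hne : f ≠ f') {p v : V} (hp : p ∈ C.e f)
    (hp' : p ∈ C.e f') (hv : v ∈ C.e f) (htch : C.T = ∅ ∨ C.Tch v) : False := by
  by_cases hd : ∃ q, q ≠ p ∧ q ∈ C.e f ∧ q ∈ C.e f' ∧ (v = p ∨ v = q)
  · obtain ⟨q, hqp, hq, hq', h⟩ := hd
    rcases h with rfl | rfl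
    · exact dbl hf hf' hne hqp.symm hp hq hp' hq' htch
    · exact dbl hf hf' hne hqp hq hp hq' hp' htch
  · have : ∃ q s, q ≠ p ∧ q ∈ C.e f ∧ (v = p ∨ v = q) ∧ s ≠ p ∧ s ∈ C.e f' ∧ s ∉ C.e f ∧ q ∉ C.e f' := by
      obtain ⟨b, c, hb, hc, h1, h2, h3⟩ := two hp
      obtain ⟨b', c', hb', hc', h1', h2', h3'⟩ := two hp'
      have := @four _ _ _ _ C f p b c
      by_cases h : v = p <;> grind
    obtain ⟨q, s, hqp, hq, hvq, hsp, hs, hsf, hqf⟩ := this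
    have hqs : q ≠ s := by grind
    obtain ⟨g, hgq, hgs⟩ := C.cov q s hqs
    by_cases hg : g ∈ C.T
    · rcases ed_of hg hgq hgs hqs with ⟨t, h⟩ | h
      · exact trc hf hf' hne hqp.symm hsp.symm hp hq hp' hs h
      · exact flc hf hf' hne hqp.symm hsp.symm hqs hp hq hp' hs h.symm
    · refine tri hf hf' hg hne ?_ ?_ hqp.symm hsp.symm hqs hp hq hp' hs hgq hgs ?_
      · rintro rfl; exact hsf hgs
      · rintro rfl; exact hqf hgq
      · rcases htch with h | h
        · exact Or.inl h
        · rcases hvq with rfl | rfl <;> simp [h]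

lemma Tch_iff {v : V} : C.Tch v ↔ ∃ i b c, C.Ed i v b c := by
  constructor
  · rintro ⟨i, hi, a, ha, hat, rfl⟩
    have ht := C.hM.1.1.1 i hi
    obtain ⟨b, hb, h1, h2⟩ := third ha ht hat
    exact ⟨i, b, C.tok i, by unfold Ed; grind⟩
  · rintro ⟨i, b, c, h⟩
    unfold Ed at h
    exact ⟨i, by grind, v, by grind⟩

/-- missing edges are disjoint -/
lemma F0 {f f' : I} (hf : f ∉ C.T) (hf' : f' ∉ C.T) (hne : f ≠ f') {p : V} (hp : p ∈ C.e f)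
    (hp' : p ∈ C.e f') : False := by
  by_cases hT : C.T = ∅
  · exact nU hf hf' hne hp hp' hp (Or.inl hT)
  obtain ⟨i, hi⟩ := Finset.nonempty_iff_ne_empty.2 hT
  obtain ⟨u, b, hu⟩ := ed_ex hi
  have hU : C.Tch u := Tch_iff.2 ⟨i, b, _, hu⟩
  obtain ⟨q, r, hq, hr, h1, h2, h3⟩ := two hp
  have key : ∀ v ∈ C.e f, C.Wk v u := by
    intro v hv
    have huf : u ∉ C.e f := fun h => nU hf hf' hne hp hp' h (Or.inr hU)
    have hvu : v ≠ u := by grind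
    obtain ⟨j, hjv, hju⟩ := C.cov v u hvu
    by_cases hj : j ∈ C.T
    · rcases ed_of hj hjv hju hvu with ⟨t, h⟩ | h
      · exact (nU hf hf' hne hp hp' hv (Or.inr (Tch_iff.2 ⟨_, _, _, h⟩))).elim
      · exact ⟨j, h⟩
    · exact (nU (f' := f) hj hf (by grind) hjv hv hju (Or.inr hU)).elim
  exact F3 (f := f) (p := p) (q := q) (r := r) (by unfold Fr; grind) (key p hp) (key q hq) (key r hr)

/-- strong pairs are traversed -/
lemma str {f : I} (hf : f ∉ C.T) {p x : V} (hp : p ∈ C.e f) (hx : x ∉ C.e f) (h : ¬ C.Wk p x) :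
    ∃ j t, C.Ed j p x t := by
  have hpx : p ≠ x := by grind
  obtain ⟨j, hjv, hju⟩ := C.cov p x hpx
  by_cases hj : j ∈ C.T
  · rcases ed_of hj hjv hju hpx with ⟨t, h⟩ | h'
    · exact ⟨j, t, h⟩
    · exact (h ⟨j, h'⟩).elim
  · exact (F0 hf hj (by grind) hp hjv).elim

end Ctx
end Cov3

namespace Cov3
set_option linter.unusedSectionVars false
set_option linter.unusedVariables false
namespace Ctx
variable {V I : Type} [DecidableEq V] [DecidableEq I] {C : Ctx V I}

lemma Ed.wk {i : I} {a b c : V} (h : C.Ed i a b c) : C.Wk a c ∧ C.Wk b c ∧ C.Wk c a ∧ C.Wk c b :=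
  ⟨⟨i, b, Or.inl h⟩, ⟨i, a, Or.inl h.symm⟩, ⟨i, b, Or.inr h⟩, ⟨i, a, Or.inr h.symm⟩⟩

lemma Ed.fl {i : I} {a b c : V} (h : C.Ed i a b c) : C.Fl i a c := ⟨b, Or.inl h⟩
lemma Ed.fl' {i : I} {a b c : V} (h : C.Ed i a b c) : C.Fl i c a := ⟨b, Or.inr h⟩

lemma Fl.ed {i : I} {u v : V} (h : C.Fl i u v) : ∃ t, C.Ed i u t v ∨ C.Ed i v t u := h

lemma St.a {S : V → Prop} {i : I} {u w t : V} (h : C.St S i u w) (hE : C.Ed i u t w) : S w ↔ S t :=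
  (h t).1 hE
lemma St.b {S : V → Prop} {i : I} {u w t : V} (h : C.St S i u w) (hE : C.Ed i w t u) : S u ↔ S t :=
  (h t).2 hE

attribute [grind →] St.a St.b Ed.det Ed.ne Ed.wk Fl.ed
attribute [grind .] Ed.symm

lemma Fl.wk {i : I} {u v : V} (h : C.Fl i u v) : C.Wk u v := ⟨i, h⟩

lemma F1w {f : I} {p q r : V} (h : C.Fr f p q r) : ¬ C.Wk p q ∧ ¬ C.Wk p r ∧ ¬ C.Wk q r ∧
    ¬ C.Wk q p ∧ ¬ C.Wk r p ∧ ¬ C.Wk r q := by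
  obtain ⟨hf, hp1, hq1, hr1, hpq, hpr, hqr⟩ := id h
  refine ⟨?_, ?_, ?_, ?_, ?_, ?_⟩ <;> rintro ⟨g, hg⟩
  · exact F1 hf hp1 hq1 hg
  · exact F1 hf hp1 hr1 hg
  · exact F1 hf hq1 hr1 hg
  · exact F1 hf hq1 hp1 hg
  · exact F1 hf hr1 hp1 hg
  · exact F1 hf hr1 hq1 hg

lemma Fr.mem {f : I} {p q r x : V} (h : C.Fr f p q r) : x ∈ C.e f ↔ x = p ∨ x = q ∨ x = r := by
  obtain ⟨hf, hp1, hq1, hr1, hpq, hpr, hqr⟩ := id h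
  have := @four _ _ _ _ C f p q r x
  grind

lemma strF {f : I} {p q r x : V} (h : C.Fr f p q r) (hx : x ≠ p ∧ x ≠ q ∧ x ≠ r) (hw : ¬ C.Wk p x) :
    ∃ j t, C.Ed j p x t :=
  str h.1 h.2.1 (by rw [h.mem]; grind) hw

variable (C) in
structure KS (f ic k0 : I) (p q r c y0 : V) : Prop where
  F : C.Fr f p q r
  A : C.Ed ic p q c
  B : C.Ed k0 r c y0

lemma KS.sw {f ic k0 : I} {p q r c y0 : V} (h : C.KS f ic k0 p q r c y0) : C.KS f ic k0 q p r c y0 :=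
  ⟨h.F.sw, h.A.symm, h.B⟩

variable (C) in
def Out (p q r w : V) : Prop := w ≠ p ∧ w ≠ q ∧ w ≠ r ∧ ∀ i, ¬ C.Ed i p q w

lemma Out.sw {p q r w : V} (h : C.Out p q r w) : C.Out q p r w :=
  ⟨h.2.1, h.1, h.2.2.1, fun i hi => h.2.2.2 i hi.symm⟩

lemma K1 {f : I} {p q r v : V} (h : C.Fr f p q r) {i j : I} (hi : C.Ed i p q v) (hj : C.Fl j p v) :
    j = i := by
  by_contra hne
  obtain ⟨hf, hp1, hq1, hr1, hpq, hpr, hqr⟩ := id h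
  obtain ⟨S, a1, a2, a3, a4, a5, a6⟩ := L2 hf hq1 hp1 hpq.symm hi.symm.fl hj.symm (Ne.symm hne)
  have := (a5 p).1 hi.symm
  grind

lemma K1e {f : I} {p q r v : V} (h : C.Fr f p q r) {i : I} (hi : C.Ed i p q v) :
    (∀ j t, C.Ed j p t v → j = i) ∧ (∀ j t, C.Ed j v t p → j = i) :=
  ⟨fun j t hj => K1 h hi hj.fl, fun j t hj => K1 h hi hj.fl'⟩

section
variable {f ic k0 : I} {p q r c y0 : V} (h : C.KS f ic k0 p q r c y0)
include h

lemma KS.dist : p ≠ q ∧ p ≠ r ∧ q ≠ r ∧ c ≠ p ∧ c ≠ q ∧ c ≠ r := by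
  have hF := h.F
  have := F1w hF
  have := h.A
  unfold Fr at hF
  grind

lemma KS.rv {i : I} {v : V} (hi : C.Ed i p q v) : ¬ C.Wk r v := fun hw =>
  F3 h.F hi.wk.1 hi.wk.2.1 hw

lemma KS.out0 : C.Out p q r y0 := by
  have h1 := F1w h.F
  have h2 := h.dist
  have := h.B
  refine ⟨by grind, by grind, by grind, fun i hi => ?_⟩
  exact h.rv hi this.wk.1

/-- y weak to r and p by distinct edges is impossible -/
lemma KS.KC {y : V} (hy : C.Out p q r y) {j1 j2 : I} (h1 : C.Fl j1 r y) (h2 : C.Fl j2 y p)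
    (hne : j1 ≠ j2) : False := by
  obtain ⟨hf, hp1, hq1, hr1, hpq, hpr, hqr⟩ := id h.F
  have hw := F1w h.F
  obtain ⟨S, a1, a2, a3, a4, a5, a6⟩ := L2 hf hr1 hp1 hpr.symm h1 h2 hne
  have hd := h.dist
  have hA := h.A
  unfold Out at hy
  have hSq : S q := by grind
  by_cases hq : C.Wk q y
  · exact F3 h.F h2.symm.wk hq h1.wk
  · obtain ⟨j, t, hj⟩ := strF h.F.sw (by grind) hq
    have := a4 j q y t hj
    grind

lemma KS.y0p : ¬ C.Wk p y0 := by
  rintro ⟨g, hg⟩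
  refine h.KC h.out0 h.B.fl hg.symm ?_
  have := h.B
  have := h.dist
  have := h.out0
  unfold Out at this
  have := F1w h.F
  grind

lemma KS.y0q : ¬ C.Wk q y0 := h.sw.y0p

lemma KS.LK {w : V} (hw : C.Out p q r w) (hr : ¬ C.Wk r w) (hc : ¬ C.Wk c w) {g2 g3 : I}
    (h2 : C.Fl g2 y0 w) (h3 : C.Fl g3 w p) (hne : g2 ≠ g3) : False := by
  obtain ⟨hf, hp1, hq1, hr1, hpq, hpr, hqr⟩ := id h.F
  have hW := F1w h.F
  have hd := h.dist
  have hA := h.A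
  have hB := h.B
  have h0 := h.out0
  have hyp := h.y0p
  have hyq := h.y0q
  unfold Out at hw h0
  have hwc : w ≠ c := by grind
  obtain ⟨Q, a1, a2, a3, a4, a5, a6, a7⟩ := L3 hf hr1 hp1 hpr.symm h.B.fl h2 h3
    (by grind) (by grind) hne
  have hSq : Q q := by grind
  have hcq := (a5 c).1 hB
  by_cases hy : Q y0
  · have hcw : ∃ j t, C.Ed j c w t := by
      obtain ⟨j, hjv, hju⟩ := C.cov c w hwc.symm
      by_cases hj : j ∈ C.T
      · rcases ed_of hj hjv hju hwc.symm with h | h'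
        · exact ⟨j, h⟩
        · exact (hc h'.wk).elim
      · obtain ⟨S, b1, b2, b3, b4, b5, b6, b7⟩ := L3R hf hq1 hp1 hpq.symm hA.symm.fl hj (by
          rintro rfl; have := (h.F.mem (x := w)).1 hju; grind) hjv hju hwc.symm h3 (by grind)
        have := (b6 p).1 hA.symm
        grind
    obtain ⟨j, t, hj⟩ := strF h.F.rot.rot (by grind) hr
    obtain ⟨j', t', hj'⟩ := hcw
    have := a4 j _ _ t hj
    have := a4 j' _ _ t' hj'
    have := K1e h.F hA
    grind
  · obtain ⟨j, t, hj⟩ := strF h.F (by grind) hyp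
    obtain ⟨j', t', hj'⟩ := strF h.F.sw (by grind) hyq
    have := a4 j _ _ t hj
    have := a4 j' _ _ t' hj'
    grind

end
end Ctx
end Cov3

namespace Cov3
set_option linter.unusedSectionVars false
set_option linter.unusedVariables false
namespace Ctx
variable {V I : Type} [DecidableEq V] [DecidableEq I] {C : Ctx V I}

section
variable {f ic k0 : I} {p q r c y0 : V} (h : C.KS f ic k0 p q r c y0)
include h

lemma KS.LKR {w : V} (hw : C.Out p q r w) {j g3 : I} (hj : j ∉ C.T) (hjy : y0 ∈ C.e j) (hjw : w ∈ C.e j)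
    (hyw : y0 ≠ w) (h3 : C.Fl g3 w p) : False := by
  obtain ⟨hf, hp1, hq1, hr1, hpq, hpr, hqr⟩ := id h.F
  have hW := F1w h.F
  have hd := h.dist
  have hA := h.A
  have hB := h.B
  have h0 := h.out0
  have hyp := h.y0p
  have hyq := h.y0q
  unfold Out at hw h0
  have hwc : w ≠ c := by grind
  obtain ⟨Q, a1, a2, a3, a3', a4, a5, a6⟩ := L3R hf hr1 hp1 hpr.symm h.B.fl hj (by
          rintro rfl; have := (h.F.mem (x := w)).1 hjw; grind) hjy hjw hyw h3 (by grind)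
  obtain ⟨j', t', hj'⟩ := strF h.F.sw (by grind) hyq
  have hSq : Q q := by grind
  have := a4 j' _ _ t' hj'
  grind

lemma KS.cutC {w : V} (hw : C.Out p q r w) {j1 g : I} (h1 : C.Fl j1 c w) (h2 : C.Fl g w p) (hne : j1 ≠ g) :
    ∃ Q : V → Prop, Q p ∧ Q q ∧ Q c ∧ ¬ Q w ∧
      (∀ i a b c, C.Ed i a b c → i = j1 ∨ i = g ∨ (Q a ↔ Q b)) ∧ C.St Q j1 c w ∧ C.St Q g w p := by
  obtain ⟨hf, hp1, hq1, hr1, hpq, hpr, hqr⟩ := id h.F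
  have hW := F1w h.F
  have hd := h.dist
  have hA := h.A
  unfold Out at hw
  obtain ⟨Q, a1, a2, a3, a4, a5, a6, a7⟩ := L3 hf hq1 hp1 hpq.symm hA.symm.fl h1 h2 (by grind) (by grind) hne
  have := a5.a hA.symm
  refine ⟨Q, a2, a1, by grind, by grind, ?_, a6, a7⟩
  intro i a b d hi
  have := a4 i a b d hi
  grind

lemma KS.N {w : V} (hw : C.Out p q r w) {g g' : I} (h1 : C.Fl g p w) (h2 : C.Fl g' q w) : False := by
  obtain ⟨hf, hp1, hq1, hr1, hpq, hpr, hqr⟩ := id h.F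
  have hW := F1w h.F
  have hd := h.dist
  have hA := h.A
  have hB := h.B
  have h0 := h.out0
  have hyp := h.y0p
  have hyq := h.y0q
  have hw' := id hw
  unfold Out at hw h0
  have hgg : g ≠ g' := by grind
  have hr : ¬ C.Wk r w := fun hh => F3 h.F h1.wk h2.wk hh
  obtain ⟨S, a1, a2, a3, a4, a5, a6⟩ := L2 hf hp1 hq1 hpq h1 h2.symm hgg
  have hc : ¬ C.Wk c w := by
    rintro ⟨j1, hj1⟩
    by_cases e1 : j1 = g
    · obtain ⟨Q, b⟩ := h.sw.cutC hw'.sw hj1 h2.symm (by grind)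
      grind
    by_cases e2 : j1 = g'
    · obtain ⟨Q, b⟩ := h.cutC hw' hj1 h1.symm (by grind)
      grind
    obtain ⟨Q1, b1, b2, b3, b4, b5, b6, b7⟩ := h.cutC hw' hj1 h1.symm e1
    obtain ⟨Q2, c1, c2, c3, c4, c5, c6, c7⟩ := h.sw.cutC hw'.sw hj1 h2.symm e2
    exact three_fl S Q1 Q2 h1 h2 hj1 hgg (Ne.symm e1) (Ne.symm e2) a4 (by grind) (by grind) a5 b7.symm
      a6.symm c7.symm b6 c6 (by grind) (by grind) (by grind)
  have hyw : y0 ≠ w := by rintro rfl; exact hyp h1.wk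
  by_cases hy : S y0
  · obtain ⟨j, hjy, hjw⟩ := C.cov y0 w hyw
    by_cases hj : j ∈ C.T
    · rcases ed_of hj hjy hjw hyw with ⟨t, hh⟩ | hh
      · have := a4 _ _ _ _ hh
        grind
      · by_cases e1 : j = g
        · exact h.sw.LK hw'.sw hr hc hh h2.symm (by grind)
        · exact h.LK hw' hr hc hh h1.symm e1
    · exact h.LKR hw' hj hjy hjw hyw h1.symm
  · obtain ⟨j, t, hj⟩ := strF h.F (by grind) hyp
    obtain ⟨j', t', hj'⟩ := strF h.F.sw (by grind) hyq
    have := a4 j _ _ t hj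
    have := a4 j' _ _ t' hj'
    have : C.Ed g p y0 w := by grind
    exact h.sw.LK hw'.sw hr hc this.symm.fl h2.symm hgg

lemma KS.hw {g : I} {s w : V} (hs : C.Out p q r s) (hg : C.Ed g p s w) :
    C.Out p q r w ∧ ¬ C.Wk r w ∧ ¬ C.Wk c w := by
  have hW := F1w h.F
  have hd := h.dist
  have hA := h.A
  have hO : C.Out p q r w := by
    unfold Out at hs
    refine ⟨by grind, by grind, by grind, fun i hi => ?_⟩
    have := (K1e h.F hi).1 _ _ hg
    grind
  have hO' := id hO
  unfold Out at hO hs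
  refine ⟨hO', ?_, ?_⟩
  · rintro ⟨j1, hj1⟩
    exact h.KC hO' hj1 hg.fl' (by grind)
  · rintro ⟨j1, hj1⟩
    obtain ⟨Q, b1, b2, b3, b4, b5, b6, b7⟩ := h.cutC hO' hj1 hg.fl' (by grind)
    have hq : ¬ C.Wk q w := by
      rintro ⟨g', hg'⟩
      exact h.N hO' hg.fl hg'
    obtain ⟨j', t', hj'⟩ := strF h.F.sw (by grind) hq
    have := b5 _ _ _ _ hj'
    have := K1e h.F.sw hA.symm
    grind

lemma KS.uniq {g g1 : I} {s w : V} (hs : s = y0 ∨ (C.Out p q r s ∧ C.Wk q s)) (hg : C.Ed g p s w)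
    (h1 : C.Fl g1 p w) : g1 = g := by
  by_contra hne
  have hs' : C.Out p q r s := by
    rcases hs with rfl | hs
    · exact h.out0
    · exact hs.1
  obtain ⟨hw, hr, hc⟩ := h.hw hs' hg
  rcases hs with rfl | ⟨-, g3, hg3⟩
  · exact h.LK hw hr hc hg.symm.fl h1.symm (Ne.symm hne)
  obtain ⟨hf, hp1, hq1, hr1, hpq, hpr, hqr⟩ := id h.F
  have hW := F1w h.F
  have hd := h.dist
  have hA := h.A
  have hO := id hw
  have hsO := id hs'
  unfold Out at hO hsO
  obtain ⟨Q, a1, a2, a3, a4, a5, a6, a7⟩ := L3 hf hp1 hq1 hpq h1 hg.symm.fl' hg3.symm hne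
    (by grind) (by grind)
  have hQw : Q w := by grind
  have hQs : ¬ Q s := by grind
  have hQr : Q r := by
    obtain ⟨j', t', hj'⟩ := strF h.F.rot.rot (by grind) hr
    have := a4 _ _ _ _ hj'
    grind
  by_cases hrs : C.Wk r s
  · obtain ⟨j, hj⟩ := hrs
    have : j = g3 := by
      by_contra hne
      exact h.sw.KC hs'.sw hj hg3.symm hne
    grind
  · obtain ⟨j', t', hj'⟩ := strF h.F.rot.rot (by grind) hrs
    have := a4 _ _ _ _ hj'
    grind

end

open Classical in
lemma KS.count [Fintype V] {f ic k0 : I} {p q r c y0 : V} (h : C.KS f ic k0 p q r c y0) :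
    (Finset.univ.filter (fun w => C.Out p q r w ∧ C.Wk q w)).card <
    (Finset.univ.filter (fun w => C.Out p q r w ∧ C.Wk p w)).card := by
  have hex : ∀ s, (s = y0 ∨ (C.Out p q r s ∧ C.Wk q s)) → ∃ w g, C.Ed g p s w := by
    intro s hs
    have hO : C.Out p q r s := by
      rcases hs with rfl | hs
      · exact h.out0
      · exact hs.1
    have hp : ¬ C.Wk p s := by
      rcases hs with rfl | ⟨_, g, hg⟩
      · exact h.y0p
      · rintro ⟨g', hg'⟩; exact h.N hO hg' hg
    obtain ⟨j, t, hj⟩ := strF h.F ⟨hO.1, hO.2.1, hO.2.2.1⟩ hp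
    exact ⟨t, j, hj⟩
  choose! w g hwg using hex
  have hlt : (Finset.univ.filter (fun w => C.Out p q r w ∧ C.Wk q w)).card <
     (insert y0 (Finset.univ.filter (fun w => C.Out p q r w ∧ C.Wk q w))).card := by
    rw [Finset.card_insert_of_notMem]
    · omega
    · simp only [Finset.mem_filter, not_and]; intro _ _; exact h.y0q
  refine hlt.trans_le ?_
  apply Finset.card_le_card_of_injOn w
  · intro s hs
    have hs' : s = y0 ∨ (C.Out p q r s ∧ C.Wk q s) := by simpa using hs
    have hO : C.Out p q r s := by
      rcases hs' with rfl | hs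
      · exact h.out0
      · exact hs.1
    have := hwg s hs'
    simp only [Finset.coe_filter, Finset.mem_univ, true_and, Set.mem_ofPred_eq]
    exact ⟨(h.hw hO this).1, this.wk.1⟩
  · intro s hs s' hs2 hE
    have hs' : s = y0 ∨ (C.Out p q r s ∧ C.Wk q s) := by simpa using hs
    have hs2' : s' = y0 ∨ (C.Out p q r s' ∧ C.Wk q s') := by simpa using hs2
    have h1 := hwg s hs'
    have h2 := hwg s' hs2'
    rw [← hE] at h2
    have := h.uniq hs' h1 h2.fl
    grind

/-- Case K is impossible -/
lemma caseK [Fintype V] {f i : I} {p q r c : V} (hF : C.Fr f p q r) (hi : C.Ed i p q c) : False := by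
  have hW := F1w hF
  obtain ⟨k0, y0, hk⟩ := strF hF.rot.rot (x := c) (by
    unfold Fr at hF; grind) (fun hw => F3 hF hi.wk.1 hi.wk.2.1 hw)
  have h : C.KS f i k0 p q r c y0 := ⟨hF, hi, hk⟩
  have h1 := h.count
  have h2 := h.sw.count
  have e : C.Out q p r = C.Out p q r := funext fun w => propext ⟨fun h => h.sw, fun h => h.sw⟩
  rw [e] at h2
  omega

end Ctx
end Cov3

namespace Cov3
set_option linter.unusedSectionVars false
set_option linter.unusedVariables false
namespace Ctx
variable {V I : Type} [DecidableEq V] [DecidableEq I] {C : Ctx V I}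

variable (C) in
structure CS (f : I) (p q r : V) : Prop where
  F : C.Fr f p q r
  n1 : ∀ i c, ¬ C.Ed i p q c
  n2 : ∀ i c, ¬ C.Ed i q r c
  n3 : ∀ i c, ¬ C.Ed i p r c
  w1 : ¬ C.Wk p q
  w2 : ¬ C.Wk q r
  w3 : ¬ C.Wk p r
  d1 : p ≠ q
  d2 : q ≠ r
  d3 : p ≠ r

variable (C) in
def X1 (p q r x : V) : Prop := x ≠ p ∧ x ≠ q ∧ x ≠ r ∧ ¬ C.Wk p x ∧ C.Wk q x ∧ C.Wk r x

variable (C) in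
def X2 (p q r x : V) : Prop := x ≠ p ∧ x ≠ q ∧ x ≠ r ∧ ¬ C.Wk p x ∧ ¬ C.Wk q x ∧ C.Wk r x

lemma X1.sw {p q r x : V} (h : C.X1 p q r x) : C.X1 p r q x := by unfold X1 at *; grind
lemma X2.sw {p q r x : V} (h : C.X2 p q r x) : C.X2 q p r x := by unfold X2 at *; grind

lemma CS.sw {f : I} {p q r : V} (h : C.CS f p q r) : C.CS f q p r where
  F := h.F.sw
  n1 := fun i c hi => h.n1 i c hi.symm
  n2 := h.n3
  n3 := h.n2
  w1 := fun hw => h.w1 hw.symm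
  w2 := h.w3
  w3 := h.w2
  d1 := h.d1.symm
  d2 := h.d3
  d3 := h.d2

lemma CS.rot {f : I} {p q r : V} (h : C.CS f p q r) : C.CS f q r p where
  F := h.F.rot
  n1 := h.n2
  n2 := fun i c hi => h.n3 i c hi.symm
  n3 := fun i c hi => h.n1 i c hi.symm
  w1 := h.w2
  w2 := fun hw => h.w3 hw.symm
  w3 := fun hw => h.w1 hw.symm
  d1 := h.d2
  d2 := h.d3.symm
  d3 := h.d1.symm

lemma CS.sw2 {f : I} {p q r : V} (h : C.CS f p q r) : C.CS f p r q := h.rot.rot.sw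
lemma CS.sw3 {f : I} {p q r : V} (h : C.CS f p q r) : C.CS f r q p := h.rot.sw

attribute [grind →] Wk.symm

section
variable {f : I} {p q r : V} (h : C.CS f p q r)
include h

lemma CS.gne {g g' : I} {x x' : V} (h1 : C.Fl g p x) (h2 : C.Fl g' q x') : g ≠ g' := by
  rintro rfl
  obtain ⟨_, n1, n2, n3, w1, w2, w3, d1, d2, d3⟩ := h
  grind

lemma CS.cut {g g' : I} {x : V} (h1 : C.Fl g p x) (h2 : C.Fl g' q x) :
    ∃ S : V → Prop, S p ∧ S q ∧ ¬ S x ∧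
      (∀ i a b c, C.Ed i a b c → i = g ∨ i = g' ∨ (S a ↔ S b)) ∧ C.St S g p x ∧ C.St S g' q x := by
  obtain ⟨hf, hp1, hq1, hr1, hpq, hpr, hqr⟩ := id h.F
  obtain ⟨S, a1, a2, a3, a4, a5, a6⟩ := L2 hf hp1 hq1 hpq h1 h2.symm (h.gne h1 h2)
  exact ⟨S, a1, a2, a3, a4, a5, a6.symm⟩

lemma CS.col {g1 h0 g3 : I} {u x : V} (hu : u ≠ q) (h1 : C.Fl g1 p x) (hh : C.Ed h0 p u x) (h3 : C.Fl g3 q u)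
    (hne : g1 ≠ h0) : ∃ Q : V → Prop, Q p ∧ Q q ∧ Q x ∧ ¬ Q u ∧
      (∀ i a b c, C.Ed i a b c → i = h0 ∨ i = g3 ∨ (Q a ↔ Q b)) ∧ C.St Q g3 q u := by
  obtain ⟨hf, hp1, hq1, hr1, hpq, hpr, hqr⟩ := id h.F
  have hs := h.sw.gne h3 h1
  have hs2 := h.sw.gne h3 hh.fl
  obtain ⟨Q, a1, a2, a3, a4, a5, a6, a7⟩ := L3 hf hp1 hq1 hpq h1 hh.symm.fl' h3.symm hne hs.symm hs2.symm
  have hQx : Q x := by grind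
  refine ⟨Q, a1, a2, hQx, by grind, ?_, a7.symm⟩
  intro i a b c hi
  have := a4 _ _ _ _ hi
  by_cases e : i = g1
  · subst e
    right; right
    grind
  · grind

lemma CS.C0 {h0 g1 : I} {u x : V} (hu : C.X1 p q r u) (hh : C.Ed h0 p u x) (h1 : C.Fl g1 p x) :
    g1 = h0 := by
  by_contra hne
  obtain ⟨u1, u2, u3, u4, ⟨g, hg⟩, ⟨g', hg'⟩⟩ := hu
  obtain ⟨Q1, a1, a2, a3, a4, a5, a6⟩ := h.col u2 h1 hh hg hne
  obtain ⟨Q2, b1, b2, b3, b4, b5, b6⟩ := h.sw2.col u3 h1 hh hg' hne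
  obtain ⟨S, c1, c2, c3, c4, c5, c6⟩ := h.rot.cut hg hg'
  obtain ⟨x1, y1, z1, e1, m1⟩ := hg.inout a6 c5 a2 a4 c1 c3
  obtain ⟨x2, y2, z2, e2, m2⟩ := hg'.inout b6 c6 b2 b4 c2 c3
  exact three Q1 Q2 S hh e1 e2 (h.gne hh.fl hg) (h.sw2.gne hh.fl hg') (h.rot.gne hg hg')
    a5 b5 c4 (by grind) m1 m2

/-- b strong only to r -/
lemma CS.cutb {g g' : I} {b : V} (hb : C.X1 r p q b) (h1 : C.Fl g p b) (h2 : C.Fl g' q b) :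
    ∃ S : V → Prop, S p ∧ S q ∧ ¬ S b ∧ ¬ S r ∧
      (∀ i a b c, C.Ed i a b c → i = g ∨ i = g' ∨ (S a ↔ S b)) ∧ C.St S g p b ∧ C.St S g' q b := by
  obtain ⟨S, c1, c2, c3, c4, c5, c6⟩ := h.cut h1 h2
  refine ⟨S, c1, c2, c3, ?_, c4, c5, c6⟩
  obtain ⟨u1, u2, u3, u4, _⟩ := hb
  obtain ⟨j, t, hj⟩ := strF h.F.rot.rot ⟨u1, u2, u3⟩ u4
  have := c4 _ _ _ _ hj
  obtain ⟨_, n1, n2, n3, w1, w2, w3, d1, d2, d3⟩ := h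
  grind

lemma CS.C1 {g : I} {b y : V} (hb : C.X1 r p q b) (h1 : C.Fl g p b) (hy : y ≠ p ∧ y ≠ q ∧ y ≠ r)
    (hyp : ¬ C.Wk p y) (hyr : ¬ C.Wk r y) : C.Ed g p y b ∧ ∀ j t, C.Ed j p y t → j = g := by
  obtain ⟨g', h2⟩ := hb.2.2.2.2.2
  obtain ⟨S, c1, c2, c3, c3', c4, c5, c6⟩ := h.cutb hb h1 h2
  obtain ⟨j, t, hj⟩ := strF h.F.rot.rot (x := y) (by grind) hyr
  obtain ⟨j', t', hj'⟩ := strF h.F hy hyp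
  have hyS : ¬ S y := by
    have := c4 _ _ _ _ hj
    obtain ⟨_, n1, n2, n3, w1, w2, w3, d1, d2, d3⟩ := h
    grind
  have hall : ∀ j t, C.Ed j p y t → j = g := by
    intro j t hj
    have := c4 _ _ _ _ hj
    obtain ⟨_, n1, n2, n3, w1, w2, w3, d1, d2, d3⟩ := h
    grind
  refine ⟨?_, hall⟩
  have := hall _ _ hj'
  grind

lemma CS.C2f {gp g3 j : I} {b w : V} (hb : C.X1 r p q b) (hw : C.X2 p q r w)
    (hno : ∀ i, ¬ C.Ed i r b w) (h1 : C.Fl gp p b) (h2 : C.Fl j b w) (h3 : C.Fl g3 r w) (hpj : p ∉ C.e j) :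
    False := by
  obtain ⟨hf, hp1, hq1, hr1, hpq, hpr, hqr⟩ := id h.F
  obtain ⟨b1, b2, b3, b4, b5, b6⟩ := hb
  obtain ⟨v1, v2, v3, v4, v5, v6⟩ := hw
  obtain ⟨_, n1, n2, n3, w1, w2, w3, d1, d2, d3⟩ := id h
  have hne : gp ≠ j := by
    rintro rfl; exact hpj h1.cont.1
  obtain ⟨Q, a1, a2, a3, a4, a5, a6, a7⟩ := L3 hf hp1 hr1 hpr h1 h2 h3.symm hne (h.sw2.gne h1 h3) (by grind)
  obtain ⟨j', t', hj'⟩ := strF h.F.rot.rot (x := b) (by grind) b4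
  have hQb : Q b := by
    have := a4 _ _ _ _ hj'
    grind
  obtain ⟨j2, t2, hj2⟩ := strF h.F (x := w) (by grind) v4
  have hj2j : j2 ≠ j := by rintro rfl; exact hpj hj2.2.2.1
  have := a4 _ _ _ _ hj2
  grind

lemma CS.C2 {b w : V} (hb : C.X1 r p q b) (hw : C.X2 p q r w) : ∃ i, C.Ed i r b w := by
  by_contra hno
  push Not at hno
  have hb' := id hb
  have hw' := id hw
  obtain ⟨b1, b2, b3, b4, ⟨gp, hgp⟩, ⟨gq, hgq⟩⟩ := hb
  obtain ⟨v1, v2, v3, v4, v5, ⟨g3, hg3⟩⟩ := hw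
  obtain ⟨hf, hp1, hq1, hr1, hpq, hpr, hqr⟩ := id h.F
  obtain ⟨_, n1, n2, n3, w1, w2, w3, d1, d2, d3⟩ := id h
  have hbw : b ≠ w := by rintro rfl; exact v4 hgp.wk
  have flip : ∀ j, C.Fl j b w → False := by
    intro j hj
    by_cases hpj : p ∈ C.e j
    · have hqj : q ∉ C.e j := by
        intro hqj
        have hc := hj.cont
        have := four hc.1 hc.2.1 hpj hqj (by grind) (by grind) (by grind)
        grind
      exact h.sw.C2f hb'.sw hw'.sw hno hgq hj hg3 hqj
    · exact h.C2f hb' hw' hno hgp hj hg3 hpj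
  obtain ⟨j, hjb, hjw⟩ := C.cov b w hbw
  by_cases hj : j ∈ C.T
  · rcases ed_of hj hjb hjw hbw with ⟨t, hh⟩ | hh
    · obtain ⟨S, c1, c2, c3, c3', c4, c5, c6⟩ := h.cutb hb' hgp hgq
      by_cases hSw : S w
      · have := c4 _ _ _ _ hh
        grind
      · obtain ⟨j2, t2, hj2⟩ := strF h.F (x := w) (by grind) v4
        have := c4 _ _ _ _ hj2
        have : C.Ed gp p w b := by grind
        exact flip gp this.symm.fl'
    · exact flip j hh
  · obtain ⟨S, b1, b2, b3, b4, b5, b6, b7⟩ := L3R hf hp1 hr1 hpr hgp hj (by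
          rintro rfl; have := (h.F.mem (x := w)).1 hjw; grind) hjb hjw hbw hg3.symm (h.sw2.gne hgp hg3)
    obtain ⟨j', t', hj'⟩ := strF h.F.rot.rot (x := b) (by grind) (by assumption)
    have := b5 _ _ _ _ hj'
    grind

lemma CS.C3 {a b : V} (ha : C.X1 p q r a) (hb : C.X1 r p q b) :
    (∃ i, C.Ed i a p b) ∨ (∃ i, C.Ed i b r a) ∨ ∃ i, C.Ed i a b q := by
  by_contra hcon
  push Not at hcon
  obtain ⟨t1, t2, t3⟩ := hcon
  have hb' := id hb
  obtain ⟨b1, b2, b3, b4, ⟨gp, hgp⟩, ⟨gq, hgq⟩⟩ := hb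
  obtain ⟨a1, a2, a3, a4, ⟨ga, hga⟩, ⟨gr, hgr⟩⟩ := ha
  obtain ⟨hf, hp1, hq1, hr1, hpq, hpr, hqr⟩ := id h.F
  obtain ⟨_, n1, n2, n3, w1, w2, w3, d1, d2, d3⟩ := id h
  have hab : b ≠ a := by rintro rfl; exact a4 hgp.wk
  obtain ⟨j1, s1, hj1⟩ := strF h.F.rot.rot (x := b) (by grind) b4
  obtain ⟨j2, s2, hj2⟩ := strF h.F (x := a) (by grind) a4
  have hpr' := h.sw2.gne hgp hgr
  obtain ⟨j, hjb, hja⟩ := C.cov b a hab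
  by_cases hj : j ∈ C.T
  · rcases ed_of hj hjb hja hab with ⟨t, hh⟩ | hh
    · obtain ⟨S, c1, c2, c3, c3', c4, c5, c6⟩ := h.cutb hb' hgp hgq
      have := c4 _ _ _ _ hj2
      have hSa : S a := by grind
      have := c4 _ _ _ _ hh
      grind
    · obtain ⟨Q, q1, q2, q3, q4, q5, q6, q7⟩ := L3 hf hp1 hr1 hpr hgp hh hgr.symm (by grind) hpr' (by grind)
      have := q4 _ _ _ _ hj1
      have hQb : Q b := by clear hj2 hga hgq t3; grind
      have := q4 _ _ _ _ hj2
      grind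
  · obtain ⟨S, b1, b2, b3, b4, b5, b6, b7⟩ := L3R hf hp1 hr1 hpr hgp hj (by
          rintro rfl; have := (h.F.mem (x := a)).1 hja; grind) hjb hja hab hgr.symm hpr'
    have := b5 _ _ _ _ hj1
    grind

end
end Ctx
end Cov3

namespace Cov3
set_option linter.unusedSectionVars false
set_option linter.unusedVariables false

lemma inj_count {V : Type} [Fintype V] (A B : V → Prop) [DecidablePred A] [DecidablePred B] (R : V → V → Prop)
    (hR : ∀ u, A u → ∃ x, B x ∧ R u x) (hinj : ∀ u u' x, R u x → R u' x → u = u') :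
    (Finset.univ.filter A).card ≤ (Finset.univ.filter B).card := by
  choose! F hF using hR
  apply Finset.card_le_card_of_injOn F
  · intro u hu
    simp at hu ⊢
    exact (hF u hu).1
  · intro u hu u' hu' heq
    simp at hu hu'
    have := (hF u hu).2
    rw [heq] at this
    exact hinj _ _ _ this (hF u' hu').2

namespace Ctx
variable {V I : Type} [DecidableEq V] [DecidableEq I] {C : Ctx V I}

variable (C) in
def RR (p u x : V) : Prop := ∃ h, C.Ed h p u x ∧ ∀ g, C.Fl g p x → g = h

lemma RR.inj {p u u' x : V} (h : C.RR p u x) (h' : C.RR p u' x) : u = u' := by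
  obtain ⟨i, hi, hi'⟩ := h
  obtain ⟨j, hj, hj'⟩ := h'
  have := hj' _ hi.fl
  subst this
  have := hi.det hj
  grind

section
variable {f : I} {p q r : V} (h : C.CS f p q r)
include h

lemma CS.I1 (hno : ∀ x, x ≠ p → x ≠ q → x ≠ r → 
    ¬ (C.Wk p x ∧ C.Wk q x) ∧ ¬ (C.Wk q x ∧ C.Wk r x) ∧ ¬ (C.Wk p x ∧ C.Wk r x)) {u : V}
    (hu : u ≠ p ∧ u ≠ q ∧ u ≠ r) (hq : C.Wk q u) : 
    ∃ x, (x ≠ p ∧ x ≠ q ∧ x ≠ r ∧ C.Wk p x) ∧ C.RR p u x := by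
  obtain ⟨j, x, hj⟩ := strF h.F hu (by grind)
  obtain ⟨_, n1, n2, n3, w1, w2, w3, d1, d2, d3⟩ := id h
  have hx : x ≠ p ∧ x ≠ q ∧ x ≠ r ∧ C.Wk p x := by grind
  refine ⟨x, hx, j, hj, ?_⟩
  intro g hg
  by_contra hne
  obtain ⟨gq, hgq⟩ := hq
  obtain ⟨Q, a1, a2, a3, a4, a5, a6⟩ := h.col hu.2.1 hg hj hgq hne
  obtain ⟨j1, t1, hj1⟩ := strF h.F.rot.rot (x := u) (by grind) (by have := hno u; have := hgq.wk; grind)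
  obtain ⟨j2, t2, hj2⟩ := strF h.F.rot.rot (x := x) (by grind) (by grind)
  have := a5 _ _ _ _ hj1
  have := a5 _ _ _ _ hj2
  clear hno hg
  grind

open Classical in
lemma CS.caseI1 [Fintype V] (hno : ∀ x, x ≠ p → x ≠ q → x ≠ r → 
    ¬ (C.Wk p x ∧ C.Wk q x) ∧ ¬ (C.Wk q x ∧ C.Wk r x) ∧ ¬ (C.Wk p x ∧ C.Wk r x)) :
    (Finset.univ.filter (fun u => u ≠ p ∧ u ≠ q ∧ u ≠ r ∧ C.Wk q u)).card + 
    (Finset.univ.filter (fun u => u ≠ p ∧ u ≠ q ∧ u ≠ r ∧ C.Wk r u)).card ≤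
    (Finset.univ.filter (fun u => u ≠ p ∧ u ≠ q ∧ u ≠ r ∧ C.Wk p u)).card := by
  rw [← Finset.card_union_of_disjoint, ← Finset.filter_or]
  · apply inj_count _ _ (C.RR p)
    · rintro u (hu | hu)
      · exact h.I1 hno ⟨hu.1, hu.2.1, hu.2.2.1⟩ hu.2.2.2
      · obtain ⟨x, hx, hx'⟩ := h.sw2.I1 (by grind) (u := u) (by grind) (by grind)
        exact ⟨x, by grind, hx'⟩
    · intro u u' x h1 h2; exact h1.inj h2
  · rw [Finset.disjoint_filter]
    grind

lemma CS.caseI [Fintype V] (hX : ∃ x, x ≠ p ∧ x ≠ q ∧ x ≠ r)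
   (hno : ∀ x, ¬ C.X1 p q r x) (hno' : ∀ x, ¬ C.X1 q r p x) (hno'' : ∀ x, ¬ C.X1 r p q x) : False := by
  classical
  have hn : ∀ x, x ≠ p → x ≠ q → x ≠ r → 
    ¬ (C.Wk p x ∧ C.Wk q x) ∧ ¬ (C.Wk q x ∧ C.Wk r x) ∧ ¬ (C.Wk p x ∧ C.Wk r x) := by
    intro x h1 h2 h3
    have := F3 h.F (x := x)
    have := hno x
    have := hno' x
    have := hno'' x
    unfold X1 at *
    grind
  have k1 := h.caseI1 hn
  have k2 := h.rot.caseI1 (by grind)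
  have k3 := h.rot.rot.caseI1 (by grind)
  have e1 : ∀ y, (Finset.univ.filter (fun u => u ≠ q ∧ u ≠ r ∧ u ≠ p ∧ C.Wk y u)) = (Finset.univ.filter (fun u => u ≠ p ∧ u ≠ q ∧ u ≠ r ∧ C.Wk y u)) := by
    intro y; ext u; simp; tauto
  have e2 : ∀ y, (Finset.univ.filter (fun u => u ≠ r ∧ u ≠ p ∧ u ≠ q ∧ C.Wk y u)) = (Finset.univ.filter (fun u => u ≠ p ∧ u ≠ q ∧ u ≠ r ∧ C.Wk y u)) := by
    intro y; ext u; simp; tauto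
  rw [e1, e1, e1] at k2
  rw [e2, e2, e2] at k3
  have z1 : (Finset.univ.filter (fun u => u ≠ p ∧ u ≠ q ∧ u ≠ r ∧ C.Wk p u)).card = 0 := by omega
  rw [Finset.card_eq_zero] at z1
  have z1' : ∀ u, ¬ (u ≠ p ∧ u ≠ q ∧ u ≠ r ∧ C.Wk p u) := by
    intro u hu
    have : u ∈ (Finset.univ.filter (fun u => u ≠ p ∧ u ≠ q ∧ u ≠ r ∧ C.Wk p u)) := by simp; tauto
    rw [z1] at this; simp at this
  obtain ⟨x, hx⟩ := hX
  obtain ⟨j, t, hj⟩ := strF h.F hx (by grind)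
  obtain ⟨_, n1, n2, n3, w1, w2, w3, d1, d2, d3⟩ := id h
  have := z1' t
  grind

end
end Ctx
end Cov3

namespace Cov3
set_option linter.unusedSectionVars false
set_option linter.unusedVariables false
namespace Ctx
variable {V I : Type} [DecidableEq V] [DecidableEq I] {C : Ctx V I}

section
variable {f : I} {p q r : V} (h : C.CS f p q r)
include h

lemma CS.alpha {b : V} (hX : ∀ x y z : V, ∃ u, u ≠ p ∧ u ≠ q ∧ u ≠ r ∧ u ≠ x ∧ u ≠ y ∧ u ≠ z)
    (hb : C.X1 r p q b) (hno : ∀ x, ¬ C.X1 p q r x) (hno' : ∀ x, ¬ C.X1 q r p x) : False := by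
  have hb' := id hb
  obtain ⟨b1, b2, b3, b4, hbp, hbq⟩ := hb
  obtain ⟨_, n1, n2, n3, w1, w2, w3, d1, d2, d3⟩ := id h
  have cls : ∀ x, x ≠ p → x ≠ q → x ≠ r → C.Wk r x → C.X2 p q r x := by
    intro x h1 h2 h3 h4
    have := F3 h.F (x := x)
    have := hno x
    have := hno' x
    unfold X1 at *
    unfold X2
    grind
  have all : ∀ x, x ≠ p → x ≠ q → x ≠ r → x ≠ b → C.X2 p q r x := by
    intro x h1 h2 h3 h4
    apply cls x h1 h2 h3
    by_contra hs
    obtain ⟨j, t, hj⟩ := strF h.F.rot.rot (x := x) (by grind) hs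
    have ht : C.X2 p q r t := cls t (by grind) (by grind) (by grind) (by grind)
    obtain ⟨i, hi⟩ := h.C2 hb' ht
    have := h.rot.rot.C0 hb' hi hj.fl
    grind
  have tv : ∀ x, x ≠ p → x ≠ q → x ≠ r → x ≠ b → ∃ j, C.Ed j p x b := by
    intro x h1 h2 h3 h4
    have hx := all x h1 h2 h3 h4
    obtain ⟨j, t, hj⟩ := strF h.F (x := x) (by grind) hx.2.2.2.1
    have : t = b := by
      by_contra hne
      have := all t (by grind) (by grind) (by grind) hne
      exact this.2.2.2.1 hj.wk.1
    exact ⟨j, this ▸ hj⟩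
  have tv' : ∀ x, x ≠ p → x ≠ q → x ≠ r → x ≠ b → ∃ j, C.Ed j q x b := by
    intro x h1 h2 h3 h4
    have hx := all x h1 h2 h3 h4
    obtain ⟨j, t, hj⟩ := strF h.F.rot (x := x) (by grind) hx.2.2.2.2.1
    have : t = b := by
      by_contra hne
      have := all t (by grind) (by grind) (by grind) hne
      exact this.2.2.2.2.1 hj.wk.1
    exact ⟨j, this ▸ hj⟩
  obtain ⟨x, hx⟩ := hX b b b
  obtain ⟨y, hy⟩ := hX b x x
  obtain ⟨j1, e1⟩ := tv x (by grind) (by grind) (by grind) (by grind)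
  obtain ⟨j2, e2⟩ := tv' y (by grind) (by grind) (by grind) (by grind)
  obtain ⟨j3, e3⟩ := tv' x (by grind) (by grind) (by grind) (by grind)
  obtain ⟨S, c1, c2, c3, c3', c4, c5, c6⟩ := h.cutb hb' e1.fl e2.fl
  have := c4 _ _ _ _ e3
  clear cls all tv tv' hX hno hno'
  grind

lemma CS.b1 {a b z : V} (ha : C.X1 p q r a) (hb : C.X1 r p q b) (hz : z ≠ p ∧ z ≠ q ∧ z ≠ r) :
    C.Wk p z ∨ C.Wk q z ∨ C.Wk r z := by
  by_contra hcon
  push Not at hcon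
  obtain ⟨g, hg⟩ := hb.sw.2.2.2.2.1
  obtain ⟨g', hg'⟩ := ha.2.2.2.2.1
  obtain ⟨e1, u1⟩ := h.sw.C1 hb.sw hg (y := z) (by grind) (by grind) (by grind)
  obtain ⟨e2, u2⟩ := h.rot.C1 ha hg' (y := z) (by grind) (by grind) (by grind)
  have := u1 _ _ e2
  unfold X1 at *
  grind

lemma CS.b2 {a b y : V} (ha : C.X1 p q r a) (hb : C.X1 r p q b) (hy : C.X2 p r q y) : False := by
  obtain ⟨g, hg⟩ := hb.2.2.2.2.1
  obtain ⟨g', hg'⟩ := ha.sw.2.2.2.2.1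
  obtain ⟨y1, y2, y3, y4, y5, y6⟩ := hy
  obtain ⟨e1, u1⟩ := h.C1 hb hg (y := y) (by grind) (by grind) (by grind)
  obtain ⟨e2, u2⟩ := h.sw3.C1 ha.sw hg' (y := y) (by grind) (by grind) (by grind)
  obtain ⟨_, n1, n2, n3, w1, w2, w3, d1, d2, d3⟩ := id h
  have hqu : ∀ i x t, ¬ C.Ed i q x t := by
    intro i x t hi
    obtain ⟨i, h1⟩ | ⟨i, h1⟩ | ⟨G, hG⟩ := h.C3 ha hb
    · obtain ⟨e3, _⟩ := h.C1 hb h1.symm.fl (y := y) (by grind) (by grind) (by grind)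
      unfold X1 at *
      grind
    · obtain ⟨e3, _⟩ := h.sw3.C1 ha.sw h1.symm.fl (y := y) (by grind) (by grind) (by grind)
      unfold X1 at *
      grind
    · obtain ⟨S, c1, c2, c3, c3', c4, c5, c6⟩ := h.cutb hb hg hG.symm.fl'
      obtain ⟨S', s1, s2, s3, s3', s4, s5, s6⟩ := h.sw3.cutb ha.sw hg' hG.fl'
      have := conn (C := C) (fun x => S x ∧ S' x) (by
        intro i a b c hi
        have := c4 _ _ _ _ hi
        have := s4 _ _ _ _ hi
        grind) hi e1 ⟨c2, s2⟩
      exact s3' this.2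
  obtain ⟨j, t, hj⟩ := strF h.F.rot.rot (x := b) (by unfold X1 at *; grind) hb.2.2.2.1
  have htq : C.Wk q t := by
    by_contra hc
    obtain ⟨j', t', hj'⟩ := strF h.F.rot (x := t) (by unfold X1 at *; grind) hc
    exact hqu _ _ _ hj'
  have ht : C.X1 p q r t := by
    have := F3 h.F (x := t)
    unfold X1 at *; grind
  obtain ⟨e3, u3⟩ := h.sw3.C1 ht.sw hj.fl (y := y) (by grind) (by grind) (by grind)
  unfold X1 at *; grind

lemma CS.b3a {a b w v : V} (ha : C.X1 p q r a) (hb : C.X1 r p q b) (hv : C.X2 q r p v) {i : I} : ¬ C.Ed i a p b := by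
  intro hi
  obtain ⟨_, n1, n2, n3, w1, w2, w3, d1, d2, d3⟩ := id h
  obtain ⟨i', hi'⟩ := h.rot.C2 ha hv
  obtain ⟨g, hg⟩ := hb.2.2.2.2.2
  obtain ⟨S, c1, c2, c3, c3', c4, c5, c6⟩ := h.cutb hb hi.symm.fl hg
  have := c4 _ _ _ _ hi'
  unfold X1 X2 at *
  grind

lemma CS.b3 {a b w v : V} (ha : C.X1 p q r a) (hb : C.X1 r p q b) (hw : C.X2 p q r w) 
    (hv : C.X2 q r p v) : False := by
  obtain ⟨i, h1⟩ | ⟨i, h1⟩ | ⟨G, hG⟩ := h.C3 ha hb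
  · exact h.b3a (w := w) ha hb hv h1
  · exact h.sw3.b3a (w := w) hb.sw ha.sw hw.sw h1
  · obtain ⟨w1, w2, w3, w4, w5, w6⟩ := hw
    obtain ⟨e1, u1⟩ := h.rot.C1 ha hG.fl' (y := w) (by grind) (by grind) (by grind)
    grind

lemma CS.b4 {a b w : V} (hX : ∀ x y z : V, ∃ u, u ≠ p ∧ u ≠ q ∧ u ≠ r ∧ u ≠ x ∧ u ≠ y ∧ u ≠ z)
    (ha : C.X1 p q r a) (hb : C.X1 r p q b) (hw : C.X2 p q r w) : False := by
  obtain ⟨v, hv⟩ := hX a b w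
  have nq : ∀ c, ¬ C.X1 q r p c := fun c hc => h.sw2.b2 ha.sw hc.sw hw
  have nr : ∀ b', C.X1 r p q b' → b' = b := by
    intro b' hb'
    obtain ⟨i, hi⟩ := h.C2 hb hw
    obtain ⟨i', hi'⟩ := h.C2 hb' hw
    have := h.rot.rot.C0 hb hi hi'.fl
    grind
  obtain ⟨g, hg⟩ := ha.2.2.2.2.1
  have C1w : ∀ w, C.X2 p q r w → C.Ed g q w a ∧ ∀ j t, C.Ed j q w t → j = g := by
    intro w hw
    unfold X2 at hw
    exact h.rot.C1 ha hg (y := w) (by grind) (by grind) (by grind)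
  have np : ∀ a', C.X1 p q r a' → a' = a := by
    intro a' ha'
    obtain ⟨g', hg'⟩ := ha'.2.2.2.2.1
    unfold X2 at hw
    have := h.rot.C1 ha' hg' (y := w) (by grind) (by grind) (by grind)
    have := C1w w hw
    grind
  have nw : ∀ w', C.X2 p q r w' → w' = w := by
    intro w' hw'
    have := C1w w hw
    have := C1w w' hw'
    grind
  have hv2 : C.X2 q r p v := by
    have := nq v
    have := nr v
    have := np v
    have := nw v
    have := h.b1 ha hb (z := v) (by grind)
    have := fun hy => h.b2 ha hb (y := v) hy
    have := F3 h.F (x := v)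
    unfold X1 X2 at *
    grind
  exact h.b3 ha hb hw hv2

lemma CS.b5 {a b x : V} (hX : ∀ x y z : V, ∃ u, u ≠ p ∧ u ≠ q ∧ u ≠ r ∧ u ≠ x ∧ u ≠ y ∧ u ≠ z)
    (ha : C.X1 p q r a) (hb : C.X1 r p q b) (hx : x ≠ p ∧ x ≠ q ∧ x ≠ r) :
    C.X1 p q r x ∨ C.X1 q r p x ∨ C.X1 r p q x := by
  have := h.b1 ha hb (z := x) (by grind)
  have := fun hy => h.b2 ha hb (y := x) hy
  have := fun hy => h.b4 hX ha hb (w := x) hy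
  have := fun hy => h.sw3.b4 (by intro x y z; obtain ⟨u, hu⟩ := hX x y z; exact ⟨u, by grind⟩) hb.sw ha.sw (w := x) hy
  have := F3 h.F (x := x)
  unfold X1 X2 at *
  grind

end
end Ctx
end Cov3

namespace Cov3
set_option linter.unusedSectionVars false
set_option linter.unusedVariables false
namespace Ctx
variable {V I : Type} [DecidableEq V] [DecidableEq I] {C : Ctx V I}

variable (C) in
def pc (p b : V) : Prop := ∀ g, C.Fl g p b → ∃ t, C.Ed g b t p
variable (C) in
def ps (p b : V) : Prop := ∀ g, C.Fl g p b → ∃ t, C.Ed g p t b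

section
variable {f : I} {p q r : V} (h : C.CS f p q r)
include h

lemma CS.nt {b t : V} {i : I} (hb : C.X1 r p q b) : ¬ C.Ed i p b t := by
  intro hi
  have hb' := id hb
  obtain ⟨b1, b2, b3, b4, ⟨gp, hgp⟩, ⟨gq, hgq⟩⟩ := hb
  obtain ⟨S, c1, c2, c3, c3', c4, c5, c6⟩ := h.cutb hb' hgp hgq
  have := c4 _ _ _ _ hi
  obtain ⟨_, n1, n2, n3, w1, w2, w3, d1, d2, d3⟩ := id h
  grind

lemma CS.rS {b x : V} {g g' : I} {S : V → Prop} (hg : C.Fl g p b) (hg' : C.Fl g' q b) (hx : x ≠ p ∧ x ≠ q ∧ x ≠ r) (hxb : x ≠ b)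
    (hr : ¬ C.Wk r x) (hS : ¬ S r) 
    (hc : ∀ i a b c, C.Ed i a b c → i = g ∨ i = g' ∨ (S a ↔ S b)) : ¬ S x := by
  obtain ⟨j, t, hj⟩ := strF h.F.rot.rot (x := x) (by grind) hr
  have := hc _ _ _ _ hj
  obtain ⟨_, n1, n2, n3, w1, w2, w3, d1, d2, d3⟩ := id h
  grind

lemma CS.Q21 {b1 b2 : V} {j g2 g1' : I} (hb1 : C.X1 r p q b1) (hb2 : C.X1 r p q b2) (hne : b1 ≠ b2)
    (hj : C.Fl j b1 b2 ∨ (j ∉ C.T ∧ b1 ∈ C.e j ∧ b2 ∈ C.e j)) (h2 : C.Fl g2 p b2)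
    (h1' : C.Fl g1' q b1) : ∃ Q : V → Prop, Q p ∧ Q q ∧ ¬ Q b1 ∧ ¬ Q b2 ∧
      (∀ i a b c, C.Ed i a b c → i = g2 ∨ i = g1' ∨ (Q a ↔ Q b)) ∧ C.St Q g2 p b2 ∧ C.St Q g1' q b1 := by
  obtain ⟨hf, hp1, hq1, hr1, hpq, hpr, hqr⟩ := id h.F
  have hd := h.gne h2 h1'
  rcases hj with hj | ⟨hj, hjb1, hjb2⟩
  · have np : ∀ i t, ¬ C.Ed i p b1 t := fun i t => h.nt hb1
    have np' : ∀ i t, ¬ C.Ed i p b2 t := fun i t => h.nt hb2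
    have nq : ∀ i t, ¬ C.Ed i q b1 t := fun i t => h.sw.nt hb1.sw
    have nq' : ∀ i t, ¬ C.Ed i q b2 t := fun i t => h.sw.nt hb2.sw
    obtain ⟨_, n1, n2, n3, w1, w2, w3, d1, d2, d3⟩ := id h
    obtain ⟨Q, a1, a2, a3, a4, a5, a6, a7⟩ := L3 hf hp1 hq1 hpq h2 (Fl.symm hj) h1'.symm
      (by unfold X1 at *; grind) hd (by unfold X1 at *; grind)
    obtain ⟨j1, t1, hj1⟩ := strF h.F.rot.rot (x := b1) (by unfold X1 at *; grind) hb1.2.2.2.1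
    obtain ⟨j2, t2, hj2⟩ := strF h.F.rot.rot (x := b2) (by unfold X1 at *; grind) hb2.2.2.2.1
    have e1 : Q r ↔ Q b1 := by
      have := a4 _ _ _ _ hj1
      unfold X1 at *
      grind
    have e2 : Q r ↔ Q b2 := by
      have := a4 _ _ _ _ hj2
      unfold X1 at *
      grind
    refine ⟨Q, a1, a2, by grind, by grind, ?_, a5, a7.symm⟩
    intro i a b c hi
    have := a4 _ _ _ _ hi
    clear hj1 hj2 np np' nq nq' n1 n2 n3 h1' h2 a5 a7
    grind
  · obtain ⟨Q, a1, a2, a3, a4, a5, a6, a7⟩ := L3R hf hp1 hq1 hpq h2 hj (by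
      rintro rfl; have := (h.F.mem (x := b1)).1 hjb1; unfold X1 at *; grind) hjb2 hjb1 hne.symm h1'.symm hd
    exact ⟨Q, a1, a2, a4, a3, a5, a6, a7.symm⟩

lemma CS.same {b1 b2 : V} {j g1 g2 : I} (hb1 : C.X1 r p q b1) (hb2 : C.X1 r p q b2) (hne : b1 ≠ b2)
    (hj : C.Fl j b1 b2 ∨ (j ∉ C.T ∧ b1 ∈ C.e j ∧ b2 ∈ C.e j)) (h1 : C.Fl g1 p b1) (h2 : C.Fl g2 p b2) :
    (∃ t, C.Ed g1 p t b1) ↔ (∃ t, C.Ed g2 b2 t p) := by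
  obtain ⟨g1', h1'⟩ := hb1.2.2.2.2.2
  obtain ⟨Q, a1, a2, a3, a4, a5, a6, a7⟩ := h.Q21 hb1 hb2 hne hj h2 h1'
  obtain ⟨S, c1, c2, c3, c3', c4, c5, c6⟩ := h.cutb hb1 h1 h1'
  have hS2 : ¬ S b2 := h.rS h1 h1' (by unfold X1 at *; grind) hne.symm hb2.2.2.2.1 c3' c4
  have hg12 : g1 ≠ g2 := by rintro rfl; grind
  have e1 := h.gne h1 h1'
  have e2 := h.gne h2 h1'
  obtain ⟨x, y, z, hE, m1, m2, m3, m4⟩ := h1'.inout a7 c6 a2 a3 c2 c3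
  have k1 : ∃ x y z, C.Ed g1 x y z ∧ (z = b1 ↔ ¬ ((S x ∧ Q x) ↔ (S y ∧ Q y))) ∧ (z = b1 ∨ z = p) ∧ (z = b1 → x = p) := by
    obtain ⟨t, ht | ht⟩ := id h1
    · refine ⟨_, _, _, ht, ?_⟩
      have := a5 _ _ _ _ ht
      grind
    · refine ⟨_, _, _, ht, ?_⟩
      have := a5 _ _ _ _ ht
      grind
  have k2 : ∃ x y z, C.Ed g2 x y z ∧ (z = b2 ↔ ¬ ((S x ∧ Q x) ↔ (S y ∧ Q y))) ∧ (z = b2 ∨ z = p) ∧ (z = p → x = b2) := by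
    obtain ⟨t, ht | ht⟩ := id h2
    · refine ⟨_, _, _, ht, ?_⟩
      have := c4 _ _ _ _ ht
      grind
    · refine ⟨_, _, _, ht, ?_⟩
      have := c4 _ _ _ _ ht
      grind
  obtain ⟨x1, y1, z1, E1, l1, l2, l3⟩ := k1
  obtain ⟨x2, y2, z2, E2, o1, o2, o3⟩ := k2
  have hp := par3 (C := C) (fun x => S x ∧ Q x) E1 E2 hE hg12 e1 e2 (by
    intro i a b c hi
    have := c4 _ _ _ _ hi
    have := a5 _ _ _ _ hi
    grind)
  have q1 : p ≠ b1 := by unfold X1 at *; grind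
  have q2 : p ≠ b2 := by unfold X1 at *; grind
  have r1 : (∃ t, C.Ed g1 p t b1) ↔ z1 = b1 := by
    constructor
    · grind
    · intro e; exact ⟨y1, by rw [← l3 e, ← e]; exact E1⟩
  have r2 : (∃ t, C.Ed g2 b2 t p) ↔ z2 = p := by
    constructor
    · grind
    · intro e; exact ⟨y2, by rw [← o3 e, ← e]; exact E2⟩
  rw [r1, r2]
  grind

lemma CS.dt {b1 t : V} {j gp gr : I} (hb : C.X1 r p q b1) (ht : C.X1 p q r t) (hj : C.Fl j b1 t)
    (hjp : p ∉ C.e j) (hjr : r ∉ C.e j) (hgp : C.Fl gp p b1) (hgr : C.Fl gr r t) : C.Ed gr r b1 t := by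
  by_contra hcon
  obtain ⟨hf, hp1, hq1, hr1, hpq, hpr, hqr⟩ := id h.F
  obtain ⟨_, n1, n2, n3, w1, w2, w3, d1, d2, d3⟩ := id h
  have ne1 : gp ≠ j := by rintro rfl; exact hjp hgp.cont.1
  have ne2 : gr ≠ j := by rintro rfl; exact hjr hgr.cont.1
  obtain ⟨Q, a1, a2, a3, a4, a5, a6, a7⟩ := L3 hf hp1 hr1 hpr hgp hj hgr.symm ne1 (h.sw2.gne hgp hgr) ne2.symm
  obtain ⟨j1, t1, hj1⟩ := strF h.F.rot.rot (x := b1) (by unfold X1 at *; grind) hb.2.2.2.1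
  obtain ⟨j2, t2, hj2⟩ := strF h.F (x := t) (by unfold X1 at *; grind) ht.2.2.2.1
  have ne3 : j1 ≠ j := by rintro rfl; exact hjr hj1.2.2.1
  have ne4 : j2 ≠ j := by rintro rfl; exact hjp hj2.2.2.1
  have hQb : Q b1 := by
    have := a4 _ _ _ _ hj1
    clear hj2 a4
    unfold X1 at *
    grind
  have := a4 _ _ _ _ hj2
  clear a4
  unfold X1 at *
  grind

lemma CS.dj {b1 b2 : V} (hall : ∀ x, x ≠ p → x ≠ q → x ≠ r → C.X1 p q r x ∨ C.X1 q r p x ∨ C.X1 r p q x)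
    (hb1 : C.X1 r p q b1) (hb2 : C.X1 r p q b2) (hne : b1 ≠ b2) : 
    ∃ c1 c2 j, C.X1 r p q c1 ∧ C.X1 r p q c2 ∧ c1 ≠ c2 ∧ (C.Fl j c1 c2 ∨ (j ∉ C.T ∧ c1 ∈ C.e j ∧ c2 ∈ C.e j)) := by
  obtain ⟨j, hj1, hj2⟩ := C.cov b1 b2 hne
  by_cases hj : j ∈ C.T
  swap
  · exact ⟨b1, b2, j, hb1, hb2, hne, Or.inr ⟨hj, hj1, hj2⟩⟩
  rcases ed_of hj hj1 hj2 hne with ⟨t, hh⟩ | hh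
  swap
  · exact ⟨b1, b2, j, hb1, hb2, hne, Or.inl hh⟩
  have hb1' := id hb1
  have hb2' := id hb2
  obtain ⟨b11, b12, b13, b14, ⟨gp, hgp⟩, ⟨gq, hgq⟩⟩ := hb1
  obtain ⟨b21, b22, b23, b24, ⟨hp, hhp⟩, ⟨hq, hhq⟩⟩ := hb2
  have hq1 : ∀ g g', C.Fl g p b1 → C.Fl g' q b1 → ¬ C.Ed g b1 b2 p ∧ ¬ C.Ed g' b1 b2 q := by
    intro g g' k1 k2
    obtain ⟨S, c1, c2, c3, c3', c4, c5, c6⟩ := h.cutb hb1' k1 k2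
    have hS2 : ¬ S b2 := h.rS k1 k2 (by grind) hne.symm b24 c3' c4
    grind
  have tp : t ≠ p := by rintro rfl; exact (hq1 j gq hh.fl' hgq).1 hh
  have tq : t ≠ q := by rintro rfl; exact (hq1 gp j hgp hh.fl').2 hh
  have tr : t ≠ r := by grind
  have hm : ∀ x, x ∈ C.e j → x = b1 ∨ x = b2 ∨ x = t := by
    intro x hx
    obtain ⟨_, _, m1, m2, m3, m4, m5, m6⟩ := hh
    exact four m1 m2 m3 hx m4 m5 m6
  have mp : p ∉ C.e j := by intro hx; have := hm _ hx; grind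
  have mq : q ∉ C.e j := by intro hx; have := hm _ hx; grind
  have mr : r ∉ C.e j := by intro hx; have := hm _ hx; grind
  rcases hall t tp tq tr with ht | ht | ht
  · obtain ⟨gr, hgr⟩ := ht.2.2.2.2.2
    have := h.dt hb1' ht hh.fl mp mr hgp hgr
    have := h.dt hb2' ht hh.symm.fl mp mr hhp hgr
    grind
  · obtain ⟨gr, hgr⟩ := ht.2.2.2.2.1
    have := h.sw.dt hb1'.sw ht.sw hh.fl mq mr hgq hgr
    have := h.sw.dt hb2'.sw ht.sw hh.symm.fl mq mr hhq hgr
    grind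
  · exact ⟨b1, t, j, hb1', ht, hh.ne.2.1, Or.inl hh.fl⟩

lemma CS.ty {b1 b2 : V} {j : I} (hb1 : C.X1 r p q b1) (hb2 : C.X1 r p q b2) (hne : b1 ≠ b2)
    (hj : C.Fl j b1 b2 ∨ (j ∉ C.T ∧ b1 ∈ C.e j ∧ b2 ∈ C.e j)) :
    (C.pc p b1 ∧ C.ps p b2) ∨ (C.ps p b1 ∧ C.pc p b2) := by
  obtain ⟨g1, h1⟩ := hb1.2.2.2.2.1
  obtain ⟨g2, h2⟩ := hb2.2.2.2.2.1
  have k := fun g1 g2 h1 h2 => h.same (g1 := g1) (g2 := g2) hb1 hb2 hne hj h1 h2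
  have d1 : ∀ g, C.Fl g p b1 → ((∃ t, C.Ed g p t b1) ↔ ¬ (∃ t, C.Ed g b1 t p)) := by
    intro g hg; obtain ⟨t, ht | ht⟩ := id hg <;> unfold X1 at * <;> grind
  have d2 : ∀ g, C.Fl g p b2 → ((∃ t, C.Ed g p t b2) ↔ ¬ (∃ t, C.Ed g b2 t p)) := by
    intro g hg; obtain ⟨t, ht | ht⟩ := id hg <;> unfold X1 at * <;> grind
  by_cases c : ∃ t, C.Ed g1 p t b1
  · right
    have c2 := (k _ _ h1 h2).1 c
    exact ⟨fun g hg => (k _ _ hg h2).2 c2, fun g hg => (k _ _ h1 hg).1 c⟩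
  · left
    have c2 : ¬ ∃ t, C.Ed g2 b2 t p := fun hc => c ((k _ _ h1 h2).2 hc)
    constructor
    · intro g hg
      by_contra hc
      exact c2 ((k _ _ hg h2).1 ((d1 g hg).2 hc))
    · intro g hg
      rw [d2 g hg]
      intro hc
      exact c ((k _ _ h1 hg).2 hc)

lemma CS.diff {b1 b2 : V} (hall : ∀ x, x ≠ p → x ≠ q → x ≠ r → C.X1 p q r x ∨ C.X1 q r p x ∨ C.X1 r p q x)
    (hb1 : C.X1 r p q b1) (hb2 : C.X1 r p q b2) (hne : b1 ≠ b2) : 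
    ∃ b b', C.X1 r p q b ∧ C.X1 r p q b' ∧ C.pc p b ∧ C.ps p b' ∧ 
      ((C.pc q b ∧ C.ps q b') ∨ (C.ps q b ∧ C.pc q b')) := by
  obtain ⟨c1, c2, j, k1, k2, k3, k4⟩ := h.dj hall hb1 hb2 hne
  have t1 := h.ty k1 k2 k3 k4
  have t2 := h.sw.ty k1.sw k2.sw k3 k4
  rcases t1 with t1 | t1
  · exact ⟨c1, c2, k1, k2, t1.1, t1.2, by tauto⟩
  · exact ⟨c2, c1, k2, k1, t1.2, t1.1, by tauto⟩

end
end Ctx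
end Cov3

namespace Cov3
set_option linter.unusedSectionVars false
set_option linter.unusedVariables false
namespace Ctx
variable {V I : Type} [DecidableEq V] [DecidableEq I] {C : Ctx V I}

section
variable {f : I} {p q r : V} (h : C.CS f p q r)
include h

open Classical in
lemma CS.noq [Fintype V] {b1 b2 : V} (hall : ∀ x, x ≠ p → x ≠ q → x ≠ r → C.X1 p q r x ∨ C.X1 q r p x ∨ C.X1 r p q x)
    (hq : ∀ x, ¬ C.X1 q r p x)
    (hb1 : C.X1 r p q b1) (hb2 : C.X1 r p q b2) (hne : b1 ≠ b2) : False := by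
  obtain ⟨b, b', hb, hb', hpc, _⟩ := h.diff hall hb1 hb2 hne
  obtain ⟨_, n1, n2, n3, w1, w2, w3, d1, d2, d3⟩ := id h
  have i1 : (Finset.univ.filter (C.X1 r p q)).card ≤ (Finset.univ.filter (C.X1 p q r)).card := by
    apply inj_count _ _ (C.RR r)
    · intro u hu
      obtain ⟨j, t, hj⟩ := strF h.F.rot.rot (x := u) (by unfold X1 at *; grind) hu.2.2.2.1
      refine ⟨t, ?_, j, hj, ?_⟩
      · have := hall t (by grind) (by grind) (by grind)
        have := hq t
        unfold X1 at *
        grind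
      · intro g hg
        exact h.rot.rot.C0 hu hj hg
    · intro u u' x h1 h2; exact h1.inj h2
  have i2 : (Finset.univ.filter (C.X1 p q r)).card ≤ (Finset.univ.filter (fun x => C.X1 r p q x ∧ x ≠ b)).card := by
    apply inj_count _ _ (C.RR p)
    · intro u hu
      obtain ⟨j, t, hj⟩ := strF h.F (x := u) (by unfold X1 at *; grind) hu.2.2.2.1
      refine ⟨t, ?_, j, hj, ?_⟩
      · have := hall t (by grind) (by grind) (by grind)
        have := hq t
        constructor
        · unfold X1 at *
          grind
        · rintro rfl
          have := hpc _ hj.fl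
          grind
      · intro g hg
        exact h.C0 hu hj hg
    · intro u u' x h1 h2; exact h1.inj h2
  have : (Finset.univ.filter (fun x => C.X1 r p q x ∧ x ≠ b)).card < (Finset.univ.filter (C.X1 r p q)).card := by
    apply Finset.card_lt_card
    refine ⟨?_, ?_⟩
    · intro x hx; simp at hx ⊢; exact hx.1
    · intro hs
      have := hs (x := b) (by simp; exact hb)
      simp at this
  omega

lemma CS.T3 {a b c : V} {i : I} (ha : C.X1 p q r a) (hb : C.X1 r p q b) (hc : C.X1 q r p c)
    (hi : C.Ed i a b q) : C.pc p b ∧ C.pc r a := by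
  have key : ∀ gp gr, C.Fl gp p b → C.Fl gr r a → (∃ t, C.Ed gp b t p) ∧ (∃ t, C.Ed gr a t r) := by
    intro gp gr hgp hgr
    obtain ⟨S, c1, c2, c3, c3', c4, c5, c6⟩ := h.cutb hb hgp hi.symm.fl'
    obtain ⟨S', s1, s2, s3, s3', s4, s5, s6⟩ := h.sw3.cutb ha.sw hgr hi.fl'
    obtain ⟨j, t, hj⟩ := strF h.F.rot (x := c) (by unfold X1 at *; grind) hc.2.2.2.1
    have x1 : S a := by grind
    have x2 : S' b := by grind
    have ne1 := h.sw2.gne hgp hgr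
    have ne2 := h.gne hgp hi.fl'
    have ne3 := h.sw3.gne hgr hi.fl'
    have k1 : ∃ x y z, C.Ed gp x y z ∧ (z = p ↔ ¬ ((S x ∧ S' x) ↔ (S y ∧ S' y))) ∧ (z = p → x = b) := by
      obtain ⟨t, ht | ht⟩ := id hgp
      · refine ⟨_, _, _, ht, ?_⟩
        have := s4 _ _ _ _ ht
        grind
      · refine ⟨_, _, _, ht, ?_⟩
        have := s4 _ _ _ _ ht
        grind
    have k2 : ∃ x y z, C.Ed gr x y z ∧ (z = r ↔ ¬ ((S x ∧ S' x) ↔ (S y ∧ S' y))) ∧ (z = r → x = a) := by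
      obtain ⟨t, ht | ht⟩ := id hgr
      · refine ⟨_, _, _, ht, ?_⟩
        have := c4 _ _ _ _ ht
        grind
      · refine ⟨_, _, _, ht, ?_⟩
        have := c4 _ _ _ _ ht
        grind
    obtain ⟨y1, y2, y3, E1, l1, l2⟩ := k1
    obtain ⟨z1, z2, z3, E2, o1, o2⟩ := k2
    have hcr : ∀ i a b c, C.Ed i a b c → i = gp ∨ i = gr ∨ ((S a ∧ S' a) ↔ (S b ∧ S' b)) := by
      intro i a b c hi
      have := c4 _ _ _ _ hi
      have := s4 _ _ _ _ hi
      clear l1 l2 o1 o2 E1 E2 hj hgp hgr c4 s4 c5 s5 c6 s6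
      grind
    have hp := par2 (C := C) (fun x => S x ∧ S' x) E1 E2 ne1 hcr
    have hz : ¬ ((S y1 ∧ S' y1) ↔ (S y2 ∧ S' y2)) := by
      intro hz
      have := conn (C := C) (fun x => S x ∧ S' x) (by
        intro i a b c hi
        have := hcr _ _ _ _ hi
        have := hi.det (a' := y1) (b' := y2) (c' := y3)
        have := hi.det (a' := z1) (b' := z2) (c' := z3)
        clear hcr c4 s4 c5 c6 s5 s6
        grind) hj hi ⟨c2, s2⟩
      exact s3 this.2
    have e1 : y3 = p := l1.2 hz
    have e2 : z3 = r := o1.2 (by grind)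
    exact ⟨⟨y2, by rw [← l2 e1, ← e1]; exact E1⟩, ⟨z2, by rw [← o2 e2, ← e2]; exact E2⟩⟩
  obtain ⟨gp, hgp⟩ := hb.2.2.2.2.1
  obtain ⟨gr, hgr⟩ := ha.2.2.2.2.2
  exact ⟨fun g hg => (key g gr hg hgr).1, fun g hg => (key gp g hgp hg).2⟩

lemma CS.T2 {a b : V} {i : I} (ha : C.X1 p q r a) (hb : C.X1 r p q b) (hpc : C.pc p b)
    (hi : C.Ed i r b a) : C.ps q b := by
  intro gq hgq
  by_contra hcon
  obtain ⟨s, hs⟩ : ∃ s, C.Ed gq b s q := by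
    obtain ⟨s, hs | hs⟩ := id hgq
    · exact absurd ⟨s, hs⟩ hcon
    · exact ⟨s, hs⟩
  obtain ⟨gp, hgp⟩ := hb.2.2.2.2.1
  obtain ⟨s', hs'⟩ := hpc _ hgp
  obtain ⟨ga, hga⟩ := ha.2.2.2.2.1
  obtain ⟨S, c1, c2, c3, c3', c4, c5, c6⟩ := h.cutb hb hgp hgq
  obtain ⟨S', s1, s2, s3, s3', s4, s5, s6⟩ := h.sw3.cutb ha.sw hi.fl hga
  obtain ⟨j, t, hj⟩ := strF h.F (x := a) (by unfold X1 at *; grind) ha.2.2.2.1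
  have x1 : S a := by
    have := c4 _ _ _ _ hj
    obtain ⟨_, n1, n2, n3, w1, w2, w3, d1, d2, d3⟩ := id h
    unfold X1 at *
    grind
  have x2 : ¬ S' b := by grind
  have ne1 := h.sw2.gne hgp hi.fl
  have ne2 := h.gne hgp hga
  have ne3 := h.sw3.gne hi.fl hgq
  have ne4 := h.sw3.gne hi.fl hga
  clear hj hcon
  have k1 : ∀ x y z, C.Ed gp x y z → ((S' x ∧ ¬ S x) ↔ (S' y ∧ ¬ S y)) := by
    intro x y z hE
    grind
  have k2 : ∀ x y z, C.Ed gq x y z → ((S' x ∧ ¬ S x) ↔ (S' y ∧ ¬ S y)) := by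
    intro x y z hE
    grind
  have k3 : ∀ x y z, C.Ed ga x y z → ((S' x ∧ ¬ S x) ↔ (S' y ∧ ¬ S y)) := by
    by_cases e : ga = gq
    · rw [e]; exact k2
    · intro x y z hE
      have := c4 _ _ _ _ hE
      grind
  have := par1 (C := C) (fun x => S' x ∧ ¬ S x) hi (by
    intro i a b c hi
    have := c4 _ _ _ _ hi
    have := s4 _ _ _ _ hi
    have := k1 a b c
    have := k2 a b c
    have := k3 a b c
    clear k1 k2 k3 c4 s4 hs hs'
    grind)
  grind

lemma CS.finA1 {a b c : V} (ha : C.X1 p q r a) (hb : C.X1 r p q b) (hc : C.X1 q r p c)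
    (h1 : C.pc p b) (h2 : C.pc q b) : C.pc r a := by
  obtain ⟨i, hi⟩ | ⟨i, hi⟩ | ⟨i, hi⟩ := h.C3 ha hb
  · have := h1 _ hi.symm.fl
    grind
  · have := h.T2 ha hb h1 hi.symm
    obtain ⟨g, hg⟩ := hb.2.2.2.2.2
    obtain ⟨t, ht⟩ := this _ hg
    obtain ⟨t', ht'⟩ := h2 _ hg
    unfold X1 at *
    grind
  · exact (h.T3 ha hb hc hi).2

lemma CS.finA {a b c : V} (hall : ∀ x, x ≠ p → x ≠ q → x ≠ r → C.X1 p q r x ∨ C.X1 q r p x ∨ C.X1 r p q x)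
    (ha : C.X1 p q r a) (hb : C.X1 r p q b) (hc : C.X1 q r p c)
    (h1 : C.pc p b) (h2 : C.pc q b) : False := by
  obtain ⟨j, t, hj⟩ := strF h.F.rot.rot (x := b) (by unfold X1 at *; grind) hb.2.2.2.1
  obtain ⟨_, n1, n2, n3, w1, w2, w3, d1, d2, d3⟩ := id h
  have htr : C.pc r t := by
    rcases hall t (by grind) (by grind) (by grind) with ht | ht | ht
    · exact h.finA1 ht hb hc h1 h2
    · exact h.sw.finA1 ht.sw hb.sw ha.sw h2 h1
    · have := ht.2.2.2.1
      grind
  have := htr _ hj.fl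
  grind

/-- trav(r,b) ends in X_p -/
lemma CS.finB1 {a b b' c : V} (hall : ∀ x, x ≠ p → x ≠ q → x ≠ r → C.X1 p q r x ∨ C.X1 q r p x ∨ C.X1 r p q x)
    (ha : C.X1 p q r a) (hb : C.X1 r p q b) (hb' : C.X1 r p q b') (hc : C.X1 q r p c)
    (h1 : C.pc p b) (h3 : C.ps p b') (h4 : C.pc q b') : ∃ i a, C.X1 p q r a ∧ C.Ed i r b a := by
  obtain ⟨j, t, hj⟩ := strF h.F.rot.rot (x := b) (by unfold X1 at *; grind) hb.2.2.2.1
  obtain ⟨_, n1, n2, n3, w1, w2, w3, d1, d2, d3⟩ := id h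
  rcases hall t (by grind) (by grind) (by grind) with ht | ht | ht
  · exact ⟨j, t, ht, hj⟩
  · exfalso
    have hbb : b ≠ b' := by
      rintro rfl
      obtain ⟨g, hg⟩ := hb.2.2.2.2.1
      obtain ⟨t, ht⟩ := h3 _ hg
      obtain ⟨t', ht'⟩ := h1 _ hg
      unfold X1 at *
      grind
    obtain ⟨i, hi⟩ | ⟨i, hi⟩ | ⟨i, hi⟩ := h.sw.C3 ht.sw hb'.sw
    · have := h4 _ hi.symm.fl
      grind
    · have := h.rot.rot.C0 hb hj hi.symm.fl
      grind
    · have := (h.sw.T3 ht.sw hb'.sw ha.sw hi).2 _ hj.fl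
      grind
  · have := ht.2.2.2.1
    grind

lemma CS.finB2 {a b b' c : V} {i : I}
    (ha : C.X1 p q r a) (hb : C.X1 r p q b) (hb' : C.X1 r p q b') (hc : C.X1 q r p c)
    (h1 : C.pc p b) (h3 : C.ps p b') (hi : C.Ed i r b a) : ∃ i3, C.Ed i3 a p b' := by
  obtain ⟨g, hg⟩ := hb'.2.2.2.2.1
  obtain ⟨t, ht⟩ := h3 _ hg
  have hbb : b ≠ b' := by
    rintro rfl
    obtain ⟨t', ht'⟩ := h1 _ hg
    unfold X1 at *
    grind
  obtain ⟨i', hi'⟩ | ⟨i', hi'⟩ | ⟨i', hi'⟩ := h.C3 ha hb'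
  · exact ⟨i', hi'⟩
  · have := h.rot.rot.C0 hb hi hi'.symm.fl
    grind
  · have := (h.T3 ha hb' hc hi').1 _ hg
    unfold X1 at *
    grind

lemma CS.finB3 {a b' c : V} {i3 i : I} (hb' : C.X1 r p q b') (hc : c ≠ b') (h3 : C.Ed i3 a p b') (hi : C.Ed i a p c) : False := by
  obtain ⟨g, hg⟩ := hb'.2.2.2.2.2
  obtain ⟨S, c1, c2, c3, c3', c4, c5, c6⟩ := h.cutb hb' h3.symm.fl hg
  have := c4 _ _ _ _ hi
  have := h.gne hi.symm.fl hg
  grind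

lemma CS.finB {a b b' c : V} (hall : ∀ x, x ≠ p → x ≠ q → x ≠ r → C.X1 p q r x ∨ C.X1 q r p x ∨ C.X1 r p q x)
    (ha : C.X1 p q r a) (hb : C.X1 r p q b) (hb' : C.X1 r p q b') (hc : C.X1 q r p c)
    (h1 : C.pc p b) (h2 : C.ps q b) (h3 : C.ps p b') (h4 : C.pc q b') : False := by
  obtain ⟨i1, a1, ha1, hi1⟩ := h.finB1 hall ha hb hb' hc h1 h3 h4
  have hall' : ∀ x, x ≠ q → x ≠ p → x ≠ r → C.X1 q p r x ∨ C.X1 p r q x ∨ C.X1 r q p x := by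
    intro x k1 k2 k3
    rcases hall x k2 k1 k3 with k | k | k
    · exact Or.inr (Or.inl k.sw)
    · exact Or.inl k.sw
    · exact Or.inr (Or.inr k.sw)
  obtain ⟨i2, c1, hc1, hi2⟩ := h.sw.finB1 hall' hc.sw hb'.sw hb.sw ha.sw h4 h2 h1
  obtain ⟨i3, hi3⟩ := h.finB2 ha1 hb hb' hc h1 h3 hi1
  obtain ⟨i4, hi4⟩ := h.sw.finB2 hc1 hb'.sw hb.sw ha.sw h4 h2 hi2
  obtain ⟨i, hi⟩ | ⟨i, hi⟩ | ⟨i, hi⟩ := h.sw2.C3 ha1.sw hc1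
  · exact h.finB3 hb' (by unfold X1 at *; grind) hi3 hi
  · exact h.sw.finB3 hb.sw (by unfold X1 at *; grind) hi4 hi
  · have := h.rot.rot.C0 hb hi1 hi.fl'
    grind

end
end Ctx
end Cov3

namespace Cov3
set_option linter.unusedSectionVars false
set_option linter.unusedVariables false
namespace Ctx
variable {V I : Type} [DecidableEq V] [DecidableEq I] {C : Ctx V I}

section
variable {f : I} {p q r : V} (h : C.CS f p q r)
include h

lemma CS.fin3 {a b1 b2 c : V} (hall : ∀ x, x ≠ p → x ≠ q → x ≠ r → C.X1 p q r x ∨ C.X1 q r p x ∨ C.X1 r p q x)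
    (ha : C.X1 p q r a) (hb1 : C.X1 r p q b1) (hb2 : C.X1 r p q b2) (hne : b1 ≠ b2) (hc : C.X1 q r p c) : False := by
  obtain ⟨b, b', hb, hb', k1, k2, ⟨k3, k4⟩ | ⟨k3, k4⟩⟩ := h.diff hall hb1 hb2 hne
  · exact h.finA hall ha hb hc k1 k3
  · exact h.finB hall ha hb hb' hc k1 k3 k2 k4

lemma CS.beta [Fintype V] {a b : V} (hX : ∀ x y z : V, ∃ u, u ≠ p ∧ u ≠ q ∧ u ≠ r ∧ u ≠ x ∧ u ≠ y ∧ u ≠ z)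
    (ha : C.X1 p q r a) (hb : C.X1 r p q b) : False := by
  have hall : ∀ x, x ≠ p → x ≠ q → x ≠ r → C.X1 p q r x ∨ C.X1 q r p x ∨ C.X1 r p q x :=
    fun x h1 h2 h3 => h.b5 hX ha hb ⟨h1, h2, h3⟩
  by_cases hq : ∃ c, C.X1 q r p c
  · obtain ⟨c, hc⟩ := hq
    obtain ⟨u, u1, u2, u3, u4, u5, u6⟩ := hX a b c
    rcases hall u u1 u2 u3 with hu | hu | hu
    · exact h.rot.fin3 (fun x h1 h2 h3 => by have := hall x h3 h1 h2; tauto) hc ha hu u4.symm hb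
    · exact h.rot.rot.fin3 (fun x h1 h2 h3 => by have := hall x h2 h3 h1; tauto) hb hc hu u6.symm ha
    · exact h.fin3 hall ha hb hu u5.symm hc
  · push Not at hq
    obtain ⟨u, u1, u2, u3, u4, u5, u6⟩ := hX a b b
    rcases hall u u1 u2 u3 with hu | hu | hu
    · refine h.sw3.noq (fun x h1 h2 h3 => ?_) (fun x hx => hq x hx.sw) ha.sw hu.sw u4.symm
      rcases hall x h3 h2 h1 with k | k | k
      · exact Or.inr (Or.inr k.sw)
      · exact Or.inr (Or.inl k.sw)
      · exact Or.inl k.sw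
    · exact hq _ hu
    · exact h.noq hall hq hb hu u5.symm

lemma CS.final [Fintype V] (hX : ∀ x y z : V, ∃ u, u ≠ p ∧ u ≠ q ∧ u ≠ r ∧ u ≠ x ∧ u ≠ y ∧ u ≠ z) : False := by
  have hX1 : ∀ x y z : V, ∃ u, u ≠ q ∧ u ≠ r ∧ u ≠ p ∧ u ≠ x ∧ u ≠ y ∧ u ≠ z := by
    intro x y z; obtain ⟨u, hu⟩ := hX x y z; exact ⟨u, by tauto⟩
  have hX2 : ∀ x y z : V, ∃ u, u ≠ r ∧ u ≠ p ∧ u ≠ q ∧ u ≠ x ∧ u ≠ y ∧ u ≠ z := by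
    intro x y z; obtain ⟨u, hu⟩ := hX x y z; exact ⟨u, by tauto⟩
  by_cases h1 : ∃ a, C.X1 p q r a
  · obtain ⟨a, ha⟩ := h1
    have k1 : ∀ b, ¬ C.X1 r p q b := fun b hb => h.beta hX ha hb
    have k2 : ∀ b, ¬ C.X1 q r p b := fun b hb => h.rot.beta hX1 hb ha
    exact h.rot.alpha hX1 ha k2 k1
  push Not at h1
  by_cases h2 : ∃ a, C.X1 q r p a
  · obtain ⟨a, ha⟩ := h2
    have k1 : ∀ b, ¬ C.X1 r p q b := fun b hb => h.rot.rot.beta hX2 hb ha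
    exact h.rot.rot.alpha hX2 ha k1 h1
  push Not at h2
  by_cases h3 : ∃ a, C.X1 r p q a
  · obtain ⟨a, ha⟩ := h3
    exact h.alpha hX ha h1 h2
  push Not at h3
  obtain ⟨u, hu⟩ := hX p p p
  exact h.caseI ⟨u, by tauto⟩ h1 h2 h3

end

lemma Fr.cs [Fintype V] {f : I} {p q r : V} (h : C.Fr f p q r) : C.CS f p q r := by
  obtain ⟨hf, hp1, hq1, hr1, hpq, hpr, hqr⟩ := id h
  obtain ⟨f1, f2, f3, f4⟩ := F1w h
  exact ⟨h, fun i c hi => caseK h hi, fun i c hi => caseK h.rot hi, fun i c hi => caseK h.sw2 hi,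
    f1, f3, f2, hpq, hqr, hpr⟩

theorem full [Fintype V] (hV : 7 ≤ Fintype.card V) (C : Ctx V I) (f : I) : f ∈ C.T := by
  by_contra hf
  obtain ⟨p, q, r, hpq, hpr, hqr, he⟩ := Finset.card_eq_three.1 (C.h3 f)
  have hF : C.Fr f p q r := by
    refine ⟨hf, ?_, ?_, ?_, hpq, hpr, hqr⟩ <;> rw [he] <;> simp
  apply hF.cs.final
  intro x y z
  by_contra hcon
  have : (Finset.univ : Finset V) ⊆ {p, q, r, x, y, z} := by
    intro u _
    by_contra hu
    simp at hu
    exact hcon ⟨u, hu⟩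
  have := Finset.card_le_card this
  rw [Finset.card_univ] at this
  have := Finset.card_le_six (a := p) (b := q) (c := r) (d := x) (e := y) (f := z)
  omega

end Ctx
end Cov3

namespace Cov3
set_option linter.unusedSectionVars false
set_option linter.unusedVariables false
namespace Ctx
variable {V I : Type} [DecidableEq V] [DecidableEq I] {C : Ctx V I}

variable (C) in
inductive W : Finset I → V → V → Prop
  | nil (u : V) : W ∅ u u
  | cons {T : Finset I} {i : I} {u w v t : V} (hi : i ∉ T) (hJ : C.Ed i u w t) (hT : W T w v) : W (insert i T) u v

lemma W.append {T1 T2 : Finset I} {u v w : V} (h1 : C.W T1 u v) (h2 : C.W T2 v w) (hd : Disjoint T1 T2) :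
    C.W (T1 ∪ T2) u w := by
  induction h1 with
  | nil u => simpa using h2
  | cons hi hJ hT ih =>
    rw [Finset.insert_union]
    rw [Finset.disjoint_insert_left] at hd
    refine W.cons ?_ hJ (ih h2 hd.2)
    simp; exact ⟨hi, hd.1⟩

lemma W.par {T : Finset I} {u v : V} (h : C.W T u v) (S : V → Prop) :
    ∑ i ∈ T, dd C.e (ind S) i (C.tok i) = ind S u + ind S v := by
  induction h with
  | nil u => simp [zz]
  | @cons T i u w v t hi hJ hT ih =>
    rw [Finset.sum_insert hi, ih, cr_ed S hJ]
    have := zz (ind S w)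
    linear_combination this

lemma W.split {T : Finset I} {u v : V} (h : C.W T u v) {i : I} (hi : i ∈ T) {x y t : V} (hE : C.Ed i x y t) :
    ∃ T1 T2, Disjoint T1 T2 ∧ T1 ∪ T2 = T ∧ C.W T1 u x ∧ C.W T2 x v := by
  induction h with
  | nil u => simp at hi
  | @cons T j u w v t' hj hJ hT ih =>
    by_cases hij : i = j
    · subst hij
      have := hJ.det hE
      rcases this.2 with ⟨h1, h2⟩ | ⟨h1, h2⟩
      · subst h1
        exact ⟨∅, insert i T, by simp, by simp, W.nil _, W.cons hj hJ hT⟩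
      · subst h2
        refine ⟨{i}, T, by simpa using hj, by ext; simp, ?_, hT⟩
        have := W.cons (T := ∅) (by simp) hJ (W.nil w)
        simpa using this
    · have hi' : i ∈ T := by simpa [hij] using hi
      obtain ⟨T1, T2, h1, h2, h3, h4⟩ := ih hi'
      have hj1 : j ∉ T1 := fun hh => hj (h2 ▸ Finset.mem_union_left _ hh)
      have hj2 : j ∉ T2 := fun hh => hj (h2 ▸ Finset.mem_union_right _ hh)
      refine ⟨insert j T1, T2, ?_, ?_, W.cons hj1 hJ h3, h4⟩
      · rw [Finset.disjoint_insert_left]; exact ⟨hj2, h1⟩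
      · rw [Finset.insert_union, h2]

theorem euler [Fintype I] (hall : ∀ i, i ∈ C.T) (u0 : V) : ∃ u, C.W Finset.univ u u := by
  classical
  obtain ⟨T, hTm, hmax⟩ := Finset.exists_max_image (Finset.univ.filter (fun T : Finset I => ∃ u v, C.W T u v))
    Finset.card ⟨∅, by simp; exact ⟨u0, u0, W.nil _⟩⟩
  simp at hTm hmax
  obtain ⟨u, v, hW⟩ := hTm
  have ext : ∀ u v i w t, C.W T u v → C.Ed i w u t → i ∈ T := by
    intro u v i w t hW hE
    by_contra hi
    have := hmax _ _ _ (W.cons hi hE hW)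
    rw [Finset.card_insert_of_notMem hi] at this
    omega
  have ext' : ∀ u v i w t, C.W T u v → C.Ed i v w t → i ∈ T := by
    intro u v i w t hW hE
    by_contra hi
    have h1 := W.cons (T := ∅) (by simp) hE (W.nil w)
    have := hmax _ _ _ (hW.append h1 (by simpa using hi))
    rw [Finset.union_comm] at this
    simp [Finset.card_insert_of_notMem hi] at this
  have huv : u = v := by
    by_contra hne
    have h1 := hW.par (fun x => x = v)
    have h2 := C.hM.1.1.2 (ind (fun x => x = v))
    have hT : C.T = Finset.univ := by ext; simp [hall]
    rw [hT, ← Finset.sum_subset (Finset.subset_univ T), h1] at h2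
    · simp [ind, hne] at h2
    · intro i _ hi
      obtain ⟨a, b, hab⟩ := ed_ex (hall i)
      rw [cr_ed _ hab]
      have k1 : a ≠ v := by rintro rfl; exact hi (ext' _ _ _ _ _ hW hab)
      have k2 : b ≠ v := by rintro rfl; exact hi (ext' _ _ _ _ _ hW hab.symm)
      simp [ind, k1, k2]
  subst huv
  suffices hT : T = Finset.univ by exact ⟨u, hT ▸ hW⟩
  by_contra hne
  obtain ⟨i, hi⟩ : ∃ i, i ∉ T := by
    by_contra hc; push Not at hc; exact hne (by ext; simp [hc])
  have hin : ∀ j ∈ T, ∀ x y t, C.Ed j x y t → C.W T x x := by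
    intro j hj x y t hE
    obtain ⟨T1, T2, h1, h2, h3, h4⟩ := hW.split hj hE
    have := h4.append h3 h1.symm
    rwa [Finset.union_comm, h2] at this
  have hout : ∀ j, j ∉ T → ∀ x y t, C.Ed j x y t → ¬ C.W T x x := by
    intro j hj x y t hE hc
    exact hj (ext _ _ _ _ _ hc hE.symm)
  obtain ⟨a, b, hab⟩ := ed_ex (hall i)
  rcases T.eq_empty_or_nonempty with rfl | ⟨j, hj⟩
  · exact hout i hi _ _ _ hab (W.nil _)
  · obtain ⟨a', b', hab'⟩ := ed_ex (hall j)
    refine hout i hi _ _ _ hab (conn (C := C) (fun x => C.W T x x) ?_ hab' hab (hin _ hj _ _ _ hab'))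
    intro k x y z hk
    by_cases hkT : k ∈ T
    · exact iff_of_true (hin _ hkT _ _ _ hk) (hin _ hkT _ _ _ hk.symm)
    · exact iff_of_false (hout _ hkT _ _ _ hk) (hout _ hkT _ _ _ hk.symm)

lemma W.real {T : Finset I} {u v : V} (h : C.W T u v) :
    ∃ (k : ℕ) (vs : Fin (k + 1) → V) (es : Fin k → Finset V), vs 0 = u ∧ vs (Fin.last k) = v ∧
      (∀ i : Fin k, vs i.castSucc ≠ vs i.succ ∧ vs i.castSucc ∈ es i ∧ vs i.succ ∈ es i) ∧
      Multiset.ofList (List.ofFn es) = T.val.map C.e := by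
  induction h with
  | nil u => exact ⟨0, fun _ => u, Fin.elim0, rfl, rfl, fun i => i.elim0, by simp⟩
  | @cons T i u w v t hi hJ hT ih =>
    obtain ⟨k, vs, es, h1, h2, h3, h4⟩ := ih
    refine ⟨k + 1, Fin.cons u vs, Fin.cons (C.e i) es, by simp, ?_, ?_, ?_⟩
    · rw [← Fin.succ_last, Fin.cons_succ, h2]
    · intro j
      refine Fin.cases ?_ ?_ j
      · simp [h1]; exact ⟨hJ.ne.1, hJ.2.2.1, hJ.2.2.2.1⟩
      · intro j
        rw [← Fin.succ_castSucc, Fin.cons_succ, Fin.cons_succ, Fin.cons_succ]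
        exact h3 j
    · rw [Finset.insert_val_of_notMem hi, Multiset.map_cons, ← h4, List.ofFn_succ]
      simp

end Ctx
end Cov3


theorem covering3Hypergraph_eulerian_of_order_ge_7 {V : Type} [Fintype V] [DecidableEq V]
    (hord : 7 ≤ Fintype.card V) (E : Multiset (Finset V))
    (hH : IsCoveringHypergraph E 2 3) :
    IsEulerian E := by
  classical
  obtain ⟨hne, h3, hcov⟩ := hH
  obtain ⟨l, rfl⟩ := Quot.exists_rep E
  have hVne : Nonempty V := by
    rw [← Fintype.card_pos_iff]; omega
  obtain ⟨u0⟩ := hVne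
  let e : Fin l.length → Finset V := l.get
  have h3' : ∀ i, (e i).card = 3 := fun i => h3 _ (by
    show l.get i ∈ l
    exact List.get_mem l i)
  have hcov' : ∀ x y, x ≠ y → ∃ i, x ∈ e i ∧ y ∈ e i := by
    intro x y hxy
    obtain ⟨g, hg, hs⟩ := hcov {x, y} (Finset.card_pair hxy)
    have hg' : g ∈ l := hg
    obtain ⟨i, hi⟩ := List.get_of_mem hg'
    exact ⟨i, by show x ∈ l.get i; rw [hi]; exact hs (by simp), by show y ∈ l.get i; rw [hi]; exact hs (by simp)⟩
  have hex : ∃ T tok, Cov3.MaxG e T tok := by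
    obtain ⟨T, hT, hmax⟩ := Finset.exists_max_image
      (Finset.univ.filter (fun T : Finset (Fin l.length) => ∃ tok, Cov3.Good e T tok)) Finset.card
      ⟨∅, by
        simp only [Finset.mem_filter, Finset.mem_univ, true_and]
        refine ⟨fun _ => u0, ⟨by simp, by simp⟩, ?_⟩
        intro S _ _ i hi
        simp at hi⟩
    simp only [Finset.mem_filter, Finset.mem_univ, true_and] at hT hmax
    obtain ⟨tok, htok⟩ := hT
    exact ⟨T, tok, htok, fun T' tok' h => hmax T' ⟨tok', h⟩⟩
  obtain ⟨T, tok, hM⟩ := hex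
  let C : Cov3.Ctx V (Fin l.length) := ⟨e, T, tok, h3', hM, hcov'⟩
  obtain ⟨u, hu⟩ := Cov3.Ctx.euler (C := C) (fun i => Cov3.Ctx.full hord C i) u0
  obtain ⟨k, vs, es, h1, h2, h4, h5⟩ := hu.real
  refine ⟨k, vs, es, ⟨by rw [h1, h2], h4⟩, ?_⟩
  show Multiset.ofList (List.ofFn es) = Multiset.ofList l
  rw [h5, Fin.univ_val_map]
  show ((List.ofFn l.get : List (Finset V)) : Multiset (Finset V)) = l
  rw [List.ofFn_get]
end

section
/- Let k ≥ 4 and let H be a 2-covering k-hypergraph with at least two edges. Then H is quasi-eulerian. -/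
/-- An Euler family: a finite collection of nontrivial closed strict trails, pairwise
anchor-disjoint (no two trails traverse a common vertex), whose traversed edges jointly
form the edge multiset `E`, so every edge is traversed exactly once and the trails are
pairwise edge-disjoint. -/
def IsEulerFamily {V : Type} (E : Multiset (Finset V)) (n : ℕ) (len : Fin n → ℕ)
    (v : (i : Fin n) → Fin (len i + 1) → V)
    (e : (i : Fin n) → Fin (len i) → Finset V) : Prop :=
  (∀ i, 1 ≤ len i) ∧ (∀ i, IsClosedWalk (len i) (v i) (e i)) ∧
    (∀ i j, i ≠ j → ∀ a b, v i a ≠ v j b) ∧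
    (∑ i, walkEdges (e i)) = E

/-- A hypergraph is quasi-eulerian if it admits an Euler family. -/
def IsQuasiEulerian {V : Type} (E : Multiset (Finset V)) : Prop :=
  ∃ n len v e, IsEulerFamily E n len v e

theorem qe_num (k s τ c : ℕ) (hk : 4 ≤ k) (hs : 2 ≤ s) (h1 : (k-2)*s + τ + 2 ≤ c)
    (h2 : c ≤ k * s) (h3 : 2 * (c*(c-1)) ≤ (2*s+τ)*(k*(k-1))) : False := by
  obtain ⟨u, rfl⟩ : ∃ u, k = u + 4 := ⟨k-4, by omega⟩
  obtain ⟨p, rfl⟩ : ∃ p, s = p + 2 := ⟨s-2, by omega⟩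
  have e1 : u + 4 - 2 = u + 2 := by omega
  have e2 : u + 4 - 1 = u + 3 := by omega
  rw [e1] at h1
  rw [e2] at h3
  have hτ : τ + 2 ≤ 2 * (p+2) := by nlinarith
  obtain ⟨q, hq⟩ : ∃ q, 2*(p+2) = τ + 2 + q := ⟨_, (Nat.add_sub_of_le hτ).symm⟩
  set c0 := (u+2)*(p+2)+τ+1 with hc0
  have h4 : (c0+1)*c0 ≤ c*(c-1) := Nat.mul_le_mul (by omega) (by omega)
  have h5 : 2*((c0+1)*c0) ≤ (2*(p+2)+τ)*((u+4)*(u+3)) := by omega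
  rw [hc0] at h5
  clear h1 h2 h3 h4 
  have hτ2 : τ ≤ 2*p+2 := by omega
  zify at *
  have a1 : (0:ℤ) ≤ (2*p+2-τ) := by linarith
  nlinarith [mul_nonneg a1 (by positivity : (0:ℤ) ≤ (u:ℤ)^2+4*u+4), (by positivity : (0:ℤ) ≤ (u:ℤ)*p*τ), (by positivity : (0:ℤ) ≤ (u:ℤ)^2*p^2), (by positivity : (0:ℤ) ≤ (u:ℤ)*p^2), (by positivity : (0:ℤ) ≤ (p:ℤ)*τ), (by positivity : (0:ℤ) ≤ (u:ℤ)*τ), (by positivity : (0:ℤ) ≤ (u:ℤ)^2*p), (by positivity : (0:ℤ) ≤ (u:ℤ)*p), (by positivity : (0:ℤ) ≤ (u:ℤ)^2), (by positivity : (0:ℤ) ≤ (τ:ℤ)^2), (by positivity : (0:ℤ) ≤ (p:ℤ)^2)]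


theorem qe_tutte {N : Type} [Fintype N] [DecidableEq N] (G : SimpleGraph N)
    (hev : Even (Fintype.card N))
    (h : ∀ (U : Finset N) (O : Finset (Finset N)), (∀ K ∈ O, Odd K.card) →
      (∀ K ∈ O, ∀ x ∈ K, x ∉ U) → (∀ K ∈ O, ∀ L ∈ O, ∀ x, x ∈ K → x ∈ L → K = L) →
      (∀ K ∈ O, ∀ x ∈ K, ∀ y, y ∉ U → G.Adj x y → y ∈ K) → O.card ≤ U.card + 1) :
    ∃ M : G.Subgraph, M.IsPerfectMatching := by
  classical
  rw [SimpleGraph.tutte]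
  intro u hu
  unfold SimpleGraph.IsTutteViolator at hu
  set H := ((⊤ : G.Subgraph).deleteVerts u) with hH
  have hpar := SimpleGraph.odd_ncard_oddComponents H.coe
  have hc : Nat.card H.verts + u.ncard = Fintype.card N := by
    have : H.verts = uᶜ := by ext; simp [hH]
    rw [this, Nat.card_coe_set_eq, add_comm, Set.ncard_add_ncard_compl, Nat.card_eq_fintype_card]
  let S : H.coe.ConnectedComponent → Finset N := fun c => (Subtype.val '' c.supp).toFinset
  have hS : ∀ c x, x ∈ S c ↔ ∃ hx : x ∈ H.verts, H.coe.connectedComponentMk ⟨x, hx⟩ = c := by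
    intro c x; simp [S]
  have hv : ∀ x, x ∈ H.verts ↔ x ∉ u := by intro x; simp [hH]
  have hSinj : Function.Injective S := by
    intro c d hcd
    obtain ⟨⟨x, hx⟩, hxc⟩ := c.exists_rep
    have hxc : H.coe.connectedComponentMk ⟨x, hx⟩ = c := hxc
    subst hxc
    have : x ∈ S d := by rw [← hcd, hS]; exact ⟨hx, rfl⟩
    rw [hS] at this
    exact this.2
  have key := h u.toFinset (H.coe.oddComponents.toFinset.image S) ?_ ?_ ?_ ?_
  · rw [Finset.card_image_of_injective _ hSinj, ← Set.ncard_eq_toFinset_card', ← Set.ncard_eq_toFinset_card'] at key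
    have h1 : H.coe.oddComponents.ncard = u.ncard + 1 := by omega
    rw [h1] at hpar
    rcases hev with ⟨r, hr⟩
    rw [Nat.odd_iff, Nat.odd_iff] at hpar
    omega
  · intro K hK
    simp only [Finset.mem_image, Set.mem_toFinset] at hK
    obtain ⟨c, hc, rfl⟩ := hK
    have : (S c).card = c.supp.ncard := by
      simp only [S]
      rw [← Set.ncard_eq_toFinset_card', Set.ncard_image_of_injective _ Subtype.val_injective]
    rw [this]; exact hc
  · intro K hK x hx
    simp only [Finset.mem_image] at hK
    obtain ⟨c, hc, rfl⟩ := hK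
    rw [hS] at hx
    simpa using (hv x).1 hx.1
  · intro K hK L hL x hx hy
    simp only [Finset.mem_image] at hK hL
    obtain ⟨c, hc, rfl⟩ := hK
    obtain ⟨d, hd, rfl⟩ := hL
    rw [hS] at hx hy
    rw [← hx.2, ← hy.2]
  · intro K hK x hx y hy hxy
    simp only [Finset.mem_image] at hK
    obtain ⟨c, hc, rfl⟩ := hK
    rw [hS] at hx ⊢
    have hy' : y ∈ H.verts := (hv y).2 (by simpa using hy)
    refine ⟨hy', ?_⟩
    rw [← hx.2]
    apply SimpleGraph.ConnectedComponent.sound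
    apply SimpleGraph.Adj.reachable
    have h1 := (hv x).1 hx.1
    have h2 := (hv y).1 hy'
    simp [hH, h1, h2, hxy.symm]


def QGraph {ι V : Type} (k : ℕ) (φ : ι → Fin k → V) : SimpleGraph (ι × (Fin k ⊕ Fin (k-2))) where
  Adj x y := match x, y with
    | (i, .inl a), (j, .inl b) => i ≠ j ∧ φ i a = φ j b
    | (i, .inl _), (j, .inr _) => i = j
    | (i, .inr _), (j, .inl _) => i = j
    | (_, .inr _), (_, .inr _) => False
  symm := ⟨by
    rintro ⟨i, a | a⟩ ⟨j, b | b⟩ h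
    · exact ⟨h.1.symm, h.2.symm⟩
    · exact h.symm
    · exact h.symm
    · exact h⟩
  loopless := ⟨by
    rintro ⟨i, a | a⟩ h
    · exact h.1 rfl
    · exact h⟩

theorem qe_choice_of_matching {ι V : Type} [Fintype ι] [DecidableEq ι] [DecidableEq V]
    (k : ℕ) (hk : 4 ≤ k) (φ : ι → Fin k → V)
    (h : ∃ M : (QGraph k φ).Subgraph, M.IsPerfectMatching) :
    ∃ a b : ι → Fin k, (∀ i, a i ≠ b i) ∧
      ∑ i, (Pi.single (φ i (a i)) 1 + Pi.single (φ i (b i)) 1 : V → ZMod 2) = 0 := by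
  classical
  obtain ⟨M, hM⟩ := h
  rw [SimpleGraph.Subgraph.isPerfectMatching_iff] at hM
  choose m hm hmu using fun x => (hM x)
  have hinv : ∀ x, m (m x) = x := fun x => (hmu (m x) x (hm x).symm).symm
  have hadj : ∀ x, (QGraph k φ).Adj x (m x) := fun x => M.adj_sub (hm x)
  have hd : ∀ i d, ∃ a, m (i, .inr d) = (i, .inl a) := by
    intro i d
    have := hadj (i, .inr d)
    rcases hx : m (i, .inr d) with ⟨j, b | b⟩
    · rw [hx] at this
      have : i = j := this
      subst this
      exact ⟨b, rfl⟩
    · rw [hx] at this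
      exact this.elim
  choose p hp using hd
  have hpinj : ∀ i, Function.Injective (p i) := by
    intro i d d' h
    have : m (i, .inr d) = m (i, .inr d') := by rw [hp, hp, h]
    have := congrArg m this
    rw [hinv, hinv] at this
    simpa using this
  let sel : ι → Finset (Fin k) := fun i => (Finset.univ.image (p i))ᶜ
  have hsel : ∀ i, (sel i).card = 2 := by
    intro i
    simp only [sel]
    rw [Finset.card_compl, Finset.card_image_of_injective _ (hpinj i)]
    simp; omega
  have hsel2 : ∀ i a, a ∈ sel i → ∃ j b, m (i, .inl a) = (j, .inl b) ∧ b ∈ sel j ∧ j ≠ i ∧ φ j b = φ i a := by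
    intro i a ha
    have h1 := hadj (i, .inl a)
    rcases hx : m (i, .inl a) with ⟨j, b | b⟩
    · rw [hx] at h1
      refine ⟨j, b, rfl, ?_, h1.1.symm, h1.2.symm⟩
      simp only [sel, Finset.mem_compl, Finset.mem_image, Finset.mem_univ, true_and]
      rintro ⟨d, rfl⟩
      have := hinv (i, .inl a)
      rw [hx, ← hp, hinv] at this
      simp at this
    · rw [hx] at h1
      have h1 : i = j := h1
      subst h1
      exfalso
      simp only [sel, Finset.mem_compl, Finset.mem_image, Finset.mem_univ, true_and] at ha
      apply ha
      refine ⟨b, ?_⟩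
      have := hinv (i, .inl a)
      rw [hx, hp] at this
      simpa using this
  choose a b hab hsab using fun i => Finset.card_eq_two.1 (hsel i)
  refine ⟨a, b, hab, ?_⟩
  have e1 : ∀ i, (Pi.single (φ i (a i)) 1 + Pi.single (φ i (b i)) 1 : V → ZMod 2) =
      ∑ c ∈ sel i, Pi.single (φ i c) 1 := by
    intro i; rw [hsab i, Finset.sum_pair (hab i)]
  simp_rw [e1]
  rw [Finset.sum_sigma']
  choose J B hJ1 hJ2 hJ3 hJ4 using hsel2
  refine Finset.sum_involution (fun x hx => ⟨J x.1 x.2 (by simpa using hx), B x.1 x.2 (by simpa using hx)⟩) ?_ ?_ ?_ ?_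
  · rintro ⟨i, c⟩ hx
    simp only
    rw [hJ4]
    ext; exact CharTwo.add_self_eq_zero _
  · rintro ⟨i, c⟩ hx _ he
    exact hJ3 i c (by simpa using hx) (congrArg Sigma.fst he)
  · rintro ⟨i, c⟩ hx
    simpa using hJ2 _ _ _
  · rintro ⟨i, c⟩ hx
    simp only
    have hx' : c ∈ sel i := by simpa using hx
    have h1 := hJ1 _ _ (hJ2 i c hx')
    rw [← hJ1 i c hx', hinv] at h1
    simp only [Prod.mk.injEq, Sum.inl.injEq] at h1
    exact Sigma.ext h1.1.symm (heq_of_eq h1.2.symm)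


inductive QTr {V : Type} : V → V → Multiset (Finset V) → Set V → Prop
  | nil (u : V) : QTr u u 0 {u}
  | cons (u v w : V) (f : Finset V) (F : Multiset (Finset V)) (A : Set V) :
      u ≠ v → u ∈ f → v ∈ f → QTr v w F A → QTr u w (f ::ₘ F) (insert u A)

theorem QTr.left_mem {V : Type} {u w : V} {F A} (h : QTr u w F A) : u ∈ A := by
  cases h <;> simp

theorem QTr.trans {V : Type} {u v w : V} {F G A B} (h : QTr u v F A) (h' : QTr v w G B) :
    QTr u w (F + G) (A ∪ B) := by
  induction h with
  | nil u =>
    have := h'.left_mem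
    simpa [Set.insert_eq_of_mem this] using h'
  | cons u v w f F A h1 h2 h3 h4 ih =>
    have := QTr.cons u v _ f _ _ h1 h2 h3 (ih h')
    simpa [Set.insert_union] using this

theorem QTr.single {V : Type} {u v : V} {f : Finset V} (h : u ≠ v) (hu : u ∈ f) (hv : v ∈ f) :
    QTr u v {f} {u, v} := QTr.cons u v v f 0 {v} h hu hv (QTr.nil v)

theorem QTr.symm {V : Type} {u w : V} {F A} (h : QTr u w F A) : QTr w u F A := by
  induction h with
  | nil u => exact QTr.nil u
  | cons u v w f F A h1 h2 h3 h4 ih =>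
    have := ih.trans (QTr.single h1.symm h3 h2)
    have hv := h4.left_mem
    have e : A ∪ {v, u} = insert u A := by
      ext x; simp; grind
    rw [e] at this
    rw [← Multiset.singleton_add, add_comm]
    exact this

theorem QTr.split {V : Type} {u w : V} {F A} (h : QTr u w F A) (x : V) (hx : x ∈ A) :
    ∃ F1 F2 A1 A2, QTr u x F1 A1 ∧ QTr x w F2 A2 ∧ F = F1 + F2 ∧ A = A1 ∪ A2 := by
  induction h with
  | nil u =>
    have : x = u := by simpa using hx
    subst this
    exact ⟨0, 0, {x}, {x}, QTr.nil x, QTr.nil x, by simp, by simp⟩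
  | cons u v w f F A h1 h2 h3 h4 ih =>
    by_cases hxu : x = u
    · subst hxu
      refine ⟨0, f ::ₘ F, {x}, insert x A, QTr.nil x, QTr.cons x v w f F A h1 h2 h3 h4, by simp, ?_⟩
      ext; simp
    · have : x ∈ A := by
        rcases hx with h | h
        · exact absurd h hxu
        · exact h
      obtain ⟨F1, F2, A1, A2, p, q, rfl, rfl⟩ := ih this
      exact ⟨f ::ₘ F1, F2, insert u A1, A2, QTr.cons u v x f F1 A1 h1 h2 h3 p, q, by simp,
        by simp [Set.insert_union]⟩

theorem QTr.rotate {V : Type} {u : V} {F A} (h : QTr u u F A) (x : V) (hx : x ∈ A) :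
    QTr x x F A := by
  obtain ⟨F1, F2, A1, A2, p, q, rfl, rfl⟩ := h.split x hx
  rw [add_comm, Set.union_comm]
  exact q.trans p

theorem QTr.toFin {V : Type} {u w : V} {F A} (h : QTr u w F A) :
    ∃ (n : ℕ) (v : Fin (n + 1) → V) (e : Fin n → Finset V), v 0 = u ∧ v (Fin.last n) = w ∧
      (∀ i : Fin n, v i.castSucc ≠ v i.succ ∧ v i.castSucc ∈ e i ∧ v i.succ ∈ e i) ∧
      walkEdges e = F ∧ ∀ i, v i ∈ A := by
  induction h with
  | nil u => exact ⟨0, fun _ => u, Fin.elim0, rfl, rfl, fun i => i.elim0, by simp [walkEdges], by simp⟩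
  | cons u v w f F A h1 h2 h3 h4 ih =>
    obtain ⟨n, g, e, g0, g1, g2, g3, g4⟩ := ih
    refine ⟨n + 1, Fin.cons u g, Fin.cons f e, by simp, ?_, ?_, ?_, ?_⟩
    · rw [← Fin.succ_last, Fin.cons_succ, g1]
    · intro i
      refine Fin.cases ?_ (fun j => ?_) i
      · simp [g0, h1, h2, h3]
      · rw [← Fin.succ_castSucc]
        simpa using g2 j
    · subst g3
      simp [walkEdges, List.ofFn_succ]
    · intro i
      refine Fin.cases ?_ (fun j => ?_) i
      · simp
      · simpa using Or.inr (g4 j)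

structure QTup (V : Type) where
  u : V
  w : V
  F : Multiset (Finset V)
  A : Set V
  h : QTr u w F A
  ne : F ≠ 0

theorem QTup.dec {V : Type} [DecidableEq V] (n : ℕ) : ∀ (M : Multiset (QTup V)), M.card = n →
    (M.map (fun t => (Pi.single t.u 1 + Pi.single t.w 1 : V → ZMod 2))).sum = 0 →
    ∃ M' : Multiset (QTup V), (∀ t ∈ M', t.u = t.w) ∧ (M'.map QTup.F).sum = (M.map QTup.F).sum ∧
      ∀ a b R, M' = a ::ₘ b ::ₘ R → Disjoint a.A b.A := by
  have two : ∀ a : V → ZMod 2, a + a = 0 := fun a => by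
    ext x; exact CharTwo.add_self_eq_zero _
  induction n with
  | zero =>
    intro M hM _
    rw [Multiset.card_eq_zero] at hM
    subst hM
    refine ⟨0, by simp, by simp, ?_⟩
    intro a b R h
    simp at h
  | succ n ih =>
    intro M hM hs
    by_cases hcl : ∀ t ∈ M, t.u = t.w
    · by_cases hd : ∀ a b R, M = a ::ₘ b ::ₘ R → Disjoint a.A b.A
      · exact ⟨M, hcl, rfl, hd⟩
      · push Not at hd
        obtain ⟨a, b, R, rfl, hd⟩ := hd
        rw [Set.not_disjoint_iff] at hd
        obtain ⟨x, hxa, hxb⟩ := hd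
        have ea := hcl a (by simp)
        have eb := hcl b (by simp)
        have ta := a.h
        have tb := b.h
        rw [← ea] at ta
        rw [← eb] at tb
        let c : QTup V := ⟨x, x, a.F + b.F, a.A ∪ b.A, (ta.rotate x hxa).trans (tb.rotate x hxb), by
          simp [a.ne]⟩
        obtain ⟨M', h1, h2, h3⟩ := ih (c ::ₘ R) (by simpa using hM) (by
          simp only [Multiset.map_cons, Multiset.sum_cons] at hs ⊢
          rw [← ea, ← eb, two, two, zero_add, zero_add] at hs
          rw [two, zero_add, hs])
        exact ⟨M', h1, by rw [h2]; simp [c, add_assoc], h3⟩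
    · push Not at hcl
      obtain ⟨a, haM, hne⟩ := hcl
      obtain ⟨R, rfl⟩ := Multiset.exists_cons_of_mem haM
      have hex : ∃ b ∈ R, b.u = a.u ∨ b.w = a.u := by
        by_contra hcon
        push Not at hcon
        have := congrFun hs a.u
        have hz : ∀ R : Multiset (QTup V), (∀ b ∈ R, b.u ≠ a.u ∧ b.w ≠ a.u) →
          (R.map (fun t => (Pi.single t.u 1 + Pi.single t.w 1 : V → ZMod 2))).sum a.u = 0 := by
          intro R
          induction R using Multiset.induction_on with
          | empty => simp
          | cons b R ihR =>
            intro hb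
            have h1 := hb b (by simp)
            have h2 := ihR (fun c hc => hb c (by simp [hc]))
            simp only [Multiset.map_cons, Multiset.sum_cons, Pi.add_apply]
            rw [h2, Pi.single_eq_of_ne h1.1.symm, Pi.single_eq_of_ne h1.2.symm]
            simp
        simp only [Multiset.map_cons, Multiset.sum_cons, Pi.add_apply] at this
        rw [hz R hcon, Pi.single_eq_same, Pi.single_eq_of_ne hne] at this
        simp at this
      obtain ⟨b, hb, hbu⟩ := hex
      obtain ⟨R, rfl⟩ := Multiset.exists_cons_of_mem hb
      obtain ⟨z, tz, hz⟩ : ∃ z, QTr a.u z b.F b.A ∧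
          (Pi.single b.u 1 + Pi.single b.w 1 : V → ZMod 2) = Pi.single a.u 1 + Pi.single z 1 := by
        rcases hbu with h | h
        · exact ⟨b.w, h ▸ b.h, by rw [h]⟩
        · exact ⟨b.u, h ▸ b.h.symm, by rw [h, add_comm]⟩
      let c : QTup V := ⟨a.w, z, a.F + b.F, a.A ∪ b.A, a.h.symm.trans tz, by simp [a.ne]⟩
      obtain ⟨M', h1, h2, h3⟩ := ih (c ::ₘ R) (by simpa using hM) (by
          simp only [Multiset.map_cons, Multiset.sum_cons] at hs ⊢
          rw [hz] at hs
          rw [← hs]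
          have := two (Pi.single a.u 1)
          calc _ = (Pi.single a.u 1 + Pi.single a.u 1) + (Pi.single a.w 1 + Pi.single z 1 + _) := by
                rw [this, zero_add]
            _ = _ := by abel)
      exact ⟨M', h1, by rw [h2]; simp [c, add_assoc], h3⟩

theorem qe_of_choice {V : Type} [DecidableEq V] {ι : Type} [Fintype ι] (f : ι → Finset V)
    (a b : ι → V) (hab : ∀ i, a i ≠ b i) (ha : ∀ i, a i ∈ f i) (hb : ∀ i, b i ∈ f i)
    (hs : ∑ i, (Pi.single (a i) 1 + Pi.single (b i) 1 : V → ZMod 2) = 0) :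
    IsQuasiEulerian (Finset.univ.val.map f) := by
  let t : ι → QTup V := fun i => ⟨a i, b i, {f i}, _, QTr.single (hab i) (ha i) (hb i), by simp⟩
  obtain ⟨M', h1, h2, h3⟩ := QTup.dec _ (Finset.univ.val.map t) rfl (by
    rw [Multiset.map_map]; exact hs)
  induction M' using Quotient.inductionOn with
  | h l =>
  have hp : l.Pairwise (fun a b => Disjoint a.A b.A) := by
    rw [List.pairwise_iff_forall_sublist]
    intro a b hab
    have : (↑[a, b] : Multiset (QTup V)) ≤ ↑l := Multiset.coe_le.2 hab.subperm
    obtain ⟨R, hR⟩ := Multiset.le_iff_exists_add.1 this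
    refine h3 a b R (Eq.trans hR ?_)
    rw [← Multiset.cons_coe, ← Multiset.cons_coe, Multiset.coe_nil]
    simp
  have hl : ∀ i : Fin l.length, ∃ (n : ℕ) (v : Fin (n + 1) → V) (e : Fin n → Finset V),
      IsClosedWalk n v e ∧ walkEdges e = (l.get i).F ∧ ∀ j, v j ∈ (l.get i).A := by
    intro i
    obtain ⟨n, v, e, g0, g1, g2, g3, g4⟩ := (l.get i).h.toFin
    refine ⟨n, v, e, ⟨?_, g2⟩, g3, g4⟩
    rw [g0, g1]
    exact h1 _ (by simp)
  choose n v e H1 H2 H3 using hl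
  refine ⟨l.length, n, v, e, ?_, H1, ?_, ?_⟩
  · intro i
    by_contra hc
    have hF := (l.get i).ne
    rw [← H2 i] at hF
    apply hF
    have h0 : n i = 0 := by omega
    rw [← Multiset.card_eq_zero]
    simp [walkEdges, h0]
  · intro i j hij x y hxy
    have hd : Disjoint (l.get i).A (l.get j).A := by
      rcases lt_or_gt_of_ne hij with h | h
      · exact List.pairwise_iff_get.1 hp i j h
      · exact (List.pairwise_iff_get.1 hp j i h).symm
    exact Set.disjoint_left.1 hd (H3 i x) (hxy ▸ H3 j y)
  · simp_rw [H2]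
    have e1 : ((Finset.univ.val.map t).map QTup.F).sum = Finset.univ.val.map f := by
      rw [Multiset.map_map]
      rw [← Multiset.sum_map_singleton (Finset.univ.val.map f), Multiset.map_map]; rfl
    rw [← e1, ← h2]
    have : l = List.ofFn l.get := by simp
    conv_rhs => rw [this]
    simp

theorem qe_core {ι V : Type} [Fintype ι] [DecidableEq ι] [DecidableEq V]
    (k : ℕ) (hk : 4 ≤ k) (φ : ι → Fin k → V) (inj : ∀ i, Function.Injective (φ i))
    (cov : ∀ x y, x ≠ y → ∃ i a b, φ i a = x ∧ φ i b = y) (h2 : 2 ≤ Fintype.card ι)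
    (U : Finset (ι × (Fin k ⊕ Fin (k-2)))) (O : Finset (Finset (ι × (Fin k ⊕ Fin (k-2)))))
    (hodd : ∀ K ∈ O, Odd K.card) (hU : ∀ K ∈ O, ∀ x ∈ K, x ∉ U)
    (hdis : ∀ K ∈ O, ∀ L ∈ O, ∀ x, x ∈ K → x ∈ L → K = L)
    (hc1 : ∀ K ∈ O, ∀ i a j b, (i, Sum.inl a) ∈ K → (j, Sum.inl b) ∉ U → φ i a = φ j b →
      (j, Sum.inl b) ∈ K)
    (hc2 : ∀ K ∈ O, ∀ i a d, (i, Sum.inl a) ∈ K → (i, Sum.inr d) ∉ U → (i, Sum.inr d) ∈ K)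
    (hc3 : ∀ K ∈ O, ∀ i a d, (i, Sum.inr d) ∈ K → (i, Sum.inl a) ∉ U → (i, Sum.inl a) ∈ K) :
    O.card ≤ U.card + 1 := by
  classical
  by_contra hcon
  have hcon : U.card + 2 ≤ O.card := by omega
  have hne : Nonempty ι := Fintype.card_pos_iff.1 (by omega)
  let fib : Finset (ι × (Fin k ⊕ Fin (k-2))) → ι → Finset (ι × (Fin k ⊕ Fin (k-2))) :=
    fun X i => X.filter (fun x => x.1 = i)
  have mfib : ∀ X i x, x ∈ fib X i ↔ x ∈ X ∧ x.1 = i := by intro X i x; simp [fib]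
  have cfib : ∀ X, X.card = ∑ i, (fib X i).card := fun X =>
    Finset.card_eq_sum_card_fiberwise (f := Prod.fst) (t := Finset.univ) (by simp)
  have cuniv : ∀ i, (fib Finset.univ i).card = 2 * k - 2 := by
    intro i
    have : fib Finset.univ i = Finset.univ.image (fun s => (i, s)) := by
      ext ⟨j, s⟩; simp [fib, eq_comm]
    rw [this, Finset.card_image_of_injective _ (by intro a b h; simpa using h)]
    simp; omega
  have hidx : ∀ K, ∃ i, K ∈ O → Odd (fib K i).card := by
    intro K
    by_cases hK : K ∈ O
    · by_contra hc
      push Not at hc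
      have := hodd K hK
      rw [cfib] at this
      rw [← Nat.not_even_iff_odd] at this
      apply this
      apply Finset.even_sum
      intro i _
      rw [← Nat.not_odd_iff_even]
      exact (hc i).2
    · exact ⟨hne.some, fun h => absurd h hK⟩
  choose idx hidx using hidx
  have hnode : ∀ K ∈ O, ∃ s, (idx K, s) ∈ K := by
    intro K hK
    have := (hidx K hK).pos
    rw [Finset.card_pos] at this
    obtain ⟨⟨i, s⟩, hz⟩ := this
    rw [mfib] at hz
    obtain ⟨hz, rfl⟩ := hz
    exact ⟨s, hz⟩
  let D : ι → Prop := fun i => ∀ d, (i, Sum.inr d) ∈ U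
  let OS := O.filter (fun K => ∃ p : ι × Fin k, D p.1 ∧ (p.1, Sum.inl p.2) ∈ K)
  have mOS : ∀ K, K ∈ OS ↔ K ∈ O ∧ ∃ p : ι × Fin k, D p.1 ∧ (p.1, Sum.inl p.2) ∈ K := by
    intro K; simp [OS]
  have hrep : ∀ K, ∃ p : ι × Fin k, K ∈ OS → D p.1 ∧ (p.1, Sum.inl p.2) ∈ K := by
    intro K
    by_cases hK : K ∈ OS
    · obtain ⟨p, hp⟩ := ((mOS K).1 hK).2
      exact ⟨p, fun _ => hp⟩
    · exact ⟨(hne.some, ⟨0, by omega⟩), fun h => absurd h hK⟩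
  choose rp hrp using hrep
  let r : Finset (ι × (Fin k ⊕ Fin (k-2))) → V := fun K => φ (rp K).1 (rp K).2
  have same : ∀ K ∈ O, ∀ L ∈ O, ∀ i a j b, (i, Sum.inl a) ∈ K → (j, Sum.inl b) ∈ L →
      φ i a = φ j b → K = L := by
    intro K hK L hL i a j b h1 h2 h3
    exact hdis K hK L hL _ (hc1 K hK i a j b h1 (hU L hL _ h2) h3) h2
  have OSO : ∀ K ∈ OS, K ∈ O := fun K hK => ((mOS K).1 hK).1
  have rinj : ∀ K ∈ OS, ∀ L ∈ OS, r K = r L → K = L := by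
    intro K hK L hL h
    exact same K (OSO K hK) L (OSO L hL) _ _ _ _ (hrp K hK).2 (hrp L hL).2 h
  let R := OS.image r
  have cR : R.card = OS.card := Finset.card_image_of_injOn (by
    intro K hK L hL h; exact rinj K hK L hL h)
  have hR : ∀ x ∈ R, ∃ K ∈ OS, r K = x ∧ ∀ j b, φ j b = x → (j, Sum.inl b) ∉ U → (j, Sum.inl b) ∈ K := by
    intro x hx
    simp only [R, Finset.mem_image] at hx
    obtain ⟨K, hK, rfl⟩ := hx
    refine ⟨K, hK, rfl, ?_⟩
    intro j b h hb
    exact hc1 K (OSO K hK) _ _ j b (hrp K hK).2 hb h.symm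
  have blob : ∀ i, ¬ D i → ∀ a0, (i, Sum.inl a0) ∉ U → ∀ K ∈ O, ∀ s, (i, s) ∈ K → ∀ y, (i, y) ∉ U →
      (i, y) ∈ K := by
    intro i hD a0 ha0 K hK s hs y hy
    simp only [D, not_forall] at hD
    obtain ⟨d0, hd0⟩ := hD
    have hd : (i, Sum.inr d0) ∈ K := by
      rcases s with a | d
      · exact hc2 K hK i a d0 hs hd0
      · exact hc2 K hK i a0 d0 (hc3 K hK i a0 d hs ha0) hd0
    rcases y with a | d
    · exact hc3 K hK i a d0 hd hy
    · exact hc2 K hK i a0 d (hc3 K hK i a0 d0 hd ha0) hy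
  have blobU : ∀ i, ¬ D i → ∀ a0, (i, Sum.inl a0) ∉ U → ∀ K ∈ O, ∀ L ∈ O, ∀ s t, (i, s) ∈ K →
      (i, t) ∈ L → K = L := by
    intro i hD a0 ha0 K hK L hL s t hs ht
    exact hdis K hK L hL _ (blob i hD a0 ha0 K hK s hs t (hU L hL _ ht)) ht
  let oS : ι → Finset (Finset (ι × (Fin k ⊕ Fin (k-2)))) :=
    fun i => (O \ OS).filter (fun K => idx K = i)
  let o : ι → ℕ := fun i => (oS i).card
  let u : ι → ℕ := fun i => (fib U i).card
  have moS : ∀ i K, K ∈ oS i ↔ (K ∈ O ∧ K ∉ OS) ∧ idx K = i := by intro i K; simp [oS]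
  have ou : ∀ i, o i + u i ≤ 2 * k - 2 := by
    intro i
    have hex : ∀ K, ∃ z, K ∈ oS i → z ∈ K ∧ z.1 = i := by
      intro K
      by_cases hK : K ∈ oS i
      · obtain ⟨⟨h1, _⟩, h3⟩ := (moS i K).1 hK
        obtain ⟨s, hs⟩ := hnode K h1
        exact ⟨_, fun _ => ⟨hs, h3⟩⟩
      · exact ⟨(hne.some, Sum.inl ⟨0, by omega⟩), fun h => absurd h hK⟩
    choose z hz using hex
    have hcard : ((oS i).image z).card = o i := Finset.card_image_of_injOn (by
      intro K hK L hL h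
      have h1 := ((moS i K).1 hK).1.1
      have h2 := ((moS i L).1 hL).1.1
      refine hdis K h1 L h2 (z K) (hz K hK).1 ?_
      have h : z K = z L := h
      rw [h]; exact (hz L hL).1)
    have hdj : Disjoint ((oS i).image z) (fib U i) := by
      rw [Finset.disjoint_left]
      intro x hx hx2
      rw [Finset.mem_image] at hx
      obtain ⟨K, hK, rfl⟩ := hx
      rw [mfib] at hx2
      exact hU K ((moS i K).1 hK).1.1 _ (hz K hK).1 hx2.1
    rw [← hcard, ← cuniv i]
    show _ + (fib U i).card ≤ _
    rw [← Finset.card_union_of_disjoint hdj]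
    apply Finset.card_le_card
    intro x hx
    rw [mfib]
    refine ⟨Finset.mem_univ _, ?_⟩
    rw [Finset.mem_union] at hx
    rcases hx with hx | hx
    · rw [Finset.mem_image] at hx
      obtain ⟨K, hK, rfl⟩ := hx
      exact (hz K hK).2
    · exact ((mfib _ _ _).1 hx).2
  let bs : ι → Finset (Fin k) := fun i => Finset.univ.filter (fun a => (i, Sum.inl a) ∈ U)
  have bu : ∀ i, (bs i).card ≤ u i := by
    intro i
    apply Finset.card_le_card_of_injOn (fun a => (i, Sum.inl a))
    · intro a ha
      have ha : a ∈ bs i := ha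
      simp only [bs, Finset.mem_filter, Finset.mem_univ, true_and] at ha
      exact (mfib _ _ _).2 ⟨ha, rfl⟩
    · intro a _ b _ h; simpa using h
  have Su : ∀ i, D i → k - 2 ≤ u i := by
    intro i hi
    have : (Finset.univ : Finset (Fin (k-2))).card ≤ u i := by
      apply Finset.card_le_card_of_injOn (fun a => (i, Sum.inr a))
      · intro a ha
        exact (mfib _ _ _).2 ⟨hi a, rfl⟩
      · intro a _ b _ h; simpa using h
    simpa using this
  have So : ∀ i, D i → o i = 0 := by
    intro i hi
    simp only [o, Finset.card_eq_zero]
    rw [Finset.eq_empty_iff_forall_notMem]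
    intro K hK
    obtain ⟨⟨h1, h2⟩, rfl⟩ := (moS i K).1 hK
    obtain ⟨s, hs⟩ := hnode K h1
    rcases s with a | d
    · exact h2 ((mOS K).2 ⟨h1, ⟨(idx K, a), hi, hs⟩⟩)
    · exact hU K h1 _ hs (hi d)
  have No : ∀ i, ¬ D i → ∀ a0, (i, Sum.inl a0) ∉ U → o i ≤ 1 := by
    intro i hD a0 ha0
    apply Finset.card_le_one.2
    intro K hK L hL
    obtain ⟨⟨h1, h2⟩, h3⟩ := (moS i K).1 hK
    obtain ⟨⟨h1', h2'⟩, h3'⟩ := (moS i L).1 hL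
    obtain ⟨s, hs⟩ := hnode K h1
    obtain ⟨t, ht⟩ := hnode L h1'
    rw [h3] at hs
    rw [h3'] at ht
    exact blobU i hD a0 ha0 K h1 L h1' s t hs ht
  have Nodd : ∀ i, ¬ D i → ∀ a0, (i, Sum.inl a0) ∉ U → o i ≠ 0 → Odd (u i) := by
    intro i hD a0 ha0 ho
    obtain ⟨K, hK⟩ := Finset.card_ne_zero.1 ho
    obtain ⟨⟨h1, h2⟩, h3⟩ := (moS i K).1 hK
    obtain ⟨s, hs⟩ := hnode K h1
    have hf := hidx K h1
    rw [h3] at hs hf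
    have e : fib Finset.univ i = fib K i ∪ fib U i := by
      ext ⟨j, y⟩
      simp only [mfib, Finset.mem_union, Finset.mem_univ, true_and]
      constructor
      · rintro rfl
        by_cases hy : (j, y) ∈ U
        · exact Or.inr ⟨hy, rfl⟩
        · exact Or.inl ⟨blob j hD a0 ha0 K h1 s hs y hy, rfl⟩
      · rintro (h | h) <;> exact h.2
    have hdj : Disjoint (fib K i) (fib U i) := by
      rw [Finset.disjoint_left]
      intro x hx hx2
      rw [mfib] at hx hx2
      exact hU K h1 _ hx.1 hx2.1
    have := cuniv i
    rw [e, Finset.card_union_of_disjoint hdj] at this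
    rw [Nat.odd_iff] at hf ⊢
    show (fib U i).card % 2 = 1
    omega
  -- a live vertex of R at i kills o
  have Rlive : ∀ i, ¬ D i → ∀ a0, (i, Sum.inl a0) ∉ U → φ i a0 ∈ R → o i = 0 := by
    intro i hD a0 ha0 hx
    obtain ⟨L, hL, -, hL2⟩ := hR _ hx
    by_contra ho
    obtain ⟨K, hK⟩ := Finset.card_ne_zero.1 ho
    obtain ⟨⟨h1, h2⟩, h3⟩ := (moS i K).1 hK
    obtain ⟨s, hs⟩ := hnode K h1
    rw [h3] at hs
    have := blobU i hD a0 ha0 K h1 L (OSO L hL) s _ hs (hL2 i a0 rfl ha0)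
    exact h2 (this ▸ hL)
  let P : ι → Finset (Fin k × Fin k) := fun i => Finset.univ.filter (fun p => p.1 ≠ p.2 ∧
    φ i p.1 ∈ R ∧ φ i p.2 ∈ R ∧ (D i ∨ (i, Sum.inl p.1) ∈ U ∨ (i, Sum.inl p.2) ∈ U))
  have mP : ∀ i p, p ∈ P i ↔ p.1 ≠ p.2 ∧
    φ i p.1 ∈ R ∧ φ i p.2 ∈ R ∧ (D i ∨ (i, Sum.inl p.1) ∈ U ∨ (i, Sum.inl p.2) ∈ U) := by
    intro i p; simp [P]
  have Pk : ∀ i, (P i).card ≤ k * (k-1) := by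
    intro i
    have : P i ⊆ (Finset.univ : Finset (Fin k)).offDiag := by
      intro p hp
      rw [mP] at hp
      simp [hp.1]
    have := Finset.card_le_card this
    rw [Finset.offDiag_card, Finset.card_univ, Fintype.card_fin] at this
    rw [Nat.mul_sub_one]; exact this
  have cross : ∀ i a b, φ i a ∈ R → φ i b ∈ R → a ≠ b → (a, b) ∈ P i := by
    intro i a b ha hb hab
    rw [mP]
    refine ⟨hab, ha, hb, ?_⟩
    by_contra hc
    push Not at hc
    obtain ⟨h1, h2, h3⟩ := hc
    obtain ⟨K, hK, hK1, hK2⟩ := hR _ ha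
    obtain ⟨L, hL, hL1, hL2⟩ := hR _ hb
    have := blobU i h1 a h2 K (OSO K hK) L (OSO L hL) _ _ (hK2 i a rfl h2) (hL2 i b rfl h3)
    rw [← this, hK1] at hL1
    exact hab (inj i hL1)
  have main : ∀ i, ¬ D i → o i ≤ u i ∧ 2 * (P i).card ≤ (u i - o i) * (k * (k-1)) := by
    intro i hD
    by_cases hI : ∀ a, (i, Sum.inl a) ∈ U
    · have hb : (bs i).card = k := by
        have : bs i = Finset.univ := by ext a; simp [bs, hI a]
        rw [this]; simp
      have h1 := bu i
      have h2 := ou i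
      have h3 : 2 ≤ u i - o i := by omega
      refine ⟨by omega, ?_⟩
      exact Nat.mul_le_mul h3 (Pk i)
    · push Not at hI
      obtain ⟨a0, ha0⟩ := hI
      have h1 := No i hD a0 ha0
      have h2 := Nodd i hD a0 ha0
      have h3 := bu i
      have hle : o i ≤ u i := by
        by_cases ho : o i = 0
        · omega
        · have := (h2 ho).pos; omega
      refine ⟨hle, ?_⟩
      by_cases hP : P i = ∅
      · rw [hP]; simp
      have hPne := Finset.nonempty_iff_ne_empty.2 hP
      by_cases hb : 2 ≤ (bs i).card
      · have h4 : 2 ≤ u i - o i := by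
          by_cases ho : o i = 0
          · omega
          · have h5 := h2 ho
            rw [Nat.odd_iff] at h5
            omega
        exact Nat.mul_le_mul h4 (Pk i)
      · have hb1 : (bs i).card ≤ 1 := by omega
        obtain ⟨⟨x, y⟩, hxy⟩ := hPne
        rw [mP] at hxy
        obtain ⟨e1, e2, e3, e4⟩ := hxy
        have mb : ∀ a, a ∈ bs i ↔ (i, Sum.inl a) ∈ U := by intro a; simp [bs]
        obtain ⟨dd, hdd, ll, hll, hRl⟩ : ∃ dd, (i, Sum.inl dd) ∈ U ∧ ∃ ll, (i, Sum.inl ll) ∉ U ∧ φ i ll ∈ R := by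
          rcases e4 with h | h | h
          · exact absurd h hD
          · refine ⟨x, h, y, fun hy => e1 ?_, e3⟩
            exact Finset.card_le_one.1 hb1 x ((mb x).2 h) y ((mb y).2 hy)
          · refine ⟨y, h, x, fun hy => e1 ?_, e2⟩
            exact Finset.card_le_one.1 hb1 x ((mb x).2 hy) y ((mb y).2 h)
        have ho := Rlive i hD ll hll hRl
        have hu : 1 ≤ (bs i).card := Finset.card_pos.2 ⟨dd, (mb dd).2 hdd⟩
        have hPs : P i ⊆ (Finset.univ.erase dd).image (fun a => (dd, a)) ∪
            (Finset.univ.erase dd).image (fun a => (a, dd)) := by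
          rintro ⟨x, y⟩ hxy
          rw [mP] at hxy
          obtain ⟨e1, e2, e3, e4⟩ := hxy
          simp only at e1
          simp only [Finset.mem_union, Finset.mem_image, Finset.mem_erase, Finset.mem_univ,
            and_true, Prod.mk.injEq]
          rcases e4 with h | h | h
          · exact absurd h hD
          · have : x = dd := Finset.card_le_one.1 hb1 x ((mb x).2 h) dd ((mb dd).2 hdd)
            subst this
            exact Or.inl ⟨y, e1.symm, rfl, rfl⟩
          · have : y = dd := Finset.card_le_one.1 hb1 y ((mb y).2 h) dd ((mb dd).2 hdd)
            subst this
            exact Or.inr ⟨x, e1, rfl, rfl⟩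
        have hPc : (P i).card ≤ (k - 1) + (k - 1) := by
          refine (Finset.card_le_card hPs).trans ((Finset.card_union_le _ _).trans ?_)
          have : (Finset.univ.erase dd).card = k - 1 := by
            rw [Finset.card_erase_of_mem (Finset.mem_univ _)]; simp
          exact Nat.add_le_add (Finset.card_image_le.trans this.le) (Finset.card_image_le.trans this.le)
        calc 2 * (P i).card ≤ 1 * (4 * (k-1)) := by omega
          _ ≤ _ := Nat.mul_le_mul (by omega) (Nat.mul_le_mul_right _ hk)
  -- global counts
  let S : Finset ι := Finset.univ.filter D
  let NS : Finset ι := Finset.univ.filter (fun i => ¬ D i)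
  have mS : ∀ i, i ∈ S ↔ D i := by intro i; simp [S]
  have mNS : ∀ i, i ∈ NS ↔ ¬ D i := by intro i; simp [NS]
  have split : ∀ g : ι → ℕ, ∑ i, g i = ∑ i ∈ S, g i + ∑ i ∈ NS, g i := fun g =>
    (Finset.sum_filter_add_sum_filter_not _ _ _).symm
  have cO : O.card = OS.card + ∑ i, o i := by
    have h1 : (O \ OS).card = ∑ i, o i :=
      Finset.card_eq_sum_card_fiberwise (f := idx) (t := Finset.univ) (by simp)
    have h2 : OS ⊆ O := Finset.filter_subset _ _
    rw [← h1, add_comm, Finset.card_sdiff_add_card_eq_card h2]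
  let τ := ∑ i ∈ NS, (u i - o i)
  have hτ : ∑ i ∈ NS, u i = τ + ∑ i ∈ NS, o i := by
    rw [← Finset.sum_add_distrib]
    apply Finset.sum_congr rfl
    intro i hi
    have := (main i ((mNS i).1 hi)).1
    omega
  have hSo : ∑ i ∈ S, o i = 0 := Finset.sum_eq_zero (fun i hi => So i ((mS i).1 hi))
  have hSu : (k-2) * S.card ≤ ∑ i ∈ S, u i := by
    rw [mul_comm, ← smul_eq_mul]
    exact Finset.card_nsmul_le_sum _ _ _ (fun i hi => Su i ((mS i).1 hi))
  have n1 : (k-2) * S.card + τ + 2 ≤ OS.card := by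
    have := cfib U
    rw [cO, this, split, split o, hSo] at hcon
    have hτ' : ∑ i ∈ NS, (fib U i).card = τ + ∑ i ∈ NS, o i := hτ
    have hSu' : (k-2) * S.card ≤ ∑ i ∈ S, (fib U i).card := hSu
    omega
  have n2 : OS.card ≤ k * S.card := by
    have : OS.card ≤ (S ×ˢ (Finset.univ : Finset (Fin k))).card := by
      apply Finset.card_le_card_of_injOn rp
      · intro K hK
        simp only [Finset.coe_product, Set.mem_prod, Finset.mem_coe, Finset.mem_univ, and_true, mS]
        exact (hrp K hK).1
      · intro K hK L hL h
        exact rinj K hK L hL (by simp only [r]; rw [h])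
    rw [Finset.card_product, Finset.card_univ, Fintype.card_fin, mul_comm] at this
    exact this
  have n3 : 2 * (OS.card * (OS.card - 1)) ≤ (2 * S.card + τ) * (k * (k-1)) := by
    have h1 : OS.card * (OS.card - 1) ≤ ∑ i, (P i).card := by
      have : R.offDiag ⊆ Finset.univ.biUnion (fun i => (P i).image (fun p => (φ i p.1, φ i p.2))) := by
        rintro ⟨x, y⟩ hxy
        rw [Finset.mem_offDiag] at hxy
        obtain ⟨hx, hy, hne⟩ := hxy
        simp only at hx hy hne
        obtain ⟨i, a, b, rfl, rfl⟩ := cov x y hne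
        rw [Finset.mem_biUnion]
        refine ⟨i, Finset.mem_univ _, ?_⟩
        rw [Finset.mem_image]
        exact ⟨(a, b), cross i a b hx hy (fun h => hne (by rw [h])), rfl⟩
      have := (Finset.card_le_card this).trans (Finset.card_biUnion_le.trans
        (Finset.sum_le_sum (fun i _ => Finset.card_image_le)))
      rw [Finset.offDiag_card, cR] at this
      rw [Nat.mul_sub_one]; exact this
    have h2 : ∑ i ∈ S, (P i).card ≤ S.card * (k * (k-1)) := by
      rw [← smul_eq_mul]
      exact Finset.sum_le_card_nsmul _ _ _ (fun i _ => Pk i)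
    have h3 : 2 * ∑ i ∈ NS, (P i).card ≤ τ * (k * (k-1)) := by
      rw [Finset.mul_sum, Finset.sum_mul]
      exact Finset.sum_le_sum (fun i hi => (main i ((mNS i).1 hi)).2)
    rw [split] at h1
    rw [add_mul, mul_assoc]
    omega
  rcases Nat.lt_or_ge S.card 2 with hs | hs
  swap
  · exact qe_num k S.card τ OS.card hk hs n1 n2 n3
  have hs1 : S.card = 1 := by
    rcases Nat.eq_zero_or_pos S.card with h | h
    · rw [h] at n2; omega
    · omega
  rw [hs1] at n1 n2
  have hτ0 : τ = 0 := by omega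
  have hck : OS.card = k := by omega
  have hz : ∀ i, ¬ D i → u i = o i ∧ P i = ∅ := by
    intro i hD
    have h1 := (Finset.sum_eq_zero_iff.1 hτ0) i ((mNS i).2 hD)
    have h2 := main i hD
    rw [h1, zero_mul] at h2
    exact ⟨by omega, Finset.card_eq_zero.1 (by omega)⟩
  obtain ⟨e, he⟩ := Finset.card_eq_one.1 hs1
  have De : ∀ i, D i ↔ i = e := by intro i; rw [← mS, he]; simp
  have hRe : R = Finset.univ.image (φ e) := by
    apply Finset.eq_of_subset_of_card_le
    · intro x hx
      obtain ⟨K, hK, rfl, -⟩ := hR x hx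
      have := (De _).1 (hrp K hK).1
      rw [Finset.mem_image]
      exact ⟨(rp K).2, Finset.mem_univ _, by simp only [r]; rw [this]⟩
    · rw [cR, hck]
      exact Finset.card_image_le.trans (by simp)
  have hRe' : ∀ a, φ e a ∈ R := by intro a; rw [hRe]; simp
  obtain ⟨j, hj⟩ : ∃ j, j ≠ e := by
    have : Nontrivial ι := Fintype.one_lt_card_iff_nontrivial.1 (by omega)
    exact exists_ne e
  have t0 : (⟨0, by omega⟩ : Fin k) ≠ ⟨1, by omega⟩ := by simp
  obtain ⟨v, hv⟩ : ∃ v, v ∉ R := by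
    by_contra hc
    push Not at hc
    have h1 := cross j ⟨0, by omega⟩ ⟨1, by omega⟩ (hc _) (hc _) t0
    rw [(hz j (fun h => hj ((De j).1 h))).2] at h1
    simp at h1
  have claim : ∀ w ∈ R, ∃ K ∈ O, ∃ i c, (i, Sum.inl c) ∈ K ∧ φ i c = v ∧ ((K ∈ OS ∧ r K = w) ∨
      (K ∉ OS ∧ idx K = i ∧ (bs i).card ≤ 1 ∧ ∃ b, φ i b = w ∧ b ∈ bs i)) := by
    intro w hw
    obtain ⟨i, c, b, hc, hb⟩ := cov v w (fun h => hv (h ▸ hw))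
    have hDi : ¬ D i := by
      intro h
      rw [De] at h
      subst h
      exact hv (hc ▸ hRe' c)
    obtain ⟨huo, -⟩ := hz i hDi
    have mb : ∀ a, a ∈ bs i ↔ (i, Sum.inl a) ∈ U := by intro a; simp [bs]
    have hbu := bu i
    by_cases hbU : (i, Sum.inl b) ∈ U
    · -- w dead at i
      have hu1 : 1 ≤ (bs i).card := Finset.card_pos.2 ⟨b, (mb b).2 hbU⟩
      have hou := ou i
      have : ∃ a0, (i, Sum.inl a0) ∉ U := by
        by_contra hcc
        push Not at hcc
        have hb : (bs i).card = k := by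
          have : bs i = Finset.univ := by ext a; simp [bs, hcc a]
          rw [this]; simp
        omega
      obtain ⟨a0, ha0⟩ := this
      have ho1 := No i hDi a0 ha0
      have hb1 : (bs i).card ≤ 1 := by omega
      have hcU : (i, Sum.inl c) ∉ U := by
        intro h
        have := Finset.card_le_one.1 hb1 c ((mb c).2 h) b ((mb b).2 hbU)
        subst this
        exact hv (by rw [← hc, hb]; exact hw)
      have hopos : 0 < (oS i).card := by
        show 0 < o i
        omega
      obtain ⟨K, hK⟩ := Finset.card_pos.1 hopos
      obtain ⟨⟨h1, h2⟩, h3⟩ := (moS i K).1 hK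
      obtain ⟨s, hs⟩ := hnode K h1
      rw [h3] at hs
      exact ⟨K, h1, i, c, blob i hDi a0 ha0 K h1 s hs _ hcU, hc, Or.inr ⟨h2, h3, hb1, b, hb, (mb b).2 hbU⟩⟩
    · have ho := Rlive i hDi b hbU (by rw [hb]; exact hw)
      obtain ⟨K, hK, hK1, hK2⟩ := hR w hw
      have hcU : (i, Sum.inl c) ∉ U := by
        intro h
        have : 0 < (bs i).card := Finset.card_pos.2 ⟨c, (mb c).2 h⟩
        omega
      exact ⟨K, OSO K hK, i, c, blob i hDi b hbU K (OSO K hK) _ (hK2 i b hb hbU) _ hcU, hc,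
        Or.inl ⟨hK, hK1⟩⟩
  obtain ⟨K, hK, i, c, m1, m2, m3⟩ := claim _ (hRe' ⟨0, by omega⟩)
  obtain ⟨L, hL, i', c', m1', m2', m3'⟩ := claim _ (hRe' ⟨1, by omega⟩)
  have hKL := same K hK L hL i c i' c' m1 m1' (m2.trans m2'.symm)
  subst hKL
  rcases m3 with ⟨p1, p2⟩ | ⟨p1, p2, p3, b, p4, p5⟩
  · rcases m3' with ⟨q1, q2⟩ | ⟨q1, q2⟩
    · exact t0 (inj e (p2.symm.trans q2))
    · exact q1 p1
  · rcases m3' with ⟨q1, q2⟩ | ⟨q1, q2, q3, b', q4, q5⟩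
    · exact p1 q1
    · have hii : i = i' := p2.symm.trans q2
      subst hii
      have := Finset.card_le_one.1 p3 b p5 b' q5
      subst this
      exact t0 (inj e (p4.symm.trans q4))

/-- Let `k ≥ 4` and let `H` be a 2-covering `k`-hypergraph with at least two edges.
Then `H` is quasi-eulerian. -/
theorem twoCoveringKHypergraph_quasiEulerian {V : Type} [Fintype V] [DecidableEq V]
    (k : ℕ) (hk : 4 ≤ k) (E : Multiset (Finset V))
    (hH : IsCoveringHypergraph E 2 k) (h2 : 2 ≤ Multiset.card E) :
    IsQuasiEulerian E := by
  obtain ⟨-, hcard, hcov⟩ := hH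
  induction E using Quotient.inductionOn with
  | h l =>
  change ∀ f ∈ l, f.card = k at hcard
  change ∀ s : Finset V, s.card = 2 → ∃ f ∈ l, s ⊆ f at hcov
  change 2 ≤ l.length at h2
  change IsQuasiEulerian (l : Multiset (Finset V))
  let f : Fin l.length → Finset V := l.get
  have hf : (l : Multiset (Finset V)) = Finset.univ.val.map f := by
    rw [Fin.univ_val_map]
    simp [f]
  have hfc : ∀ i, (f i).card = k := fun i => hcard _ (l.get_mem i)
  let φ : Fin l.length → Fin k → V := fun i a => ((f i).equivFinOfCardEq (hfc i)).symm a
  have hφ : ∀ i a, φ i a ∈ f i := fun i a => Subtype.property _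
  have inj : ∀ i, Function.Injective (φ i) := fun i =>
    Subtype.val_injective.comp (Equiv.injective _)
  have surj : ∀ i, ∀ x ∈ f i, ∃ a, φ i a = x := by
    intro i x hx
    exact ⟨(f i).equivFinOfCardEq (hfc i) ⟨x, hx⟩, by simp [φ]⟩
  have cov : ∀ x y, x ≠ y → ∃ i a b, φ i a = x ∧ φ i b = y := by
    intro x y hxy
    obtain ⟨g, hg, hs⟩ := hcov {x, y} (Finset.card_pair hxy)
    obtain ⟨i, hi⟩ := List.get_of_mem hg
    have hi : f i = g := hi
    subst hi
    obtain ⟨a, ha⟩ := surj i x (hs (by simp))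
    obtain ⟨b, hb⟩ := surj i y (hs (by simp))
    exact ⟨i, a, b, ha, hb⟩
  obtain ⟨a, b, hab, hsum⟩ := qe_choice_of_matching k hk φ (by
    apply qe_tutte
    · have : Fintype.card (Fin l.length × (Fin k ⊕ Fin (k-2))) = l.length * (k + (k-2)) := by simp
      rw [this]
      exact Even.mul_left ⟨k-1, by omega⟩ _
    · intro U O ho hU hd hc
      refine qe_core k hk φ inj cov (by simpa using h2) U O ho hU hd ?_ ?_ ?_
      · intro K hK i a j b h1 h2 h3
        by_cases hij : i = j
        · subst hij
          rw [← inj i h3]; exact h1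
        · exact hc K hK _ h1 _ h2 ⟨hij, h3⟩
      · intro K hK i a d h1 h2
        exact hc K hK _ h1 _ h2 rfl
      · intro K hK i a d h1 h2
        exact hc K hK _ h1 _ h2 rfl)
  rw [hf]
  exact qe_of_choice f (fun i => φ i (a i)) (fun i => φ i (b i)) (fun i h => hab i (inj i h))
    (fun i => hφ _ _) (fun i => hφ _ _) hsum
end
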